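/- arXiv:0707.2839 — 5 statements merged into one kernel-verified Lean document; each statement's English description precedes it below -/
import Mathlib

section
/- Fix an integer d ≥ 3 and let ε : ℕ → ℝ satisfy ε(n) ≥ 0, ε(n) → 0 and ε(n)·n^{1/3} → ∞. For each n (with dn even) let G_n be an arbitrary simple d-regular graph on n vertices, and set p_n = (1 − ε(n))/(d − 1). Then for every η > 0, P(|C_1((G_n)_{p_n})| > (1 + η)·((d−2)/(d−1))·ψ_n(ε(n))) → 0 as n → ∞. -/
/-!
Write `d = r + 2`, `q = 1 / (d - 1)` for the critical parameter and `p = (1 - e) q`. The event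
that the cluster of a vertex `v` has a given set of `m` open edges, with `b` closed edges touching
it, has probability `p ^ m * (1 - p) ^ b` (`sum_wt_clus`). If the cluster has `k` vertices, then
`m ≥ k - 1` because it is connected, and counting endpoints gives `2 m + b ≤ d k`. Hence the
likelihood ratio between the parameters `p` and `q` is at most `C ρ ^ k`, where
`ρ = (1 - e) (1 + e / (d - 2)) ^ (d - 2)` and `C = (1 + e / (d - 2)) ^ 2 / (1 - e)` (`compare`).

This comparison is used twice.

* Summed over all clusters it gives `1 ≤ C 𝔼_q[ρ ^ |C(v)|]`, so `𝔼_q[1 - ρ ^ |C(v)|] = O(e)`. As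
  `-log ρ` is of order `e ^ 2`, this yields `ℙ_q(|C(v)| > t) = O(e)` for `t ≥ e⁻²` (`crit_tail`).
* Restricted to clusters with more than `t` vertices it gives
  `ℙ_p(|C(v)| > t) ≤ C ρ ^ t ℙ_q(|C(v)| > t) = O(e ρ ^ t)` (`subcrit_tail`).

If the largest component has more than `t` vertices, then so do the clusters of more than `t`
vertices, and Markov's inequality bounds the probability of this by
`O(n e ρ ^ t / t) = O(n e ^ 3 ρ ^ t)` (`percMeasure_le`). Since
`-log ρ = (e ^ 2 / 2) (d - 1) / (d - 2) (1 + O(e))` (`rho_le`), for the `t` of the theorem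
`ρ ^ t ≤ (n e ^ 3) ^ (-(1 + η / 2))` eventually, and the bound tends to zero with
`(n e ^ 3) ^ (-η / 2)`.
-/

open MeasureTheory ENNReal Filter

noncomputable section

namespace Stmt0

open scoped Classical

instance {V : Type*} : MeasurableSpace (SimpleGraph V) := ⊤

/-- The multiset of sizes (numbers of vertices) of the connected components of `H`. -/
noncomputable def compSizes {V : Type*} [Fintype V] (H : SimpleGraph V) : Multiset ℕ :=
  ((Finset.univ : Finset V).image H.connectedComponentMk).val.map
    fun c => (Finset.univ.filter fun v => H.connectedComponentMk v = c).card

/-- The `ℓ`-th largest element of a multiset of naturals (1-indexed), `0` if there are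
fewer than `ℓ` elements. -/
noncomputable def nthLargest (s : Multiset ℕ) (ℓ : ℕ) : ℕ :=
  (s.sort (· ≤ ·)).reverse.getD (ℓ - 1) 0

/-- `|C_ℓ(H)|`: the number of vertices of the `ℓ`-th largest connected component of `H`. -/
noncomputable def compSize {V : Type*} [Fintype V] (H : SimpleGraph V) (ℓ : ℕ) : ℕ :=
  nthLargest (compSizes H) ℓ

/-- The weight of a spanning subgraph `H` of `G` under `p`-bond percolation:
each edge of `G` is retained independently with probability `p`. -/
noncomputable def percWeight {V : Type*} [Fintype V] (G : SimpleGraph V) (p : ℝ)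
    (H : SimpleGraph V) : ℝ≥0∞ :=
  if H ≤ G then
    ENNReal.ofReal (p ^ H.edgeSet.ncard * (1 - p) ^ (G.edgeSet.ncard - H.edgeSet.ncard))
  else 0

/-- The law of `p`-bond percolation on `G`, as a measure on graphs on the vertex set of `G`. -/
noncomputable def percMeasure {V : Type*} [Fintype V] (G : SimpleGraph V) (p : ℝ) :
    Measure (SimpleGraph V) :=
  Measure.sum fun H : SimpleGraph V => percWeight G p H • (Measure.dirac H)

/-- `G` is a `d`-regular graph. -/
def IsRegular {V : Type*} (G : SimpleGraph V) (d : ℕ) : Prop :=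
  ∀ v, (G.neighborSet v).ncard = d

/-- `ψ_n(ε) = 2 ε⁻² log (n ε³)`. -/
noncomputable def psi (n : ℕ) (e : ℝ) : ℝ := 2 / e ^ 2 * Real.log (n * e ^ 3)

/-! ### Clusters and their laws -/

/-- Vertex set of the cluster of `v` in the graph with edge set `F`. -/
def clus {V : Type*} [Fintype V] (F : Finset (Sym2 V)) (v : V) : Finset V :=
  Finset.univ.filter fun u => (SimpleGraph.fromEdgeSet (F : Set (Sym2 V))).Reachable v u

/-- The edges in `E` with at least one endpoint in the cluster of `v` in `F`. -/
def touch {V : Type*} [Fintype V] (E : Finset (Sym2 V)) (v : V) (F : Finset (Sym2 V)) :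
    Finset (Sym2 V) :=
  E.filter fun e => ∃ u ∈ clus F v, u ∈ e

/-- The open edges of the cluster of `v`: those edges of `F` that touch it (and then have both
endpoints in it). Together with `touch E v F` this is all that determines the cluster. -/
def loc {V : Type*} [Fintype V] (E : Finset (Sym2 V)) (v : V) (F : Finset (Sym2 V)) :
    Finset (Sym2 V) :=
  F ∩ touch E v F

/-- Percolation weight of the configuration `F` of open edges among `E`. -/
def wt {V : Type*} (p : ℝ) (E F : Finset (Sym2 V)) : ℝ :=
  p ^ F.card * (1 - p) ^ (E.card - F.card)

/-- The percolation weights add up to one. -/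
lemma sum_wt {V : Type*} (p : ℝ) (E : Finset (Sym2 V)) : ∑ F ∈ E.powerset, wt p E F = 1 := by
  simp only [wt]
  rw [Finset.sum_pow_mul_eq_add_pow]; simp

lemma wt_nonneg {V : Type*} {p : ℝ} (h0 : 0 ≤ p) (h1 : p ≤ 1) (E F : Finset (Sym2 V)) :
    0 ≤ wt p E F :=
  mul_nonneg (pow_nonneg h0 _) (pow_nonneg (by linarith) _)

/-- Marginal law: the probability that the open edges within `T` are exactly `K` is the
percolation weight of `K` on `T`. -/
lemma sum_wt_fiber {V : Type*} (p : ℝ) {E T K : Finset (Sym2 V)} (hT : T ⊆ E) (hK : K ⊆ T) :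
    ∑ F ∈ E.powerset with F ∩ T = K, wt p E F = wt p T K := by
  have h1 : ∑ F ∈ E.powerset with F ∩ T = K, wt p E F
      = ∑ F ∈ (E \ T).powerset, wt p (E \ T) F * wt p T K := by
    refine Finset.sum_bij' (fun F _ => F \ T) (fun F _ => F ∪ K) ?_ ?_ ?_ ?_ ?_
    · intro F hF
      simp only [Finset.mem_filter, Finset.mem_powerset] at hF ⊢
      exact Finset.sdiff_subset_sdiff hF.1 le_rfl
    · intro F hF
      simp only [Finset.mem_filter, Finset.mem_powerset] at hF ⊢
      grind
    · intro F hF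
      simp only [Finset.mem_filter, Finset.mem_powerset] at hF ⊢
      grind
    · intro F hF
      simp only [Finset.mem_powerset] at hF ⊢
      grind
    · intro F hF
      simp only [Finset.mem_filter, Finset.mem_powerset] at hF
      obtain ⟨hF, rfl⟩ := hF
      have c1 := Finset.card_sdiff_add_card_inter F T
      have c2 := Finset.card_sdiff_add_card_eq_card hT
      have c3 := Finset.card_le_card (Finset.sdiff_subset_sdiff hF (le_refl T))
      have c4 := Finset.card_le_card (Finset.inter_subset_right : F ∩ T ⊆ T)
      simp only [wt]
      have e1 : F.card = (F \ T).card + (F ∩ T).card := c1.symm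
      have e2 : E.card - F.card
          = ((E \ T).card - (F \ T).card) + (T.card - (F ∩ T).card) := by omega
      rw [e2, pow_add, e1, pow_add]; ring
  rw [h1, ← Finset.sum_mul, sum_wt, one_mul]

/-- If every edge of `F` touching the cluster of `v` in `F'` is in `F'`, the cluster of `v` in
`F` cannot leave the one in `F'`. -/
lemma clus_step {V : Type*} [Fintype V] {E F F' : Finset (Sym2 V)} {v : V} (hF : F ⊆ E)
    (h : F ∩ touch E v F' ⊆ F') : clus F v ⊆ clus F' v := by
  intro u hu
  simp only [clus, Finset.mem_filter, Finset.mem_univ, true_and] at hu ⊢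
  rw [SimpleGraph.reachable_iff_reflTransGen] at hu
  induction hu with
  | refl => exact SimpleGraph.Reachable.refl _
  | tail _ hbc ih =>
    refine ih.trans (SimpleGraph.Adj.reachable ?_)
    rw [SimpleGraph.fromEdgeSet_adj] at hbc ⊢
    refine ⟨?_, hbc.2⟩
    refine Finset.mem_coe.2 (h (Finset.mem_inter.2 ⟨hbc.1, ?_⟩))
    simp only [touch, Finset.mem_filter]
    exact ⟨hF hbc.1, _, Finset.mem_filter.2 ⟨Finset.mem_univ _, ih⟩, Sym2.mem_mk_left _ _⟩

/-- Variant of `clus_step` exploring the cluster of `v` in `F` instead of the one in `F'`. -/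
lemma clus_step' {V : Type*} [Fintype V] {E F F' : Finset (Sym2 V)} {v : V} (hF : F ⊆ E)
    (h : F ∩ touch E v F ⊆ F') : clus F v ⊆ clus F' v := by
  intro u hu
  simp only [clus, Finset.mem_filter, Finset.mem_univ, true_and] at hu ⊢
  rw [SimpleGraph.reachable_iff_reflTransGen] at hu
  induction hu with
  | refl => exact SimpleGraph.Reachable.refl _
  | tail hab hbc ih =>
    refine ih.trans (SimpleGraph.Adj.reachable ?_)
    rw [← SimpleGraph.reachable_iff_reflTransGen] at hab
    rw [SimpleGraph.fromEdgeSet_adj] at hbc ⊢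
    refine ⟨?_, hbc.2⟩
    refine Finset.mem_coe.2 (h (Finset.mem_inter.2 ⟨hbc.1, ?_⟩))
    simp only [touch, Finset.mem_filter]
    exact ⟨hF hbc.1, _, Finset.mem_filter.2 ⟨Finset.mem_univ _, hab⟩, Sym2.mem_mk_left _ _⟩

/-- A configuration which agrees with `F'` on the edges touching the cluster of `v` in `F'` has
the same cluster of `v`. -/
lemma clus_eq {V : Type*} [Fintype V] {E F F' : Finset (Sym2 V)} {v : V} (hF : F ⊆ E)
    (hF' : F' ⊆ E) (h : F ∩ touch E v F' = F' ∩ touch E v F') : clus F v = clus F' v := by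
  apply Finset.Subset.antisymm
  · exact clus_step hF (h.le.trans Finset.inter_subset_left)
  · exact clus_step' hF' (h.ge.trans Finset.inter_subset_left)

lemma clus_loc {V : Type*} [Fintype V] {E F : Finset (Sym2 V)} {v : V} (hF : F ⊆ E) :
    clus (loc E v F) v = clus F v :=
  clus_eq (Finset.inter_subset_left.trans hF) hF (by simp [loc, Finset.inter_assoc])

/-- The event that the open edges of the cluster form a given set depends only on the edges
touching that fixed cluster, which is what makes `sum_wt_fiber` applicable. -/
lemma loc_eq_iff {V : Type*} [Fintype V] {E F F' : Finset (Sym2 V)} {v : V} (hF : F ⊆ E)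
    (hF' : F' ⊆ E) : loc E v F = loc E v F' ↔ F ∩ touch E v F' = loc E v F' := by
  have key : clus F v = clus F' v → touch E v F = touch E v F' := fun h => by simp [touch, h]
  constructor
  · intro h
    have h1 : clus F v = clus F' v := by rw [← clus_loc hF, h, clus_loc hF']
    rw [← key h1, ← h, loc]
  · intro h
    rw [← h, loc, key (clus_eq hF hF' h)]

/-- The law of the cluster of `v` under percolation: expectations decompose over the possible
sets of open edges of the cluster. -/
lemma sum_wt_clus {V : Type*} [Fintype V] (p : ℝ) (E : Finset (Sym2 V)) (v : V)
    (g : Finset V → ℝ) :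
    ∑ F ∈ E.powerset, wt p E F * g (clus F v)
      = ∑ K ∈ E.powerset.image (loc E v), wt p (touch E v K) K * g (clus K v) := by
  rw [← Finset.sum_fiberwise_of_maps_to (g := loc E v)
    (fun F hF => Finset.mem_image_of_mem _ hF)]
  refine Finset.sum_congr rfl fun K hK => ?_
  obtain ⟨F', hF', rfl⟩ := Finset.mem_image.1 hK
  rw [Finset.mem_powerset] at hF'
  have ht : touch E v (loc E v F') = touch E v F' := by simp [touch, clus_loc hF']
  rw [clus_loc hF', ht, ← sum_wt_fiber p (T := touch E v F') (Finset.filter_subset _ _)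
    (K := loc E v F') Finset.inter_subset_right, Finset.sum_mul]
  have : (E.powerset.filter fun F => loc E v F = loc E v F')
      = E.powerset.filter fun F => F ∩ touch E v F' = loc E v F' := by
    refine Finset.filter_congr fun F hF => ?_
    exact loc_eq_iff (Finset.mem_powerset.1 hF) hF'
  rw [this]
  refine Finset.sum_congr rfl fun F hF => ?_
  rw [Finset.mem_filter, Finset.mem_powerset] at hF
  rw [clus_eq hF.1 hF' hF.2]

/-! ### Counting the edges at a cluster -/

/-- A cluster with `k` vertices has at least `k - 1` open edges. -/
lemma card_clus_le {V : Type*} [Fintype V] {E F : Finset (Sym2 V)} {v : V} (hF : F ⊆ E) :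
    (clus F v).card ≤ (loc E v F).card + 1 := by
  set H := SimpleGraph.fromEdgeSet (F : Set (Sym2 V))
  set c := H.connectedComponentMk v
  have hc := (c.connected_toSimpleGraph).card_vert_le_card_edgeSet_add_one
  have h1 : Nat.card c = (clus F v).card := by
    rw [← Nat.card_eq_finsetCard]
    refine Nat.card_congr (Equiv.subtypeEquivRight fun u => ?_)
    simp only [clus, Finset.mem_filter, Finset.mem_univ, true_and]
    exact (SimpleGraph.ConnectedComponent.eq).trans SimpleGraph.reachable_comm
  have h2 : Nat.card c.toSimpleGraph.edgeSet ≤ (loc E v F).card := by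
    rw [← Nat.card_eq_finsetCard]
    refine Nat.card_le_card_of_injective
      (fun e => ⟨e.1.map Subtype.val, ?_⟩) ?_
    · obtain ⟨e, he⟩ := e
      induction e with
      | _ a b =>
        rw [SimpleGraph.mem_edgeSet] at he
        have hab : H.Adj a b := he
        have h3 := ((SimpleGraph.fromEdgeSet_adj _).1 hab).1
        have h4 : H.Reachable v a := (SimpleGraph.ConnectedComponent.exact a.2).symm
        simp only [loc, touch, Sym2.map_mk, Finset.mem_inter, Finset.mem_filter]
        exact ⟨h3, hF h3, a, by simpa [clus] using h4, by simp⟩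
    · intro e e' h
      exact Subtype.ext (Sym2.map.injective Subtype.val_injective (Subtype.ext_iff.1 h))
  omega

/-- Counting endpoints in the cluster: open edges have two, and other touching edges at least
one. -/
lemma card_touch_add_card_loc_le {V : Type*} [Fintype V] {G : SimpleGraph V} {d : ℕ}
    (hG : IsRegular G d) {F : Finset (Sym2 V)} {v : V} (hF : F ⊆ G.edgeFinset) :
    (touch G.edgeFinset v F).card + (loc G.edgeFinset v F).card ≤ d * (clus F v).card := by
  have h1 : ∀ u, (G.edgeFinset.filter fun e => u ∈ e).card = d := by
    intro u
    rw [← SimpleGraph.incidenceFinset_eq_filter, SimpleGraph.card_incidenceFinset_eq_degree]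
    rw [← hG u, ← SimpleGraph.card_neighborSet_eq_degree, Set.ncard_eq_toFinset_card', Set.toFinset_card]
  have h2 : d * (clus F v).card
      = ∑ e ∈ G.edgeFinset, ((clus F v).filter fun u => u ∈ e).card := by
    rw [mul_comm, ← smul_eq_mul, ← Finset.sum_const]
    rw [Finset.sum_congr rfl fun u _ => (h1 u).symm]
    exact Finset.sum_card_bipartiteAbove_eq_sum_card_bipartiteBelow (fun u e => u ∈ e)
  have hsub : loc G.edgeFinset v F ⊆ G.edgeFinset := Finset.inter_subset_left.trans hF
  have h3 : (touch G.edgeFinset v F).card + (loc G.edgeFinset v F).card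
      = ∑ e ∈ G.edgeFinset, ((if e ∈ touch G.edgeFinset v F then 1 else 0)
        + (if e ∈ loc G.edgeFinset v F then 1 else 0)) := by
    rw [Finset.sum_add_distrib, Finset.sum_boole, Finset.sum_boole]
    simp only [Nat.cast_id]
    congr 2
    · ext e; simp [touch]
    · ext e; simp only [Finset.mem_filter]; exact ⟨fun h => ⟨hsub h, h⟩, fun h => h.2⟩
  rw [h2, h3]
  refine Finset.sum_le_sum fun e he => ?_
  by_cases hT : e ∈ touch G.edgeFinset v F
  · rw [if_pos hT]
    by_cases hl : e ∈ loc G.edgeFinset v F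
    · rw [if_pos hl]
      have heF : e ∈ F := (Finset.mem_inter.1 hl).1
      have hT' := (Finset.mem_filter.1 hT).2
      induction e with
      | _ a b =>
        have hab : a ≠ b := by
          rintro rfl; simp at he
        have hadj : (SimpleGraph.fromEdgeSet (F : Set (Sym2 V))).Adj a b := by
          rw [SimpleGraph.fromEdgeSet_adj]; exact ⟨heF, hab⟩
        have : ({a, b} : Finset V) ⊆ (clus F v).filter fun u => u ∈ s(a, b) := by
          obtain ⟨u, hu, hue⟩ := hT'
          simp only [clus, Finset.mem_filter, Finset.mem_univ, true_and] at hu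
          have hr : (SimpleGraph.fromEdgeSet (F : Set (Sym2 V))).Reachable v a ∧
              (SimpleGraph.fromEdgeSet (F : Set (Sym2 V))).Reachable v b := by
            rcases Sym2.mem_iff.1 hue with rfl | rfl
            · exact ⟨hu, hu.trans hadj.reachable⟩
            · exact ⟨hu.trans hadj.symm.reachable, hu⟩
          intro w hw
          simp only [Finset.mem_insert, Finset.mem_singleton] at hw
          rcases hw with rfl | rfl <;> simp [clus, hr]
        calc 1 + 1 = ({a, b} : Finset V).card := (Finset.card_pair hab).symm
          _ ≤ _ := Finset.card_le_card this
    · rw [if_neg hl]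
      obtain ⟨u, hu, hue⟩ := (Finset.mem_filter.1 hT).2
      exact Finset.card_pos.2 ⟨u, Finset.mem_filter.2 ⟨hu, hue⟩⟩
  · have hl : e ∉ loc G.edgeFinset v F := fun h => hT (Finset.mem_inter.1 h).2
    simp [hT, hl]

/-! ### Change of measure between subcritical and critical percolation -/

/-- The likelihood ratio of a cluster with `k` vertices and open edges `K` among the touching
edges `T`, between the parameters `(1 - e) / (r + 1)` and `1 / (r + 1)`, is at most its value
when the cluster is a tree that no touching edge closes into a cycle. -/
lemma wt_le {V : Type*} {r k : ℕ} (hr : 1 ≤ r) {e : ℝ} (he0 : 0 ≤ e) (he1 : e < 1)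
    {T K : Finset (Sym2 V)} (hk : k ≤ K.card + 1) (hT : T.card + K.card ≤ (r + 2) * k) :
    wt ((1 - e) / (r + 1)) T K ≤
      (1 + e / r) ^ 2 / (1 - e) * ((1 - e) * (1 + e / r) ^ r) ^ k * wt (1 / (r + 1)) T K := by
  have hr0 : (0 : ℝ) < r := by exact_mod_cast hr
  set y : ℝ := 1 + e / r with hy
  have hy1 : 1 ≤ y := by rw [hy]; linarith [div_nonneg he0 hr0.le]
  set q : ℝ := 1 / (r + 1) with hq
  have hq0 : 0 ≤ q := by positivity
  have hq1 : q ≤ 1 := by rw [hq, div_le_one (by positivity)]; linarith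
  have hp : (1 - e) / ((r : ℝ) + 1) = (1 - e) * q := by rw [hq]; ring
  have hp' : 1 - (1 - e) * q = y * (1 - q) := by
    rw [hq, hy]; field_simp; ring
  have hb : T.card - K.card ≤ r * k + 2 := by
    have : (r + 2) * k = r * k + 2 * k := by ring
    omega
  have hx0 : 0 < 1 - e := by linarith
  have hx : (1 - e) ^ K.card ≤ (1 - e) ^ k / (1 - e) := by
    rw [le_div_iff₀ hx0, ← pow_succ]
    exact pow_le_pow_of_le_one hx0.le (by linarith) hk
  have hyb : y ^ (T.card - K.card) ≤ y ^ (r * k + 2) := pow_le_pow_right₀ hy1 hb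
  have hw : 0 ≤ wt q T K := wt_nonneg hq0 hq1 _ _
  calc wt ((1 - e) / (r + 1)) T K
      = ((1 - e) ^ K.card * y ^ (T.card - K.card)) * wt q T K := by
        simp only [wt]; rw [hp, hp', mul_pow, mul_pow]; ring
    _ ≤ ((1 - e) ^ k / (1 - e) * y ^ (r * k + 2)) * wt q T K := by
        gcongr
    _ = _ := by rw [mul_pow, ← pow_mul, pow_add]; ring

/-- Comparison of subcritical with critical percolation for functions of the cluster size. -/
lemma compare {V : Type*} [Fintype V] {G : SimpleGraph V} {r : ℕ} (hr : 1 ≤ r)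
    (hG : IsRegular G (r + 2)) {e : ℝ} (he0 : 0 ≤ e) (he1 : e < 1) (v : V) {g : ℕ → ℝ}
    (hg : ∀ k, 0 ≤ g k) :
    ∑ F ∈ G.edgeFinset.powerset, wt ((1 - e) / (r + 1)) G.edgeFinset F * g (clus F v).card ≤
      (1 + e / r) ^ 2 / (1 - e) * ∑ F ∈ G.edgeFinset.powerset, wt (1 / (r + 1)) G.edgeFinset F *
        (((1 - e) * (1 + e / r) ^ r) ^ (clus F v).card * g (clus F v).card) := by
  rw [sum_wt_clus _ _ v (fun A => g A.card), sum_wt_clus _ _ v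
    (fun A => ((1 - e) * (1 + e / r) ^ r) ^ A.card * g A.card), Finset.mul_sum]
  refine Finset.sum_le_sum fun K hK => ?_
  obtain ⟨F, hF, rfl⟩ := Finset.mem_image.1 hK
  rw [Finset.mem_powerset] at hF
  have ht : touch G.edgeFinset v (loc G.edgeFinset v F) = touch G.edgeFinset v F := by
    simp [touch, clus_loc hF]
  rw [ht, clus_loc hF]
  have := wt_le hr he0 he1 (card_clus_le (v := v) hF) (card_touch_add_card_loc_le hG (v := v) hF)
  calc _ ≤ _ := mul_le_mul_of_nonneg_right this (hg _)
    _ = _ := by ring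

/-! ### Tail of the cluster size -/

/-- The decay rate: to second order, `-log ρ` is `(e² / 2) * (d - 1) / (d - 2)` with
`d = r + 2`. This is where the constant in the theorem comes from. -/
lemma rho_le {r : ℕ} (hr : 1 ≤ r) {e : ℝ} (he0 : 0 < e) (he1 : e ≤ 1 / 16) :
    (1 - e) * (1 + e / r) ^ r ≤ Real.exp (-(e ^ 2 / 2 * ((r + 1) / r) * (1 - 8 * e))) := by
  have hr1 : (1 : ℝ) ≤ r := by exact_mod_cast hr
  have hr0 : (0 : ℝ) < r := by linarith
  -- the second-order Taylor bound on both sides of the origin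
  have key : ∀ x : ℝ, |x| ≤ 1 / 2 → Real.log (1 + x) ≤ x - x ^ 2 / 2 + 2 * |x| ^ 3 := by
    intro x hx
    have h := Real.abs_log_sub_add_sum_range_le (x := -x) (by rw [abs_neg]; linarith) 2
    simp only [Finset.sum_range_succ, Finset.sum_range_zero, abs_neg, sub_neg_eq_add] at h
    have h2 : |x| ^ (2 + 1) / (1 - |x|) ≤ 2 * |x| ^ 3 := by
      rw [div_le_iff₀ (by linarith)]
      calc |x| ^ (2 + 1) = 2 * |x| ^ 3 * (1 / 2) := by ring
        _ ≤ _ := by gcongr; linarith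
    have h3 := (abs_le.1 (h.trans h2)).2
    norm_num at h3
    linarith
  have hx : |e / r| = e / r := abs_of_nonneg (by positivity)
  have hle : e / r ≤ e := div_le_self he0.le hr1
  have k1 := key (-e) (by rw [abs_neg, abs_of_pos he0]; linarith)
  have k2 := key (e / r) (by rw [hx]; linarith)
  rw [abs_neg, abs_of_pos he0] at k1
  rw [hx] at k2
  have hpos : 0 < (1 - e) * (1 + e / r) ^ r := by
    have : 0 < 1 - e := by linarith
    positivity
  rw [← Real.log_le_iff_le_exp hpos, Real.log_mul (by linarith) (by positivity), Real.log_pow]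
  have k3 : r * Real.log (1 + e / r) ≤ e - e ^ 2 / (2 * r) + 2 * e ^ 3 := by
    calc r * Real.log (1 + e / r) ≤ r * (e / r - (e / r) ^ 2 / 2 + 2 * (e / r) ^ 3) := by gcongr
      _ = e - e ^ 2 / (2 * r) + 2 * e ^ 3 * (1 / r) ^ 2 := by field_simp
      _ ≤ e - e ^ 2 / (2 * r) + 2 * e ^ 3 * 1 := by
        gcongr
        exact pow_le_one₀ (by positivity) ((div_le_one hr0).2 hr1)
      _ = _ := by ring
  have k4 : e ^ 2 / 2 * ((r + 1) / r) * (1 - 8 * e)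
      = e ^ 2 / 2 + e ^ 2 / (2 * r) - 4 * e ^ 3 - 4 * e ^ 3 * (1 / r) := by
    field_simp; ring
  have k5 : 0 ≤ 4 * e ^ 3 * (1 / r) := by positivity
  have k6 : Real.log (1 - e) ≤ -e - e ^ 2 / 2 + 2 * e ^ 3 := by
    have : (1 : ℝ) + -e = 1 - e := by ring
    rw [this] at k1
    nlinarith
  rw [k4]
  linarith

lemma rho_pos {r : ℕ} {e : ℝ} (he0 : 0 < e) (he1 : e ≤ 1 / 16) :
    0 ≤ (1 - e) * (1 + e / r) ^ r := by
  have : 0 ≤ 1 - e := by linarith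
  positivity

/-- At criticality, a cluster has more than `t ≥ e⁻²` vertices with probability `O(e)`. Indeed
the comparison with `g = 1` shows that the generating function of the critical cluster size is
`1 - O(e)` at `ρ`, while clusters with more than `t` vertices each lose a constant there. -/
lemma crit_tail {V : Type*} [Fintype V] {G : SimpleGraph V} {r : ℕ} (hr : 1 ≤ r)
    (hG : IsRegular G (r + 2)) {e t : ℝ} (he0 : 0 < e) (he1 : e ≤ 1 / 16) (ht : 1 ≤ t * e ^ 2)
    (v : V) :
    ∑ F ∈ G.edgeFinset.powerset, wt (1 / (r + 1)) G.edgeFinset F *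
      (if t < (clus F v).card then 1 else 0) ≤ 15 * e := by
  have hr1 : (1 : ℝ) ≤ r := by exact_mod_cast hr
  have hr0 : (0 : ℝ) < r := by linarith
  set ρ : ℝ := (1 - e) * (1 + e / r) ^ r with hρ
  have hρ0 : 0 ≤ ρ := rho_pos he0 he1
  have hρ1 : ρ ≤ Real.exp (-(e ^ 2 / 4)) := by
    refine (rho_le hr he0 he1).trans (Real.exp_le_exp.2 (neg_le_neg ?_))
    have h1 : 1 ≤ ((r : ℝ) + 1) / r := by rw [le_div_iff₀ hr0]; linarith
    have h2 : 1 / 2 ≤ 1 - 8 * e := by linarith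
    calc e ^ 2 / 4 = e ^ 2 / 2 * 1 * (1 / 2) := by ring
      _ ≤ _ := by gcongr
  have hq0 : (0 : ℝ) ≤ 1 / (r + 1) := by positivity
  have hq1 : (1 : ℝ) / (r + 1) ≤ 1 := by rw [div_le_one (by positivity)]; linarith
  -- the total mass of the percolation with parameter `(1 - e) / (r + 1)` is one
  have h1 := compare hr hG he0.le (by linarith : e < 1) v (g := fun _ => 1) (fun _ => zero_le_one)
  simp only [mul_one] at h1
  rw [sum_wt, ← hρ] at h1
  set M := ∑ F ∈ G.edgeFinset.powerset, wt (1 / (r + 1)) G.edgeFinset F * ρ ^ (clus F v).card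
  set P := ∑ F ∈ G.edgeFinset.powerset, wt (1 / (r + 1)) G.edgeFinset F *
      (if t < (clus F v).card then (1 : ℝ) else 0) with hP
  have h2 : M ≤ 1 - P * (1 / 5) := by
    have hs : 1 - P * (1 / 5) = ∑ F ∈ G.edgeFinset.powerset,
        (wt (1 / ((r : ℝ) + 1)) G.edgeFinset F - wt (1 / ((r : ℝ) + 1)) G.edgeFinset F *
          (if t < (clus F v).card then (1 : ℝ) else 0) * (1 / 5)) := by
      rw [Finset.sum_sub_distrib, sum_wt, hP, Finset.sum_mul]
    rw [hs]
    refine Finset.sum_le_sum fun F _ => ?_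
    rw [mul_assoc, ← mul_one_sub]
    refine mul_le_mul_of_nonneg_left ?_ (wt_nonneg hq0 hq1 _ _)
    have hle : ρ ^ (clus F v).card ≤ Real.exp (-(e ^ 2 / 4) * (clus F v).card) := by
      rw [mul_comm, Real.exp_nat_mul]
      exact pow_le_pow_left₀ hρ0 hρ1 _
    split_ifs with h
    · refine hle.trans ?_
      have h3 : -(e ^ 2 / 4) * (clus F v).card ≤ -(1 / 4) := by nlinarith
      refine (Real.exp_le_exp.2 h3).trans ?_
      rw [Real.exp_neg]
      have h4 := Real.add_one_le_exp (1 / 4 : ℝ)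
      calc (Real.exp (1 / 4))⁻¹ ≤ (1 / 4 + 1)⁻¹ := by gcongr
        _ = _ := by norm_num
    · refine hle.trans ?_
      rw [zero_mul, sub_zero, Real.exp_le_one_iff]
      have : 0 ≤ e ^ 2 / 4 * (clus F v).card := by positivity
      linarith
  have hx : 0 < 1 - e := by linarith
  have hle : e / r ≤ e := div_le_self he0.le hr1
  have h5 : (1 - e) ≤ (1 + e / r) ^ 2 * M := by
    rw [div_mul_eq_mul_div, le_div_iff₀ hx] at h1; linarith
  have hM : 0 ≤ M := Finset.sum_nonneg fun F _ =>
    mul_nonneg (wt_nonneg hq0 hq1 _ _) (pow_nonneg hρ0 _)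
  have h6 : (1 - e) ≤ (1 + e) ^ 2 * M := h5.trans (by gcongr)
  nlinarith [mul_nonneg he0.le he0.le, mul_nonneg he0.le hM]

/-- Combining `compare` with `crit_tail`: the factor `e` missing from a plain exponential Markov
inequality comes from the critical tail. -/
lemma subcrit_tail {V : Type*} [Fintype V] {G : SimpleGraph V} {r : ℕ} (hr : 1 ≤ r)
    (hG : IsRegular G (r + 2)) {e t : ℝ} (he0 : 0 < e) (he1 : e ≤ 1 / 16) (ht : 1 ≤ t * e ^ 2)
    (v : V) :
    ∑ F ∈ G.edgeFinset.powerset, wt ((1 - e) / (r + 1)) G.edgeFinset F *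
      (if t < (clus F v).card then 1 else 0) ≤
      120 * e * Real.exp (-(e ^ 2 / 2 * ((r + 1) / r) * (1 - 8 * e) * t)) := by
  have hr1 : (1 : ℝ) ≤ r := by exact_mod_cast hr
  have hr0 : (0 : ℝ) < r := by linarith
  have hx : 0 < 1 - e := by linarith
  have hle : e / r ≤ e := div_le_self he0.le hr1
  have hc : 0 ≤ e ^ 2 / 2 * (((r : ℝ) + 1) / r) * (1 - 8 * e) := by
    have : 0 ≤ 1 - 8 * e := by linarith
    positivity
  have h0 := compare hr hG he0.le (by linarith : e < 1) v
    (g := fun k => if t < k then 1 else 0) (fun k => by split_ifs <;> norm_num)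
  set c := e ^ 2 / 2 * (((r : ℝ) + 1) / r) * (1 - 8 * e) with hcdef
  set ρ : ℝ := (1 - e) * (1 + e / r) ^ r with hρ
  have hρ0 : 0 ≤ ρ := rho_pos he0 he1
  have hρ1 : ρ ≤ Real.exp (-c) := rho_le hr he0 he1
  have hq0 : (0 : ℝ) ≤ 1 / (r + 1) := by positivity
  have hq1 : (1 : ℝ) / (r + 1) ≤ 1 := by rw [div_le_one (by positivity)]; linarith
  have hC : (1 + e / r) ^ 2 / (1 - e) ≤ 8 := by
    rw [div_le_iff₀ hx]
    calc (1 + e / r) ^ 2 ≤ (1 + e) ^ 2 := by gcongr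
      _ ≤ _ := by nlinarith
  have h1 : ∑ F ∈ G.edgeFinset.powerset, wt (1 / (r + 1)) G.edgeFinset F *
        (ρ ^ (clus F v).card * (if t < (clus F v).card then 1 else 0)) ≤
      Real.exp (-(c * t)) * (15 * e) := by
    refine le_trans ?_ (mul_le_mul_of_nonneg_left (crit_tail hr hG he0 he1 ht v)
      (Real.exp_pos _).le)
    rw [Finset.mul_sum]
    refine Finset.sum_le_sum fun F _ => ?_
    rw [mul_left_comm (Real.exp _)]
    refine mul_le_mul_of_nonneg_left ?_ (wt_nonneg hq0 hq1 _ _)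
    split_ifs with h
    · rw [mul_one, mul_one]
      calc ρ ^ (clus F v).card ≤ Real.exp (-c) ^ (clus F v).card := pow_le_pow_left₀ hρ0 hρ1 _
        _ = Real.exp ((clus F v).card * (-c)) := (Real.exp_nat_mul _ _).symm
        _ ≤ _ := Real.exp_le_exp.2 (by nlinarith)
    · simp
  calc _ ≤ _ := h0
    _ ≤ 8 * (Real.exp (-(c * t)) * (15 * e)) := by
      refine mul_le_mul hC h1 (Finset.sum_nonneg fun F _ => ?_) (by norm_num)
      refine mul_nonneg (wt_nonneg hq0 hq1 _ _) (mul_nonneg (pow_nonneg hρ0 _) ?_)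
      split_ifs <;> norm_num
    _ = _ := by ring

/-! ### The percolation measure and the largest component -/

lemma percMeasure_eq {V : Type*} [Fintype V] (G : SimpleGraph V) {p : ℝ} (h0 : 0 ≤ p)
    (h1 : p ≤ 1) (S : Set (SimpleGraph V)) :
    percMeasure G p S = ENNReal.ofReal (∑ F ∈ G.edgeFinset.powerset, wt p G.edgeFinset F *
      (if SimpleGraph.fromEdgeSet (F : Set (Sym2 V)) ∈ S then 1 else 0)) := by
  have hS : MeasurableSet S := trivial
  rw [percMeasure, Measure.sum_apply _ hS, tsum_fintype, ENNReal.ofReal_sum_of_nonneg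
    (fun F _ => mul_nonneg (wt_nonneg h0 h1 _ _) (by split_ifs <;> norm_num))]
  have hz : ∀ H : SimpleGraph V, H ∉ Finset.univ.filter (fun H => H ≤ G) →
      (percWeight G p H • Measure.dirac H) S = 0 := by
    intro H hH
    simp only [Finset.mem_filter, Finset.mem_univ, true_and] at hH
    simp [percWeight, hH]
  rw [← Finset.sum_subset (Finset.subset_univ (Finset.univ.filter fun H => H ≤ G))
    (fun H _ hH => hz H hH)]
  refine Finset.sum_bij' (fun H _ => H.edgeFinset)
    (fun F _ => SimpleGraph.fromEdgeSet (F : Set (Sym2 V))) ?_ ?_ ?_ ?_ ?_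
  · intro H hH
    simpa using hH
  · intro F hF
    simp only [Finset.mem_filter, Finset.mem_univ, true_and, Finset.mem_powerset] at hF ⊢
    intro a b hab
    have := hF ((SimpleGraph.fromEdgeSet_adj _).1 hab).1
    simpa using this
  · intro H hH
    simp
  · intro F hF
    rw [Finset.mem_powerset] at hF
    ext e
    simp only [SimpleGraph.mem_edgeFinset, SimpleGraph.edgeSet_fromEdgeSet, Set.mem_sdiff,
      Finset.mem_coe]
    refine ⟨fun h => h.1, fun h => ⟨h, ?_⟩⟩
    exact G.not_isDiag_of_mem_edgeFinset (hF h)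
  · intro H hH
    simp only [Finset.mem_filter, Finset.mem_univ, true_and] at hH
    have e1 : ∀ H : SimpleGraph V, H.edgeSet.ncard = H.edgeFinset.card := fun H => by
      rw [← SimpleGraph.coe_edgeFinset, Set.ncard_coe_finset]
    simp only [Measure.smul_apply, smul_eq_mul, Measure.dirac_apply' _ hS, percWeight, if_pos hH,
      SimpleGraph.coe_edgeFinset, SimpleGraph.fromEdgeSet_edgeSet, e1]
    by_cases hHS : H ∈ S
    · simp [hHS, wt]
    · simp [hHS]

/-- If some component has more than `t` vertices, then more than `t` vertices lie in such a
component. -/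
lemma le_sum_clus {V : Type*} [Fintype V] (F : Finset (Sym2 V)) {t : ℝ} (ht : 0 ≤ t)
    (h : t < (compSize (SimpleGraph.fromEdgeSet (F : Set (Sym2 V))) 1 : ℝ)) :
    t ≤ ∑ v : V, (if t < (clus F v).card then (1 : ℝ) else 0) := by
  set H := SimpleGraph.fromEdgeSet (F : Set (Sym2 V)) with hH
  have hmem : compSize H 1 ∈ compSizes H := by
    rw [compSize, nthLargest] at h ⊢
    set l := ((compSizes H).sort (· ≤ ·)).reverse with hl
    have hlen : 0 < l.length := by
      by_contra hcon
      have : l = [] := List.length_eq_zero_iff.1 (by omega)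
      rw [this] at h
      simp at h
      linarith
    have h2 : l.getD (1 - 1) 0 = l[0] := by simp [hlen]
    rw [h2]
    have : l[0] ∈ l := List.getElem_mem hlen
    exact (Multiset.mem_sort _).1 (List.mem_reverse.1 this)
  obtain ⟨c, -, hc⟩ := Multiset.mem_map.1 hmem
  rw [Finset.sum_boole]
  refine h.le.trans ?_
  rw [← hc]
  norm_cast
  refine Finset.card_le_card fun v hv => ?_
  simp only [Finset.mem_filter, Finset.mem_univ, true_and] at hv ⊢
  have : clus F v = Finset.univ.filter fun u => H.connectedComponentMk u = c := by
    ext u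
    simp only [clus, Finset.mem_filter, Finset.mem_univ, true_and, ← hv, ← hH,
      SimpleGraph.ConnectedComponent.eq]
    exact SimpleGraph.reachable_comm
  rw [this, hc]; exact h

/-- First-moment bound: the expected number of vertices in components with more than `t`
vertices, divided by `t ≥ e⁻²`. -/
lemma percMeasure_le {V : Type*} [Fintype V] {G : SimpleGraph V} {r : ℕ} (hr : 1 ≤ r)
    (hG : IsRegular G (r + 2)) {e t : ℝ} (he0 : 0 < e) (he1 : e ≤ 1 / 16)
    (ht : 1 ≤ t * e ^ 2) :
    percMeasure G ((1 - e) / (r + 1)) {H | t < (compSize H 1 : ℝ)} ≤ ENNReal.ofReal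
      (120 * (Fintype.card V * e ^ 3) *
        Real.exp (-(e ^ 2 / 2 * ((r + 1) / r) * (1 - 8 * e) * t))) := by
  have he : 0 < 1 - e := by linarith
  have hp0 : 0 ≤ (1 - e) / ((r : ℝ) + 1) := by positivity
  have hp1 : (1 - e) / ((r : ℝ) + 1) ≤ 1 := by
    rw [div_le_one (by positivity)]; linarith [Nat.cast_nonneg (α := ℝ) r]
  have ht0 : 0 < t := by
    by_contra hcon
    nlinarith [sq_nonneg e]
  rw [percMeasure_eq G hp0 hp1]
  apply ENNReal.ofReal_le_ofReal
  set X := Real.exp (-(e ^ 2 / 2 * (((r : ℝ) + 1) / r) * (1 - 8 * e) * t))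
  have h1 : t * (∑ F ∈ G.edgeFinset.powerset, wt ((1 - e) / (r + 1)) G.edgeFinset F *
      (if SimpleGraph.fromEdgeSet (F : Set (Sym2 V)) ∈ {H | t < (compSize H 1 : ℝ)}
        then 1 else 0)) ≤ Fintype.card V * (120 * e * X) := by
    calc _ ≤ ∑ F ∈ G.edgeFinset.powerset, wt ((1 - e) / (r + 1)) G.edgeFinset F *
          ∑ v : V, (if t < (clus F v).card then (1 : ℝ) else 0) := by
          rw [Finset.mul_sum]
          refine Finset.sum_le_sum fun F _ => ?_
          rw [mul_left_comm]
          refine mul_le_mul_of_nonneg_left ?_ (wt_nonneg hp0 hp1 _ _)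
          split_ifs with h
          · rw [mul_one]; exact le_sum_clus F ht0.le h
          · rw [mul_zero]
            exact Finset.sum_nonneg fun v _ => by split_ifs <;> norm_num
      _ = ∑ v : V, ∑ F ∈ G.edgeFinset.powerset, wt ((1 - e) / (r + 1)) G.edgeFinset F *
          (if t < (clus F v).card then (1 : ℝ) else 0) := by
          simp_rw [Finset.mul_sum]; exact Finset.sum_comm
      _ ≤ ∑ v : V, 120 * e * X := Finset.sum_le_sum fun v _ => subcrit_tail hr hG he0 he1 ht v
      _ = _ := by simp
  set Q := ∑ F ∈ G.edgeFinset.powerset, wt ((1 - e) / (r + 1)) G.edgeFinset F *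
      (if SimpleGraph.fromEdgeSet (F : Set (Sym2 V)) ∈ {H | t < (compSize H 1 : ℝ)}
        then (1 : ℝ) else 0)
  have hQ : 0 ≤ Q := Finset.sum_nonneg fun F _ =>
    mul_nonneg (wt_nonneg hp0 hp1 _ _) (by split_ifs <;> norm_num)
  calc Q ≤ (t * e ^ 2) * Q := le_mul_of_one_le_left hQ ht
    _ = e ^ 2 * (t * Q) := by ring
    _ ≤ e ^ 2 * (Fintype.card V * (120 * e * X)) := by gcongr
    _ = _ := by ring

/-! ### The asymptotic statement -/

/-- Part 1 of Proposition 1: for any sequence of simple `d`-regular graphs `G (N k)` on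
`N k` vertices (with `N k → ∞`) and `p = (1 - ε(n))/(d-1)` with `ε(n) ≥ 0`, `ε(n) → 0`,
`ε(n) n^{1/3} → ∞`, the probability that the largest percolation component exceeds
`(1+η)·((d-2)/(d-1))·ψ_n(ε(n))` tends to `0`. -/
theorem general_upper_bound_subcritical (d : ℕ) (hd : 3 ≤ d)
    (ε : ℕ → ℝ) (hε0 : ∀ n, 0 ≤ ε n)
    (hεlim : Tendsto ε atTop (nhds 0))
    (hεn : Tendsto (fun n => ε n * (n : ℝ) ^ ((1 : ℝ) / 3)) atTop atTop)
    (N : ℕ → ℕ) (hN : Tendsto N atTop atTop)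
    (G : ∀ k, SimpleGraph (Fin (N k))) (hreg : ∀ k, IsRegular (G k) d)
    (η : ℝ) (hη : 0 < η) :
    Tendsto (fun k =>
      percMeasure (G k) ((1 - ε (N k)) / ((d : ℝ) - 1))
        {H | (1 + η) * (((d : ℝ) - 2) / ((d : ℝ) - 1)) * psi (N k) (ε (N k))
            < (compSize H 1 : ℝ)})
      atTop (nhds 0) := by
  obtain ⟨r, rfl⟩ : ∃ r, d = r + 2 := ⟨d - 2, by omega⟩
  have hr : 1 ≤ r := by omega
  have hr1 : (1 : ℝ) ≤ r := by exact_mod_cast hr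
  have hr0 : (0 : ℝ) < r := by linarith
  have hd1 : ((r + 2 : ℕ) : ℝ) - 1 = r + 1 := by push_cast; ring
  have hd2 : ((r + 2 : ℕ) : ℝ) - 2 = r := by push_cast; ring
  rw [hd1, hd2]
  have hX : Tendsto (fun k => (N k : ℝ) * ε (N k) ^ 3) atTop atTop := by
    have h1 := (tendsto_pow_atTop (α := ℝ) (n := 3) (by norm_num)).comp (hεn.comp hN)
    refine h1.congr fun k => ?_
    simp only [Function.comp_apply, mul_pow]
    rw [← Real.rpow_natCast ((N k : ℝ) ^ ((1 : ℝ) / 3)) 3, ← Real.rpow_mul (Nat.cast_nonneg _)]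
    norm_num
    ring
  have hL : Tendsto (fun k => Real.log ((N k : ℝ) * ε (N k) ^ 3)) atTop atTop :=
    Real.tendsto_log_atTop.comp hX
  have hlim : Tendsto (fun k => ENNReal.ofReal
      (120 * Real.exp (-(η / 2 * Real.log ((N k : ℝ) * ε (N k) ^ 3))))) atTop (nhds 0) := by
    have h1 := Real.tendsto_exp_neg_atTop_nhds_zero.comp (hL.const_mul_atTop (half_pos hη))
    have h2 := ENNReal.tendsto_ofReal (h1.const_mul 120)
    simpa using h2
  have he := hεlim.comp hN
  have hsmall : ∀ᶠ k in atTop, ε (N k) < min (1 / 16) (η / (16 * (1 + η))) :=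
    he.eventually (gt_mem_nhds (by positivity))
  refine tendsto_of_tendsto_of_tendsto_of_le_of_le' tendsto_const_nhds hlim
    (Eventually.of_forall fun _ => zero_le) ?_
  filter_upwards [hsmall, hL.eventually_ge_atTop 1, hX.eventually_gt_atTop 0] with k h1 h2 h3
  set e := ε (N k)
  set L := Real.log ((N k : ℝ) * e ^ 3) with hLdef
  have he0 : 0 < e := lt_of_le_of_ne (hε0 _) fun h => by
    rw [← h] at h3; norm_num at h3
  have he1 : e ≤ 1 / 16 := h1.le.trans (min_le_left _ _)
  have he2 : 8 * e * (1 + η) ≤ η / 2 := by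
    have := h1.le.trans (min_le_right _ _)
    rw [le_div_iff₀ (by positivity)] at this
    linarith
  have hpsi : psi (N k) e = 2 / e ^ 2 * L := rfl
  have ht : 1 ≤ (1 + η) * ((r : ℝ) / (r + 1)) * psi (N k) e * e ^ 2 := by
    have h4 : 1 / 2 ≤ (r : ℝ) / (r + 1) := by
      rw [div_le_div_iff₀ (by norm_num) (by positivity)]; linarith
    have h5 : (1 + η) * ((r : ℝ) / (r + 1)) * psi (N k) e * e ^ 2
        = (1 + η) * ((r : ℝ) / (r + 1)) * (2 * L) := by
      rw [hpsi]; field_simp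
    rw [h5]
    calc (1 : ℝ) = 1 * (1 / 2) * (2 * 1) := by norm_num
      _ ≤ _ := by gcongr; linarith
  refine (percMeasure_le hr (hreg k) he0 he1 ht).trans (ENNReal.ofReal_le_ofReal ?_)
  have h6 : e ^ 2 / 2 * (((r : ℝ) + 1) / r) * (1 - 8 * e)
      * ((1 + η) * ((r : ℝ) / (r + 1)) * psi (N k) e) = (1 + η) * (1 - 8 * e) * L := by
    rw [hpsi]; field_simp
  rw [h6, Fintype.card_fin, mul_assoc]
  gcongr
  calc (N k : ℝ) * e ^ 3 * Real.exp (-((1 + η) * (1 - 8 * e) * L))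
      = Real.exp (L + -((1 + η) * (1 - 8 * e) * L)) := by
        rw [Real.exp_add, hLdef, Real.exp_log h3]
    _ ≤ _ := Real.exp_le_exp.2 (by nlinarith)

end Stmt0
end
end

section
/- Fix an integer d ≥ 3. For every real A > 1 there exists n_0 such that for every n ≥ n_0, every simple d-regular graph G on n vertices, and every p ∈ [0, 1/(d−1)], one has P(|C_1(G_p)| > A·n^{2/3}) ≤ 8/A^{3/2}. -/
/-!
The cluster of a vertex is explored one edge at a time. Suppose a vertex set `A` has already been
reached and `m` unrevealed edges leave it. Revealing one of these edges either closes it (`m` drops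
by one) or reaches a new vertex, which brings at most `d - 1` new edges. Hence, for `s ∈ [0, 1]` and
any `y ∈ [0, 1]` with `y ≤ 1 - p + p s y^(d-1)`, the expectation of `s ^ |cluster of A|` is at least
`s ^ |A| * y ^ m` by induction on the number of unrevealed edges (`expect_cluster_ge`); in
particular `E[s ^ |C(v)|] ≥ s y ^ d`.

With `r = d - 1`, `β = r (r - 1) / 2`, `s = 1 / (1 + β δ²)` and `y = 1 - δ`, the condition on `y`
follows from `p ≤ 1 / r` and `(1 - r δ) (1 + β δ²) ≤ (1 - δ) ^ r`
(`one_sub_mul_one_add_le_pow`), and it gives `1 - E[s ^ |C(v)|] ≤ d δ`. Taking `β δ² = 1 / K` with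
`K = A n^(2/3)`, Bernoulli's inequality gives `s ^ |C(v)| ≤ 1/2` as soon as `|C(v)| > K`. If the
largest cluster has more than `K` vertices, then more than `K` vertices `v` satisfy `|C(v)| > K`, so
the indicator of the event is at most `(2 / K) ∑ v, (1 - s ^ |C(v)|)`. Taking expectations bounds
its probability by `2 n d δ / K = (2 d / √β) A^(-3/2)`, and `2 d / √β ≤ 8` for `d ≥ 3`.
-/

open MeasureTheory ENNReal Filter

noncomputable section

namespace Stmt1

open scoped Classical

instance {V : Type*} : MeasurableSpace (SimpleGraph V) := ⊤

/-- The multiset of sizes (numbers of vertices) of the connected components of `H`. -/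
noncomputable def compSizes {V : Type*} [Fintype V] (H : SimpleGraph V) : Multiset ℕ :=
  ((Finset.univ : Finset V).image H.connectedComponentMk).val.map
    fun c => (Finset.univ.filter fun v => H.connectedComponentMk v = c).card

/-- The `ℓ`-th largest element of a multiset of naturals (1-indexed), `0` if there are
fewer than `ℓ` elements. -/
noncomputable def nthLargest (s : Multiset ℕ) (ℓ : ℕ) : ℕ :=
  (s.sort (· ≤ ·)).reverse.getD (ℓ - 1) 0

/-- `|C_ℓ(H)|`: the number of vertices of the `ℓ`-th largest connected component of `H`. -/
noncomputable def compSize {V : Type*} [Fintype V] (H : SimpleGraph V) (ℓ : ℕ) : ℕ :=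
  nthLargest (compSizes H) ℓ

/-- The weight of a spanning subgraph `H` of `G` under `p`-bond percolation:
each edge of `G` is retained independently with probability `p`. -/
noncomputable def percWeight {V : Type*} [Fintype V] (G : SimpleGraph V) (p : ℝ)
    (H : SimpleGraph V) : ℝ≥0∞ :=
  if H ≤ G then
    ENNReal.ofReal (p ^ H.edgeSet.ncard * (1 - p) ^ (G.edgeSet.ncard - H.edgeSet.ncard))
  else 0

/-- The law of `p`-bond percolation on `G`, as a measure on graphs on the vertex set of `G`. -/
noncomputable def percMeasure {V : Type*} [Fintype V] (G : SimpleGraph V) (p : ℝ) :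
    Measure (SimpleGraph V) :=
  Measure.sum fun H : SimpleGraph V => percWeight G p H • (Measure.dirac H)

/-- `G` is a `d`-regular graph. -/
def IsRegular {V : Type*} (G : SimpleGraph V) (d : ℕ) : Prop :=
  ∀ v, (G.neighborSet v).ncard = d

/-! ### Expectations over random subsets -/

/-- The expectation of `f ω`, where `ω` is the random subset of `E` that keeps each element
independently with probability `p`. -/
def expect {α : Type*} (p : ℝ) (E : Finset α) (f : Finset α → ℝ) : ℝ :=
  ∑ ω ∈ E.powerset, p ^ ω.card * (1 - p) ^ (E.card - ω.card) * f ω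

lemma expect_const {α : Type*} (p : ℝ) (E : Finset α) (c : ℝ) :
    expect p E (fun _ => c) = c := by
  unfold expect
  rw [← Finset.sum_mul, Finset.sum_pow_mul_eq_add_pow]
  simp

lemma expect_mono {α : Type*} {p : ℝ} (h0 : 0 ≤ p) (h1 : p ≤ 1) (E : Finset α)
    {f g : Finset α → ℝ} (h : ∀ ω, ω ⊆ E → f ω ≤ g ω) : expect p E f ≤ expect p E g := by
  unfold expect
  refine Finset.sum_le_sum fun ω hω => ?_
  have : 0 ≤ 1 - p := by linarith
  exact mul_le_mul_of_nonneg_left (h ω (Finset.mem_powerset.1 hω)) (by positivity)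

/-- Conditioning on whether the element `e` is kept. -/
lemma expect_insert {α : Type*} [DecidableEq α] (p : ℝ) (E : Finset α) (e : α) (he : e ∉ E)
    (f : Finset α → ℝ) :
    expect p (insert e E) f
      = (1 - p) * expect p E f + p * expect p E (fun ω => f (insert e ω)) := by
  unfold expect
  rw [Finset.sum_powerset_insert he, Finset.mul_sum, Finset.mul_sum]
  congr 1
  · refine Finset.sum_congr rfl fun ω hω => ?_
    have hc := Finset.card_le_card (Finset.mem_powerset.1 hω)
    rw [Finset.card_insert_of_notMem he, Nat.sub_add_comm hc, pow_succ]
    ring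
  · refine Finset.sum_congr rfl fun ω hω => ?_
    have hn : e ∉ ω := fun h => he (Finset.mem_powerset.1 hω h)
    rw [Finset.card_insert_of_notMem he, Finset.card_insert_of_notMem hn,
      Nat.add_sub_add_right, pow_succ]
    ring

/-! ### Exploring a cluster edge by edge -/

section Exploration

variable {V : Type*} [Fintype V]

/-- The set of vertices joined to some vertex of `A` by a path with edges in `ω`. -/
def cluster (A : Finset V) (ω : Finset (Sym2 V)) : Finset V :=
  Finset.univ.filter fun w => ∃ a ∈ A, (SimpleGraph.fromEdgeSet (ω : Set (Sym2 V))).Reachable a w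

/-- The edges of `E` with exactly one endpoint in `A`. -/
def boundary (A : Finset V) (E : Finset (Sym2 V)) : Finset (Sym2 V) :=
  E.filter fun e => ∃ a ∈ A, ∃ b, b ∉ A ∧ e = s(a, b)

lemma cluster_subset (A R : Finset V) (ω : Finset (Sym2 V)) (hA : A ⊆ R)
    (h : ∀ x y, x ∈ R → s(x, y) ∈ ω → y ∈ R) : cluster A ω ⊆ R := by
  intro w hw
  obtain ⟨a, ha, hr⟩ := (Finset.mem_filter.1 hw).2
  rw [SimpleGraph.reachable_iff_reflTransGen] at hr
  induction hr with
  | refl => exact hA ha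
  | @tail x y hx hxy ih =>
    rw [SimpleGraph.fromEdgeSet_adj] at hxy
    refine h x y (ih ?_) (by simpa using hxy.1)
    simp only [cluster, Finset.mem_filter, Finset.mem_univ, true_and]
    exact ⟨a, ha, (SimpleGraph.reachable_iff_reflTransGen _ _).2 hx⟩

lemma subset_cluster (A : Finset V) (ω : Finset (Sym2 V)) : A ⊆ cluster A ω := by
  intro a ha
  simp only [cluster, Finset.mem_filter, Finset.mem_univ, true_and]
  exact ⟨a, ha, SimpleGraph.Reachable.refl _⟩

lemma cluster_closed (A : Finset V) (ω : Finset (Sym2 V)) (x y : V)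
    (hx : x ∈ cluster A ω) (h : s(x, y) ∈ ω) : y ∈ cluster A ω := by
  by_cases hxy : x = y
  · exact hxy ▸ hx
  simp only [cluster, Finset.mem_filter, Finset.mem_univ, true_and] at hx ⊢
  obtain ⟨a, ha, hr⟩ := hx
  refine ⟨a, ha, hr.trans (SimpleGraph.Adj.reachable ?_)⟩
  rw [SimpleGraph.fromEdgeSet_adj]
  exact ⟨by simpa using h, hxy⟩

lemma cluster_insert_subset (A : Finset V) (ω : Finset (Sym2 V)) (a b : V) (ha : a ∈ A) :
    cluster A (insert s(a, b) ω) ⊆ cluster (insert b A) ω := by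
  refine cluster_subset _ _ _
    ((Finset.subset_insert b A).trans (subset_cluster (insert b A) ω)) ?_
  intro x y hx hxy
  have haR := subset_cluster (insert b A) ω (Finset.mem_insert_of_mem ha)
  have hbR := subset_cluster (insert b A) ω (Finset.mem_insert_self b A)
  rcases Finset.mem_insert.1 hxy with h | h
  · rcases Sym2.eq_iff.1 h with ⟨-, rfl⟩ | ⟨-, rfl⟩ <;> assumption
  · exact cluster_closed _ _ x y hx h

lemma cluster_eq_of_boundary_eq_empty (A : Finset V) (E ω : Finset (Sym2 V)) (hω : ω ⊆ E)
    (h : boundary A E = ∅) : cluster A ω = A := by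
  refine (cluster_subset A A ω subset_rfl ?_).antisymm (subset_cluster A ω)
  intro x y hx hxy
  by_contra hy
  have : s(x, y) ∈ boundary A E := Finset.mem_filter.2 ⟨hω hxy, x, hx, y, hy, rfl⟩
  simp [h] at this

/-- Reaching `b` through an edge of the boundary adds at most the other edges at `b`. -/
lemma card_boundary_insert_le (A : Finset V) (E : Finset (Sym2 V)) (r : ℕ) (a b : V)
    (he : s(a, b) ∉ E) (hdeg : ((insert s(a, b) E).filter (b ∈ ·)).card ≤ r + 1) :
    (boundary (insert b A) E).card ≤ (boundary A E).card + r := by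
  have hsub : boundary (insert b A) E ⊆ boundary A E ∪ E.filter (b ∈ ·) := by
    intro e h
    obtain ⟨hE, x, hx, y, hy, rfl⟩ := Finset.mem_filter.1 h
    rw [Finset.mem_union]
    rcases Finset.mem_insert.1 hx with rfl | hx
    · exact Or.inr (Finset.mem_filter.2 ⟨hE, by simp⟩)
    · exact Or.inl (Finset.mem_filter.2
        ⟨hE, x, hx, y, fun h => hy (Finset.mem_insert_of_mem h), rfl⟩)
  have hcard : (E.filter (b ∈ ·)).card ≤ r := by
    rw [Finset.filter_insert, if_pos (by simp),
      Finset.card_insert_of_notMem (by simp [he])] at hdeg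
    omega
  exact (Finset.card_le_card hsub).trans ((Finset.card_union_le _ _).trans (by omega))

/-- Exploration bound: each unrevealed edge leaving the reached set `A` costs a factor `y`, where
`y` is a subsolution of the fixed point equation of a branching process with `Bin(r, p)` offspring. -/
lemma expect_cluster_ge {p s y : ℝ} {r : ℕ} (hp0 : 0 ≤ p) (hp1 : p ≤ 1) (hs0 : 0 ≤ s) (hs1 : s ≤ 1)
    (hy0 : 0 ≤ y) (hy1 : y ≤ 1) (hy : y ≤ 1 - p + p * (s * y ^ r)) (m : ℕ) :
    ∀ (E : Finset (Sym2 V)) (A : Finset V), E.card = m →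
      (∀ v, (E.filter (v ∈ ·)).card ≤ r + 1) →
      s ^ A.card * y ^ (boundary A E).card ≤ expect p E (fun ω => s ^ (cluster A ω).card) := by
  induction m with
  | zero =>
    intro E A hE _
    rw [Finset.card_eq_zero] at hE
    subst hE
    have hc := cluster_eq_of_boundary_eq_empty A ∅ ∅ subset_rfl (by simp [boundary])
    simp [expect, boundary, hc]
  | succ m ih =>
    intro E A hE hdeg
    by_cases hb : boundary A E = ∅
    · calc s ^ A.card * y ^ (boundary A E).card = s ^ A.card := by simp [hb]
        _ = expect p E (fun _ => s ^ A.card) := (expect_const _ _ _).symm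
        _ ≤ _ := expect_mono hp0 hp1 _ fun ω hω => by
          rw [cluster_eq_of_boundary_eq_empty A E ω hω hb]
    obtain ⟨e, he⟩ := Finset.nonempty_iff_ne_empty.2 hb
    obtain ⟨heE, a, ha, b, hbA, rfl⟩ := Finset.mem_filter.1 he
    obtain ⟨F, hF, rfl⟩ : ∃ F, s(a, b) ∉ F ∧ insert s(a, b) F = E :=
      ⟨E.erase s(a, b), by simp, Finset.insert_erase heE⟩
    rw [Finset.card_insert_of_notMem hF, Nat.add_right_cancel_iff] at hE
    have hdegF : ∀ v, (F.filter (v ∈ ·)).card ≤ r + 1 := fun v =>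
      (Finset.card_le_card (Finset.filter_subset_filter _ (Finset.subset_insert _ _))).trans
        (hdeg v)
    have hbd : (boundary A (insert s(a, b) F)).card = (boundary A F).card + 1 := by
      unfold boundary
      rw [Finset.filter_insert, if_pos ⟨a, ha, b, hbA, rfl⟩,
        Finset.card_insert_of_notMem (by simp [hF])]
    have h1 := ih F A hE hdegF
    have h2 : s ^ (A.card + 1) * y ^ ((boundary A F).card + r)
        ≤ expect p F (fun ω => s ^ (cluster A (insert s(a, b) ω)).card) := by
      calc s ^ (A.card + 1) * y ^ ((boundary A F).card + r)
          ≤ s ^ (insert b A).card * y ^ (boundary (insert b A) F).card := by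
            rw [Finset.card_insert_of_notMem hbA]
            exact mul_le_mul_of_nonneg_left (pow_le_pow_of_le_one hy0 hy1
              (card_boundary_insert_le A F r a b hF (hdeg b))) (by positivity)
        _ ≤ _ := ih F (insert b A) hE hdegF
        _ ≤ _ := expect_mono hp0 hp1 _ fun ω _ => pow_le_pow_of_le_one hs0 hs1
            (Finset.card_le_card (cluster_insert_subset A ω a b ha))
    rw [expect_insert p F _ hF, hbd]
    set j := (boundary A F).card
    have h3 : 0 ≤ s ^ A.card * y ^ j := by positivity
    calc s ^ A.card * y ^ (j + 1) = (s ^ A.card * y ^ j) * y := by ring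
      _ ≤ (s ^ A.card * y ^ j) * (1 - p + p * (s * y ^ r)) := mul_le_mul_of_nonneg_left hy h3
      _ = (1 - p) * (s ^ A.card * y ^ j) + p * (s ^ (A.card + 1) * y ^ (j + r)) := by ring
      _ ≤ _ := add_le_add (mul_le_mul_of_nonneg_left h1 (by linarith))
            (mul_le_mul_of_nonneg_left h2 hp0)

end Exploration

/-! ### An elementary inequality -/

/-- A second-order Bernoulli inequality. -/
lemma one_sub_mul_one_add_le_pow (δ : ℝ) (h0 : 0 ≤ δ) (h1 : δ ≤ 1) (r : ℕ) :
    (1 - r * δ) * (1 + (r : ℝ) * (r - 1) / 2 * δ ^ 2) ≤ (1 - δ) ^ r := by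
  induction r with
  | zero => simp
  | succ r ih =>
    rcases Nat.eq_zero_or_pos r with rfl | hr
    · simp
    have hr1 : (1 : ℝ) ≤ r := by exact_mod_cast hr
    set β : ℝ := (r : ℝ) * (r - 1) / 2 with hβ
    have hβ0 : 0 ≤ β := by
      have : 0 ≤ (r : ℝ) - 1 := by linarith
      positivity
    have hβ' : ((r + 1 : ℕ) : ℝ) * ((r + 1 : ℕ) - 1) / 2 = β + r := by
      push_cast; rw [hβ]; ring
    rw [hβ', pow_succ (1 - δ)]
    push_cast
    have h2 := mul_le_mul_of_nonneg_right ih (sub_nonneg.2 h1)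
    have h3 : 0 ≤ r * δ ^ 2 * (β * δ ^ 2 + (r + 1) * δ) := by positivity
    nlinarith

/-! ### Components and edge sets of graphs -/

/-- The vertices of the connected component of `v` in `H`. -/
def comp {V : Type*} [Fintype V] (H : SimpleGraph V) (v : V) : Finset V :=
  Finset.univ.filter fun w => H.connectedComponentMk w = H.connectedComponentMk v

lemma comp_fromEdgeSet {V : Type*} [Fintype V] (ω : Finset (Sym2 V)) (v : V) :
    comp (SimpleGraph.fromEdgeSet (ω : Set (Sym2 V))) v = cluster {v} ω := by
  ext w
  simp only [comp, cluster, Finset.mem_filter, Finset.mem_univ, true_and, Finset.mem_singleton,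
    exists_eq_left, SimpleGraph.ConnectedComponent.eq]
  exact SimpleGraph.reachable_comm

lemma exists_compSize_one_eq {V : Type*} [Fintype V] (H : SimpleGraph V)
    (h : 0 < compSize H 1) : ∃ v, compSize H 1 = (comp H v).card := by
  have hmem : compSize H 1 ∈ compSizes H := by
    unfold compSize nthLargest at h ⊢
    rw [← Multiset.mem_sort (r := (· ≤ ·)), ← List.mem_reverse]
    cases hl : ((compSizes H).sort (· ≤ ·)).reverse with
    | nil => simp [hl] at h
    | cons a l => simp
  unfold compSizes at hmem
  obtain ⟨c, hc, hcard⟩ := Multiset.mem_map.1 hmem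
  rw [Finset.mem_val] at hc
  obtain ⟨v, -, rfl⟩ := Finset.mem_image.1 hc
  exact ⟨v, hcard.symm⟩

/-- The edges of `G` as a finset. -/
def edges {V : Type*} [Fintype V] (G : SimpleGraph V) : Finset (Sym2 V) :=
  Finset.univ.filter (· ∈ G.edgeSet)

lemma coe_edges {V : Type*} [Fintype V] (G : SimpleGraph V) :
    (edges G : Set (Sym2 V)) = G.edgeSet := by
  ext; simp [edges]

lemma ncard_edgeSet {V : Type*} [Fintype V] (G : SimpleGraph V) :
    G.edgeSet.ncard = (edges G).card := by
  rw [← coe_edges, Set.ncard_coe_finset]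

lemma card_edges_filter_mem_le {V : Type*} [Fintype V] (G : SimpleGraph V) {d : ℕ}
    (hG : IsRegular G d) (v : V) : ((edges G).filter (v ∈ ·)).card ≤ d := by
  rw [← hG v, ← Set.ncard_coe_finset]
  have : (((edges G).filter (v ∈ ·) : Finset (Sym2 V)) : Set (Sym2 V))
      ⊆ (fun w => s(v, w)) '' G.neighborSet v := by
    intro e he
    rw [Finset.mem_coe, Finset.mem_filter] at he
    obtain ⟨hE, w, rfl⟩ := he
    exact ⟨w, by simpa [edges] using hE, rfl⟩
  exact (Set.ncard_le_ncard this (Set.toFinite _)).trans (Set.ncard_image_le (Set.toFinite _))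

/-! ### Probability estimates for percolation -/

/-- Markov's inequality for percolation, with the expectation written over random edge sets. -/
lemma percMeasure_le {V : Type*} [Fintype V] (G : SimpleGraph V) {p : ℝ} (hp0 : 0 ≤ p)
    (hp1 : p ≤ 1) (S : Set (SimpleGraph V)) (g : Finset (Sym2 V) → ℝ) (hg0 : ∀ ω, 0 ≤ g ω)
    (hg1 : ∀ H ∈ S, 1 ≤ g (edges H)) :
    percMeasure G p S ≤ ENNReal.ofReal (expect p (edges G) g) := by
  have hq : 0 ≤ 1 - p := by linarith
  have hsum : percMeasure G p S = ∑ H : SimpleGraph V, percWeight G p H * S.indicator 1 H := by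
    unfold percMeasure
    rw [Measure.sum_apply _ (MeasurableSpace.measurableSet_top), tsum_fintype]
    refine Finset.sum_congr rfl fun H _ => ?_
    rw [Measure.smul_apply, Measure.dirac_apply' _ (MeasurableSpace.measurableSet_top), smul_eq_mul]
  have hexp : ENNReal.ofReal (expect p (edges G) g) = ∑ ω ∈ (edges G).powerset,
      ENNReal.ofReal (p ^ ω.card * (1 - p) ^ ((edges G).card - ω.card) * g ω) := by
    unfold expect
    exact ENNReal.ofReal_sum_of_nonneg fun ω _ => mul_nonneg (by positivity) (hg0 ω)
  have hfil : ∑ H : SimpleGraph V, percWeight G p H * S.indicator 1 H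
      = ∑ H ∈ Finset.univ.filter (· ≤ G), percWeight G p H * S.indicator 1 H := by
    symm
    refine Finset.sum_subset (Finset.subset_univ _) fun H _ hH => ?_
    have : ¬ H ≤ G := by simpa using hH
    simp [percWeight, this]
  have hinj : Set.InjOn (edges (V := V)) (Finset.univ.filter (· ≤ G) : Finset (SimpleGraph V)) := by
    intro H _ H' _ h
    have := congrArg (fun s : Finset (Sym2 V) => (s : Set (Sym2 V))) h
    simp only [coe_edges] at this
    exact SimpleGraph.edgeSet_injective this
  rw [hsum, hfil, hexp]
  calc _ ≤ ∑ H ∈ Finset.univ.filter (· ≤ G), ENNReal.ofReal (p ^ (edges H).card *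
          (1 - p) ^ ((edges G).card - (edges H).card) * g (edges H)) := by
        refine Finset.sum_le_sum fun H hH => ?_
        have hle : H ≤ G := by simpa using hH
        by_cases hS : H ∈ S
        · rw [Set.indicator_of_mem hS, Pi.one_apply, mul_one, percWeight, if_pos hle,
            ncard_edgeSet, ncard_edgeSet]
          exact ENNReal.ofReal_le_ofReal (le_mul_of_one_le_right (by positivity) (hg1 H hS))
        · simp [hS]
    _ = ∑ ω ∈ (Finset.univ.filter (· ≤ G)).image edges,
          ENNReal.ofReal (p ^ ω.card * (1 - p) ^ ((edges G).card - ω.card) * g ω) :=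
        (Finset.sum_image (f := fun ω : Finset (Sym2 V) => ENNReal.ofReal
          (p ^ ω.card * (1 - p) ^ ((edges G).card - ω.card) * g ω)) hinj).symm
    _ ≤ _ := by
        refine Finset.sum_le_sum_of_subset fun ω hω => ?_
        obtain ⟨H, hH, rfl⟩ := Finset.mem_image.1 hω
        have hle : H ≤ G := by simpa using hH
        rw [Finset.mem_powerset, ← Finset.coe_subset, coe_edges, coe_edges]
        exact SimpleGraph.edgeSet_mono hle

/-- With `s = 1 / (1 + β δ²)`, where `β = (d - 1) (d - 2) / 2`, the value `1 - δ` is a subsolution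
for the exploration bound at every `p ≤ 1 / (d - 1)`. -/
lemma expect_cluster_singleton_ge {V : Type*} [Fintype V] (G : SimpleGraph V) {r : ℕ} (hr : 2 ≤ r)
    (hG : IsRegular G (r + 1)) {p δ s : ℝ} (hp0 : 0 ≤ p) (hp : p * r ≤ 1) (hδ0 : 0 ≤ δ)
    (hδ1 : δ ≤ 1) (hs : s * (1 + (r : ℝ) * (r - 1) / 2 * δ ^ 2) = 1) (v : V) :
    1 - ((r : ℝ) + 1) * δ ≤ expect p (edges G) (fun ω => s ^ (cluster {v} ω).card) := by
  have hr2 : (2 : ℝ) ≤ r := by exact_mod_cast hr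
  have hr1 : 0 ≤ (r : ℝ) - 1 := by linarith
  have hβ : 0 ≤ (r : ℝ) * (r - 1) / 2 * δ ^ 2 := by positivity
  have hs0 : 0 ≤ s := by
    by_contra h
    nlinarith
  have hs1 : s ≤ 1 := by nlinarith
  have hp1 : p ≤ 1 := by nlinarith
  have hy0 : 0 ≤ 1 - δ := by linarith
  have key : 1 - r * δ ≤ s * (1 - δ) ^ r := by
    have h := mul_le_mul_of_nonneg_left (one_sub_mul_one_add_le_pow δ hδ0 hδ1 r) hs0
    calc 1 - r * δ = (1 - r * δ) * (s * (1 + (r : ℝ) * (r - 1) / 2 * δ ^ 2)) := by rw [hs]; ring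
      _ = s * ((1 - r * δ) * (1 + (r : ℝ) * (r - 1) / 2 * δ ^ 2)) := by ring
      _ ≤ _ := h
  have hy : 1 - δ ≤ 1 - p + p * (s * (1 - δ) ^ r) := by
    have h1 := mul_le_mul_of_nonneg_left key hp0
    have h2 := mul_le_mul_of_nonneg_right hp hδ0
    nlinarith
  have h := expect_cluster_ge hp0 hp1 hs0 hs1 hy0 (by linarith) hy _ (edges G) {v} rfl
    (card_edges_filter_mem_le G hG)
  refine le_trans ?_ h
  have hcard : (boundary {v} (edges G)).card ≤ r + 1 := by
    refine (Finset.card_le_card ?_).trans (card_edges_filter_mem_le G hG v)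
    intro e he
    obtain ⟨hE, a, ha, b, -, rfl⟩ := Finset.mem_filter.1 he
    rw [Finset.mem_singleton] at ha
    subst ha
    exact Finset.mem_filter.2 ⟨hE, by simp⟩
  calc 1 - ((r : ℝ) + 1) * δ ≤ (1 - r * δ) * (1 - δ) := by nlinarith [mul_nonneg hδ0 hδ0]
    _ ≤ (s * (1 - δ) ^ r) * (1 - δ) := mul_le_mul_of_nonneg_right key hy0
    _ = s * (1 - δ) ^ (r + 1) := by ring
    _ ≤ s ^ ({v} : Finset V).card * (1 - δ) ^ (boundary {v} (edges G)).card := by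
      rw [Finset.card_singleton, pow_one]
      exact mul_le_mul_of_nonneg_left (pow_le_pow_of_le_one hy0 (by linarith) hcard) hs0

lemma expect_sum_one_sub {α ι : Type*} (p : ℝ) (E : Finset α) (T : Finset ι) (c : ℝ)
    (f : ι → Finset α → ℝ) :
    expect p E (fun ω => c * ∑ i ∈ T, (1 - f i ω)) = c * ∑ i ∈ T, (1 - expect p E (f i)) := by
  have h : ∀ i, 1 - expect p E (f i) = expect p E (fun ω => 1 - f i ω) := by
    intro i
    conv_lhs => rw [← expect_const p E 1]
    unfold expect
    rw [← Finset.sum_sub_distrib]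
    exact Finset.sum_congr rfl fun ω _ => by ring
  simp only [h]
  unfold expect
  rw [Finset.sum_comm, Finset.mul_sum]
  refine Finset.sum_congr rfl fun ω _ => ?_
  rw [← Finset.mul_sum]
  ring

/-- Part 2 of Proposition 1: for every `A > 1`, for all large `n`, every `d`-regular graph
`G` on `n` vertices and every `p ≤ 1/(d-1)`,
`P(|C₁(G_p)| > A n^{2/3}) ≤ 8 / A^{3/2}`. -/
theorem general_upper_bound_critical (d : ℕ) (hd : 3 ≤ d) (A : ℝ) (hA : 1 < A) :
    ∃ n₀ : ℕ, ∀ n, n₀ ≤ n → ∀ G : SimpleGraph (Fin n), IsRegular G d →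
      ∀ p : ℝ, 0 ≤ p → p ≤ 1 / ((d : ℝ) - 1) →
        percMeasure G p {H | A * (n : ℝ) ^ ((2 : ℝ) / 3) < (compSize H 1 : ℝ)}
          ≤ ENNReal.ofReal (8 / A ^ ((3 : ℝ) / 2)) := by
  refine ⟨1, fun n hn G hG p hp0 hp => ?_⟩
  obtain ⟨r, rfl⟩ : ∃ r, d = r + 1 := ⟨d - 1, by omega⟩
  have hr : 2 ≤ r := by omega
  have hr2 : (2 : ℝ) ≤ r := by exact_mod_cast hr
  have hpr : p * r ≤ 1 := by
    have h : p ≤ 1 / (r : ℝ) := by simpa using hp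
    rwa [le_div_iff₀ (by linarith)] at h
  have hp1 : p ≤ 1 := by nlinarith
  have hn1 : (1 : ℝ) ≤ n := by exact_mod_cast hn
  set K : ℝ := A * (n : ℝ) ^ ((2 : ℝ) / 3) with hK
  have hK1 : 1 ≤ K := by
    have := Real.one_le_rpow hn1 (by norm_num : (0 : ℝ) ≤ 2 / 3)
    nlinarith
  have hK0 : 0 < K := by linarith
  set β : ℝ := (r : ℝ) * (r - 1) / 2 with hβ
  have hβ1 : 1 ≤ β := by rw [hβ]; nlinarith
  have hβ0 : 0 < β := by linarith
  -- This choice of `δ` makes `β * δ ^ 2 = 1 / K`.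
  set δ : ℝ := 1 / (√β * √K) with hδ
  have hδ0 : 0 ≤ δ := by positivity
  have hδsq : β * δ ^ 2 = 1 / K := by
    rw [hδ, div_pow, mul_pow, Real.sq_sqrt hβ0.le, Real.sq_sqrt hK0.le]
    field_simp
  have hδ1 : δ ≤ 1 := by
    rw [hδ, div_le_one (by positivity)]
    exact one_le_mul_of_one_le_of_one_le (Real.one_le_sqrt.2 hβ1) (Real.one_le_sqrt.2 hK1)
  set s : ℝ := 1 / (1 + 1 / K) with hs
  have hs0 : 0 ≤ s := by positivity
  have hs1 : s ≤ 1 := by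
    rw [hs, div_le_one (by positivity)]
    have : 0 ≤ 1 / K := by positivity
    linarith
  have hsβ : s * (1 + β * δ ^ 2) = 1 := by
    rw [hδsq, hs]; field_simp
  have hE := expect_cluster_singleton_ge G hr hG hp0 hpr hδ0 hδ1 hsβ
  have hhalf : ∀ m : ℕ, K < m → s ^ m ≤ 1 / 2 := by
    intro m hm
    have h1 : 1 + (m : ℝ) * (1 / K) ≤ (1 + 1 / K) ^ m :=
      one_add_mul_le_pow (by have : 0 ≤ 1 / K := by positivity
                             linarith) m
    have h2 : 1 ≤ (m : ℝ) * (1 / K) := by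
      rw [mul_one_div, le_div_iff₀ hK0]; linarith
    rw [hs, div_pow, one_pow]
    exact one_div_le_one_div_of_le (by norm_num) (by linarith)
  refine (percMeasure_le G hp0 hp1 _
    (fun ω => (2 / K) * ∑ v : Fin n, (1 - s ^ (cluster {v} ω).card)) ?_ ?_).trans ?_
  · intro ω
    exact mul_nonneg (by positivity)
      (Finset.sum_nonneg fun v _ => sub_nonneg.2 (pow_le_one₀ hs0 hs1))
  · intro H hH
    have hH' : K < (compSize H 1 : ℝ) := hH
    obtain ⟨v, hv⟩ := exists_compSize_one_eq H (by exact_mod_cast hK0.trans hH')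
    rw [hv] at hH'
    have hcl : ∀ w, cluster {w} (edges H) = comp H w := by
      intro w
      rw [← comp_fromEdgeSet, coe_edges, SimpleGraph.fromEdgeSet_edgeSet]
    simp only [hcl]
    have hsum : ((comp H v).card : ℝ) * (1 / 2) ≤ ∑ w : Fin n, (1 - s ^ (comp H w).card) := by
      calc ((comp H v).card : ℝ) * (1 / 2) = ∑ w ∈ comp H v, (1 / 2 : ℝ) := by
            rw [Finset.sum_const, nsmul_eq_mul]
        _ ≤ ∑ w ∈ comp H v, (1 - s ^ (comp H w).card) := by
            refine Finset.sum_le_sum fun w hw => ?_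
            have hw' : comp H w = comp H v := by
              unfold comp
              rw [(Finset.mem_filter.1 hw).2]
            rw [hw']
            linarith [hhalf _ hH']
        _ ≤ _ := Finset.sum_le_sum_of_subset_of_nonneg (Finset.subset_univ _)
            fun w _ _ => sub_nonneg.2 (pow_le_one₀ hs0 hs1)
    rw [div_mul_eq_mul_div, le_div_iff₀ hK0]
    linarith
  · rw [expect_sum_one_sub]
    refine ENNReal.ofReal_le_ofReal ?_
    have hsum : ∑ v : Fin n,
        (1 - expect p (edges G) (fun ω => s ^ (cluster {v} ω).card)) ≤ n * (((r : ℝ) + 1) * δ) := by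
      calc _ ≤ ∑ _v : Fin n, ((r : ℝ) + 1) * δ :=
            Finset.sum_le_sum fun v _ => by linarith [hE v]
        _ = _ := by simp
    refine (mul_le_mul_of_nonneg_left hsum (by positivity)).trans ?_
    have hconst : (r : ℝ) + 1 ≤ 4 * √β := by
      rw [← Real.sqrt_sq (by norm_num : (0 : ℝ) ≤ 4), ← Real.sqrt_mul (by norm_num)]
      refine Real.le_sqrt_of_sq_le ?_
      rw [hβ]
      nlinarith
    have hKpow : K * √K = A ^ ((3 : ℝ) / 2) * n := by
      have h1 : K * √K = K ^ ((3 : ℝ) / 2) := by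
        rw [Real.sqrt_eq_rpow, show (3 : ℝ) / 2 = 1 + 1 / 2 by norm_num, Real.rpow_add hK0,
          Real.rpow_one]
      rw [h1, hK, Real.mul_rpow (by linarith) (by positivity), ← Real.rpow_mul (by linarith)]
      norm_num
    have hA0 : 0 < A ^ ((3 : ℝ) / 2) := Real.rpow_pos_of_pos (by linarith) _
    have hsβ0 : 0 < √β := Real.sqrt_pos.2 hβ0
    have hsK0 : 0 < √K := Real.sqrt_pos.2 hK0
    calc 2 / K * (n * (((r : ℝ) + 1) * δ)) = 2 * n * (r + 1) / (√β * (K * √K)) := by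
          rw [hδ]; field_simp
      _ ≤ 2 * n * (4 * √β) / (√β * (K * √K)) := by gcongr
      _ = 8 / A ^ ((3 : ℝ) / 2) := by
          have hn0 : (n : ℝ) ≠ 0 := by linarith
          rw [hKpow]; field_simp; norm_num

end Stmt1
end
end

section
/- Fix an integer d ≥ 3. There exists a constant C > 0 (depending only on d) such that for every n, every simple d-regular graph G on n vertices, and every ε > 0 with p = (1 + ε)/(d − 1) ≤ 1, one has E|C_1(G_p)| ≤ C·(n^{2/3} + ε·n). -/
/-!
Exploration of a cluster in `G_p` is compared with a branching process through the generating
function `E[s ^ |C(v)|]`. Suppose every degree is at most `d`, put `g = 1 - p + p f`, and let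
`f ≤ s * g ^ (d - 1)` (a sub-fixed point of the offspring equation). Revealing the edges one at a
time, an edge leaving the current cluster is closed with probability `1 - p`, or is open and then
adds at most one vertex and `d - 1` fresh half-edges, worth a factor `s * g ^ (d - 1) ≥ f`. Hence
each unrevealed half-edge costs a factor at least `g`, and `E[s ^ |C(v)|] ≥ s * g ^ d`
(`perc_cluster_ge`).

With `δ = n ^ (-2/3)`, `s = 1 - δ` and `f = 1 - x`, `x = 2 (d - 1)² (ε + √δ)`, the condition on `f`
follows from `(1 - y) ^ m ≥ 1 - m y + y²` (`one_sub_pow_ge`), so `E[1 - s ^ |C(v)|] ≤ 2 x`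
(`perc_one_sub_le`; this is trivial when `x > 1`). A component with `L ≥ n ^ (2/3)` vertices has
`1 - s ^ L ≥ 1 / 2`, so `L ≤ n ^ (2/3) + 2 ∑ v, (1 - s ^ |C(v)|)` for every component
(`compSize_le`). Taking expectations gives the bound.
-/

open MeasureTheory ENNReal Filter

noncomputable section

namespace Stmt2

open scoped Classical

instance {V : Type*} : MeasurableSpace (SimpleGraph V) := ⊤

/-- The multiset of sizes (numbers of vertices) of the connected components of `H`. -/
noncomputable def compSizes {V : Type*} [Fintype V] (H : SimpleGraph V) : Multiset ℕ :=
  ((Finset.univ : Finset V).image H.connectedComponentMk).val.map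
    fun c => (Finset.univ.filter fun v => H.connectedComponentMk v = c).card

/-- The `ℓ`-th largest element of a multiset of naturals (1-indexed), `0` if there are
fewer than `ℓ` elements. -/
noncomputable def nthLargest (s : Multiset ℕ) (ℓ : ℕ) : ℕ :=
  (s.sort (· ≤ ·)).reverse.getD (ℓ - 1) 0

/-- `|C_ℓ(H)|`: the number of vertices of the `ℓ`-th largest connected component of `H`. -/
noncomputable def compSize {V : Type*} [Fintype V] (H : SimpleGraph V) (ℓ : ℕ) : ℕ :=
  nthLargest (compSizes H) ℓ

/-- The weight of a spanning subgraph `H` of `G` under `p`-bond percolation: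
each edge of `G` is retained independently with probability `p`. -/
noncomputable def percWeight {V : Type*} [Fintype V] (G : SimpleGraph V) (p : ℝ)
    (H : SimpleGraph V) : ℝ≥0∞ :=
  if H ≤ G then
    ENNReal.ofReal (p ^ H.edgeSet.ncard * (1 - p) ^ (G.edgeSet.ncard - H.edgeSet.ncard))
  else 0

/-- The law of `p`-bond percolation on `G`, as a measure on graphs on the vertex set of `G`. -/
noncomputable def percMeasure {V : Type*} [Fintype V] (G : SimpleGraph V) (p : ℝ) :
    Measure (SimpleGraph V) :=
  Measure.sum fun H : SimpleGraph V => percWeight G p H • (Measure.dirac H)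

/-- `G` is a `d`-regular graph. -/
def IsRegular {V : Type*} (G : SimpleGraph V) (d : ℕ) : Prop :=
  ∀ v, (G.neighborSet v).ncard = d

section Helpers

open SimpleGraph Finset

variable {V : Type*}

/-- The expectation of `F` under `p`-percolation on the graph with edge set `E`, as a finite sum
over the set `T` of retained edges. Diagonal elements of `E` are allowed: they take part in the
sum, but `SimpleGraph.fromEdgeSet` ignores them. -/
def perc (p : ℝ) (E : Finset (Sym2 V)) (F : SimpleGraph V → ℝ) : ℝ :=
  ∑ T ∈ E.powerset, p ^ #T * (1 - p) ^ (#E - #T) * F (fromEdgeSet (T : Set (Sym2 V)))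

/-- The number of elements of `E` containing `v`. -/
def edeg (E : Finset (Sym2 V)) (v : V) : ℕ := #(E.filter fun e => v ∈ e)

/-- Revealing the single edge `e`. -/
lemma perc_insert (p : ℝ) (E : Finset (Sym2 V)) (e : Sym2 V) (he : e ∉ E)
    (F : SimpleGraph V → ℝ) :
    perc p (insert e E) F =
      (1 - p) * perc p E F + p * perc p E (fun H => F (H ⊔ fromEdgeSet {e})) := by
  unfold perc
  rw [Finset.sum_powerset_insert he, Finset.mul_sum, Finset.mul_sum]
  congr 1
  · refine Finset.sum_congr rfl fun T hT => ?_
    have h := Finset.card_le_card (Finset.mem_powerset.1 hT)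
    rw [Finset.card_insert_of_notMem he, Nat.sub_add_comm h, pow_succ]
    ring
  · refine Finset.sum_congr rfl fun T hT => ?_
    have hT' := Finset.mem_powerset.1 hT
    have h := Finset.card_le_card hT'
    rw [Finset.card_insert_of_notMem he, Finset.card_insert_of_notMem (fun h => he (hT' h)),
      Nat.add_sub_add_right, pow_succ, Finset.coe_insert, ← Set.union_singleton, fromEdgeSet_union]
    ring

lemma perc_mono {p : ℝ} (hp0 : 0 ≤ p) (hp1 : p ≤ 1) (E : Finset (Sym2 V))
    {F F' : SimpleGraph V → ℝ} (h : ∀ H, F H ≤ F' H) : perc p E F ≤ perc p E F' := by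
  have := sub_nonneg.2 hp1
  exact Finset.sum_le_sum fun T _ => mul_le_mul_of_nonneg_left (h _) (by positivity)

lemma perc_const (p : ℝ) (E : Finset (Sym2 V)) (c : ℝ) : perc p E (fun _ => c) = c := by
  unfold perc
  rw [← Finset.sum_mul, Finset.sum_pow_mul_eq_add_pow]
  simp

lemma perc_add (p : ℝ) (E : Finset (Sym2 V)) (F F' : SimpleGraph V → ℝ) :
    perc p E (fun H => F H + F' H) = perc p E F + perc p E F' := by
  simp only [perc, mul_add, Finset.sum_add_distrib]

lemma perc_mul (p : ℝ) (E : Finset (Sym2 V)) (c : ℝ) (F : SimpleGraph V → ℝ) :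
    perc p E (fun H => c * F H) = c * perc p E F := by
  simp only [perc, Finset.mul_sum]
  exact Finset.sum_congr rfl fun _ _ => by ring

lemma perc_sum {ι : Type*} (p : ℝ) (E : Finset (Sym2 V)) (I : Finset ι)
    (F : ι → SimpleGraph V → ℝ) :
    perc p E (fun H => ∑ i ∈ I, F i H) = ∑ i ∈ I, perc p E (F i) := by
  simp only [perc, Finset.mul_sum]
  exact Finset.sum_comm

lemma edeg_insert_of_mem {E : Finset (Sym2 V)} {e : Sym2 V} (he : e ∉ E) {v : V} (hv : v ∈ e) :
    edeg (insert e E) v = edeg E v + 1 := by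
  unfold edeg
  rw [Finset.filter_insert, if_pos hv, Finset.card_insert_of_notMem]
  simp [he]

lemma edeg_le_insert (E : Finset (Sym2 V)) (e : Sym2 V) (v : V) :
    edeg E v ≤ edeg (insert e E) v :=
  Finset.card_le_card (Finset.filter_subset_filter _ (Finset.subset_insert _ _))

lemma sum_edeg_insert {E : Finset (Sym2 V)} {e : Sym2 V} (he : e ∉ E) {A : Finset V} {u : V}
    (hu : u ∈ A) (hue : u ∈ e) :
    (∑ v ∈ A, edeg E v) + 1 ≤ ∑ v ∈ A, edeg (insert e E) v := by
  rw [← Finset.add_sum_erase _ _ hu, ← Finset.add_sum_erase _ _ hu, edeg_insert_of_mem he hue]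
  have := Finset.sum_le_sum (s := A.erase u) fun v _ => edeg_le_insert E e v
  omega

variable [Fintype V]

/-- The set of vertices joined in `H` to some vertex of `A`. -/
def cluster (H : SimpleGraph V) (A : Finset V) : Finset V :=
  Finset.univ.filter fun x => ∃ a ∈ A, H.Reachable a x

lemma mem_cluster {H : SimpleGraph V} {A : Finset V} {x : V} :
    x ∈ cluster H A ↔ ∃ a ∈ A, H.Reachable a x := by simp [cluster]

/-- A set containing `A` and closed under adjacency contains the cluster of `A`. -/
lemma cluster_subset {H : SimpleGraph V} {A B : Finset V} (hAB : A ⊆ B)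
    (hB : ∀ x ∈ B, ∀ y, H.Adj x y → y ∈ B) : cluster H A ⊆ B := by
  intro x hx
  obtain ⟨a, ha, hr⟩ := mem_cluster.1 hx
  rw [reachable_iff_reflTransGen] at hr
  induction hr with
  | refl => exact hAB ha
  | tail h1 h2 ih =>
    refine hB _ (ih ?_) _ h2
    exact mem_cluster.2 ⟨a, ha, (reachable_iff_reflTransGen _ _).2 h1⟩

lemma subset_cluster (H : SimpleGraph V) (A : Finset V) : A ⊆ cluster H A := fun a ha =>
  mem_cluster.2 ⟨a, ha, Reachable.refl _⟩

/-- Opening the edge `uw` at a vertex `u` of `A` has the same effect on the cluster of `A` as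
adding `w` to `A`. -/
lemma cluster_sup_edge (H : SimpleGraph V) (A : Finset V) (u w : V) (hu : u ∈ A) :
    cluster (H ⊔ fromEdgeSet {s(u, w)}) A = cluster H (insert w A) := by
  apply Finset.Subset.antisymm
  · refine cluster_subset ((Finset.subset_insert _ _).trans (subset_cluster _ _)) ?_
    intro x hx y hxy
    rcases hxy with hxy | hxy
    · obtain ⟨a, ha, hr⟩ := mem_cluster.1 hx
      exact mem_cluster.2 ⟨a, ha, hr.trans hxy.reachable⟩
    · have h1 : s(x, y) = s(u, w) := by simpa using hxy.1
      apply subset_cluster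
      rcases Sym2.eq_iff.1 h1 with ⟨-, rfl⟩ | ⟨-, rfl⟩
      · exact Finset.mem_insert_self _ _
      · exact Finset.mem_insert_of_mem hu
  · intro x hx
    obtain ⟨a, ha, hr⟩ := mem_cluster.1 hx
    have hr' : (H ⊔ fromEdgeSet {s(u, w)}).Reachable a x := hr.mono le_sup_left
    rcases Finset.mem_insert.1 ha with rfl | ha
    · refine mem_cluster.2 ⟨u, hu, ?_⟩
      by_cases hua : u = a
      · exact hua ▸ hr'
      · refine Reachable.trans (Adj.reachable ?_) hr'
        exact Or.inr ⟨by simp, hua⟩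
    · exact mem_cluster.2 ⟨a, ha, hr'⟩

/-- The comparison with a branching process: `f` is a sub-fixed point of the generating function
of the offspring law, and each half-edge at `A` contributes a factor at least
`1 - p + p * f`. -/
lemma perc_cluster_ge {p s f : ℝ} {d : ℕ} (hp0 : 0 ≤ p) (hp1 : p ≤ 1) (hs0 : 0 ≤ s)
    (hf0 : 0 ≤ f) (hf1 : f ≤ 1) (hf : f ≤ s * (1 - p + p * f) ^ (d - 1))
    (E : Finset (Sym2 V)) (A : Finset V) (hE : ∀ v, edeg E v ≤ d) :
    s ^ #A * (1 - p + p * f) ^ (∑ v ∈ A, edeg E v) ≤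
      perc p E (fun H => s ^ #(cluster H A)) := by
  have hq := sub_nonneg.2 hp1
  set g := 1 - p + p * f with hg
  have hg0 : 0 ≤ g := by positivity
  have hg1 : g ≤ 1 := by nlinarith
  induction hN : #E generalizing E A with
  | zero =>
    obtain rfl := Finset.card_eq_zero.1 hN
    have : cluster (⊥ : SimpleGraph V) A = A :=
      Finset.Subset.antisymm (cluster_subset subset_rfl fun x _ y h => h.elim)
        (subset_cluster _ _)
    simp [perc, edeg, this]
  | succ N ih =>
    by_cases hex : ∃ e ∈ E, ∃ u ∈ A, u ∈ e
    · obtain ⟨e, heE, u, hu, hue⟩ := hex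
      obtain ⟨w, rfl⟩ := hue
      obtain ⟨E', he, rfl⟩ : ∃ E', s(u, w) ∉ E' ∧ insert s(u, w) E' = E :=
        ⟨E.erase s(u, w), by simp, Finset.insert_erase heE⟩
      rw [Finset.card_insert_of_notMem he] at hN
      have hE' : ∀ v, edeg E' v ≤ d := fun v => (edeg_le_insert _ _ v).trans (hE v)
      have hS := sum_edeg_insert he hu (Sym2.mem_mk_left u w)
      rw [perc_insert _ _ _ he]
      simp only [cluster_sup_edge _ A u w hu]
      have h1 := ih E' A hE' (by omega)
      have h2 := ih E' (insert w A) hE' (by omega)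
      set S := ∑ v ∈ A, edeg E' v
      have hP : 0 ≤ s ^ #A * g ^ S := by positivity
      have h3 : s ^ #A * g ^ S * f ≤ s ^ #(insert w A) * g ^ (∑ v ∈ insert w A, edeg E' v) := by
        by_cases hw : w ∈ A
        · rw [Finset.insert_eq_of_mem hw]
          exact mul_le_of_le_one_right hP hf1
        · rw [Finset.card_insert_of_notMem hw, Finset.sum_insert hw]
          have hdw : edeg E' w ≤ d - 1 := by
            have := hE w
            rw [edeg_insert_of_mem he (Sym2.mem_mk_right u w)] at this
            omega
          calc s ^ #A * g ^ S * f ≤ s ^ #A * g ^ S * (s * g ^ (d - 1)) :=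
                mul_le_mul_of_nonneg_left hf hP
            _ ≤ s ^ #A * g ^ S * (s * g ^ (edeg E' w)) := by
                have := pow_le_pow_of_le_one hg0 hg1 hdw
                gcongr
            _ = s ^ (#A + 1) * g ^ (edeg E' w + S) := by ring
      calc s ^ #A * g ^ (∑ v ∈ A, edeg (insert s(u, w) E') v)
          ≤ s ^ #A * g ^ (S + 1) := by
            have := pow_le_pow_of_le_one hg0 hg1 hS
            gcongr
        _ = (1 - p) * (s ^ #A * g ^ S) + p * (s ^ #A * g ^ S * f) := by rw [pow_succ, hg]; ring
        _ ≤ _ := by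
            have := h3.trans h2
            gcongr
    · -- No edge of `E` meets `A`, so the cluster of `A` is `A` itself.
      push Not at hex
      have hS : ∑ v ∈ A, edeg E v = 0 := by
        refine Finset.sum_eq_zero fun v hv => ?_
        exact Finset.card_eq_zero.2 (Finset.filter_eq_empty_iff.2 fun e he => hex e he v hv)
      rw [hS, pow_zero, mul_one]
      refine le_of_eq ?_
      rw [← perc_const p E (s ^ #A)]
      refine Finset.sum_congr rfl fun T hT => ?_
      have : cluster (fromEdgeSet (T : Set (Sym2 V))) A = A := by
        refine Finset.Subset.antisymm (cluster_subset subset_rfl fun x hx y h => ?_)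
          (subset_cluster _ _)
        have h1 : s(x, y) ∈ T := by simpa using h.1
        exact (hex _ (Finset.mem_powerset.1 hT h1) x hx (Sym2.mem_mk_left x y)).elim
      simp only [this]

lemma one_sub_pow_ge {y : ℝ} (h1 : y ≤ 1) {m : ℕ} (hm : 2 ≤ m) :
    1 - m * y + y ^ 2 ≤ (1 - y) ^ m := by
  induction m, hm using Nat.le_induction with
  | base => norm_num; nlinarith
  | succ m hm ih =>
    have hm' : (2 : ℝ) ≤ m := by exact_mod_cast hm
    have h := mul_le_mul_of_nonneg_right ih (sub_nonneg.2 h1)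
    rw [pow_succ (1 - y) m]
    push_cast
    nlinarith [sq_nonneg y, mul_nonneg (sq_nonneg y) (by linarith : 0 ≤ (m : ℝ) - y)]

/-- With killing rate `r ^ 2` per vertex, the cluster of `v` is killed with probability
`O(ε + r)`. -/
lemma perc_one_sub_le {m : ℕ} (hm : 2 ≤ m) {ε r : ℝ} (hε : 0 < ε) (hp1 : (1 + ε) / m ≤ 1)
    (hr0 : 0 ≤ r) (hr1 : r ≤ 1) (E : Finset (Sym2 V)) (hE : ∀ v, edeg E v ≤ m + 1) (v : V) :
    perc ((1 + ε) / m) E (fun H => 1 - (1 - r ^ 2) ^ #(cluster H {v})) ≤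
      4 * m ^ 2 * (ε + r) := by
  have hm' : (2 : ℝ) ≤ m := by exact_mod_cast hm
  set p := (1 + ε) / m with hp
  have hmp : m * p = 1 + ε := by rw [hp]; field_simp
  have hp0 : 0 ≤ p := by positivity
  have hs0 : 0 ≤ 1 - r ^ 2 := by nlinarith
  set x := 2 * (m : ℝ) ^ 2 * (ε + r) with hx
  have hx0 : 0 ≤ x := by positivity
  rcases lt_or_ge 1 x with hx1 | hx1
  · calc _ ≤ perc p E (fun _ => (1 : ℝ)) := by
          refine perc_mono hp0 hp1 E fun H => ?_
          have : 0 ≤ (1 - r ^ 2) ^ #(cluster H {v}) := by positivity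
          linarith
      _ = 1 := perc_const _ _ _
      _ ≤ _ := by linarith
  · have hy0 : 0 ≤ p * x := by positivity
    have hy1 : p * x ≤ 1 := by nlinarith
    have hg : 1 - p + p * (1 - x) = 1 - p * x := by ring
    have hpow := one_sub_pow_ge hy1 hm
    -- `p ≥ 1 / m` makes the quadratic gain at least `2 x (ε + r)`.
    have hy2 : 2 * x * (ε + r) ≤ (p * x) ^ 2 := by
      have h1 : 1 ≤ (m * p) ^ 2 := by rw [hmp]; nlinarith
      have h2 : 0 ≤ 2 * (ε + r) * x := by positivity
      have h3 : (p * x) ^ 2 = (m * p) ^ 2 * (2 * (ε + r) * x) := by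
        rw [mul_pow, pow_two x]
        nth_rewrite 1 [hx]
        ring
      rw [h3]
      nlinarith
    have hrx : r ≤ x := by
      have h1 : (1 : ℝ) ≤ (m : ℝ) ^ 2 := by nlinarith
      nlinarith [mul_nonneg (add_nonneg hε.le hr0) (sub_nonneg.2 h1)]
    have hf : 1 - x ≤ (1 - r ^ 2) * (1 - p + p * (1 - x)) ^ (m + 1 - 1) := by
      rw [hg, Nat.add_sub_cancel]
      refine le_trans ?_ (mul_le_mul_of_nonneg_left hpow hs0)
      have hQ : 1 - m * (p * x) + (p * x) ^ 2 ≤ 1 := by nlinarith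
      have hmx : m * (p * x) = (1 + ε) * x := by rw [← mul_assoc, hmp]
      have h4 : r ^ 2 ≤ r * x := by nlinarith
      have h5 := mul_le_mul_of_nonneg_left hQ (sq_nonneg r)
      have h6 : 0 ≤ x * ε := by positivity
      have h7 : 0 ≤ x * r := by positivity
      nlinarith
    have key := perc_cluster_ge hp0 hp1 hs0 (by linarith) (by linarith) hf E {v} hE
    rw [hg, Nat.add_sub_cancel] at hf
    rw [hg, Finset.card_singleton, pow_one, Finset.sum_singleton] at key
    have hd : (1 - p * x) ^ (m + 1) ≤ (1 - p * x) ^ edeg E v :=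
      pow_le_pow_of_le_one (by linarith) (by linarith) (hE v)
    have h8 : (1 - x) * (1 - p * x) ≤ (1 - r ^ 2) * (1 - p * x) ^ edeg E v := by
      refine le_trans (mul_le_mul_of_nonneg_right hf (by linarith)) ?_
      rw [mul_assoc, ← pow_succ]
      exact mul_le_mul_of_nonneg_left hd hs0
    have h9 : 1 - 2 * x ≤ (1 - x) * (1 - p * x) := by nlinarith
    have h10 := perc_add p E (fun H => 1 - (1 - r ^ 2) ^ #(cluster H {v}))
      (fun H => (1 - r ^ 2) ^ #(cluster H {v}))
    simp only [sub_add_cancel, perc_const] at h10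
    linarith

/-- The size of the largest component is `0` or the size of some component; that it is the maximum
plays no role for an upper bound. -/
lemma compSize_mem (H : SimpleGraph V) :
    compSize H 1 = 0 ∨ ∃ v, compSize H 1 = #(cluster H {v}) := by
  unfold compSize nthLargest
  rw [List.getD_eq_getElem?_getD]
  rcases h : ((compSizes H).sort (· ≤ ·)).reverse[1 - 1]? with _ | a
  · left; rfl
  · right
    have h1 := List.mem_of_getElem? h
    rw [List.mem_reverse, Multiset.mem_sort, compSizes, Multiset.mem_map] at h1
    obtain ⟨c, hc, rfl⟩ := h1
    obtain ⟨v, -, rfl⟩ := Finset.mem_image.1 hc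
    refine ⟨v, ?_⟩
    simp only [Option.getD_some]
    congr 1
    ext x
    simp [cluster, ConnectedComponent.eq, reachable_comm]

lemma cluster_eq_of_mem {H : SimpleGraph V} {v w : V} (h : w ∈ cluster H {v}) :
    cluster H {w} = cluster H {v} := by
  have h1 : H.Reachable v w := by simpa [cluster] using h
  ext x
  simp only [cluster, Finset.mem_filter, Finset.mem_univ, true_and, Finset.mem_singleton,
    exists_eq_left]
  exact ⟨h1.trans, h1.symm.trans⟩

/-- Each of the `L` vertices of a component of size `L ≥ 1 / r ^ 2` contributes at least `1 / 2`
to the sum. -/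
lemma compSize_le (H : SimpleGraph V) {r : ℝ} (hr0 : 0 < r) (hr1 : r ≤ 1) :
    (compSize H 1 : ℝ) ≤ 1 / r ^ 2 + 2 * ∑ v, (1 - (1 - r ^ 2) ^ #(cluster H {v})) := by
  have hs0 : 0 ≤ 1 - r ^ 2 := by nlinarith
  have hs1 : 1 - r ^ 2 ≤ 1 := by nlinarith
  have hnn : ∀ v, 0 ≤ 1 - (1 - r ^ 2) ^ #(cluster H {v}) := fun v =>
    sub_nonneg.2 (pow_le_one₀ hs0 hs1)
  have hsum := Finset.sum_nonneg fun v (_ : v ∈ Finset.univ) => hnn v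
  have hk : 0 < 1 / r ^ 2 := by positivity
  rcases compSize_mem H with h | ⟨v, h⟩
  · rw [h]; push_cast; linarith
  rw [h]
  set L := #(cluster H {v}) with hL
  rcases le_total (L : ℝ) (1 / r ^ 2) with hle | hge
  · linarith
  have hexp : (1 - r ^ 2) ^ L ≤ 1 / 2 := by
    have h1 : 1 ≤ L * r ^ 2 := by rwa [div_le_iff₀ (by positivity)] at hge
    calc (1 - r ^ 2) ^ L ≤ (Real.exp (-r ^ 2)) ^ L := by
          refine pow_le_pow_left₀ hs0 ?_ L
          have := Real.add_one_le_exp (-r ^ 2)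
          linarith
      _ = Real.exp (-(L * r ^ 2)) := by rw [← Real.exp_nat_mul]; congr 1; ring
      _ ≤ Real.exp (-1) := Real.exp_le_exp.2 (by linarith)
      _ ≤ 1 / 2 := by
          rw [Real.exp_neg, one_div]
          refine inv_anti₀ (by norm_num) ?_
          have := Real.add_one_le_exp (1 : ℝ)
          linarith
  have h2 : (L : ℝ) * (1 / 2) ≤ ∑ w, (1 - (1 - r ^ 2) ^ #(cluster H {w})) := by
    calc (L : ℝ) * (1 / 2) = ∑ w ∈ cluster H {v}, (1 / 2 : ℝ) := by
          rw [Finset.sum_const, nsmul_eq_mul]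
      _ ≤ ∑ w ∈ cluster H {v}, (1 - (1 - r ^ 2) ^ #(cluster H {w})) := by
          refine Finset.sum_le_sum fun w hw => ?_
          rw [cluster_eq_of_mem hw]
          linarith
      _ ≤ _ := Finset.sum_le_univ_sum_of_nonneg hnn
  linarith

/-- Integration against `percMeasure` is the finite sum `perc` over retained edge sets. -/
lemma lintegral_percMeasure (G : SimpleGraph V) {p : ℝ} (hp0 : 0 ≤ p) (hp1 : p ≤ 1)
    (F : SimpleGraph V → ℕ) :
    ∫⁻ H, (F H : ℝ≥0∞) ∂(percMeasure G p) =
      ENNReal.ofReal (perc p G.edgeFinset (fun H => (F H : ℝ))) := by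
  have hq := sub_nonneg.2 hp1
  unfold percMeasure perc
  rw [lintegral_sum_measure, tsum_fintype,
    ENNReal.ofReal_sum_of_nonneg fun T _ => by positivity]
  have h1 : ∀ H : SimpleGraph V, ∫⁻ H', (F H' : ℝ≥0∞) ∂(percWeight G p H • Measure.dirac H) =
      percWeight G p H * F H := fun H => by
    rw [lintegral_smul_measure, lintegral_dirac' _ measurable_from_top, smul_eq_mul]
  simp only [h1]
  rw [← Finset.sum_filter_of_ne (p := fun H => H ≤ G)]
  swap
  · intro H _ hne
    by_contra hH
    exact hne (by simp [percWeight, hH])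
  refine Finset.sum_bij' (fun H _ => H.edgeFinset)
    (fun T _ => fromEdgeSet (T : Set (Sym2 V))) ?_ ?_ ?_ ?_ ?_
  · intro H hH
    exact Finset.mem_powerset.2 (edgeFinset_mono (Finset.mem_filter.1 hH).2)
  · intro T hT
    refine Finset.mem_filter.2 ⟨Finset.mem_univ _, fun x y h => ?_⟩
    have h1 : s(x, y) ∈ T := by simpa using h.1
    simpa using Finset.mem_powerset.1 hT h1
  · intro H _
    simp
  · intro T hT
    ext e
    induction e with | _ x y =>
    have : s(x, y) ∈ T → x ≠ y := fun h => by
      have h2 : G.Adj x y := by simpa using Finset.mem_powerset.1 hT h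
      exact h2.ne
    simpa using this
  · intro H hH
    have hH' := (Finset.mem_filter.1 hH).2
    rw [percWeight, if_pos hH', ENNReal.ofReal_mul (by positivity) (q := (F _ : ℝ)),
      ENNReal.ofReal_natCast, coe_edgeFinset, fromEdgeSet_edgeSet, ← coe_edgeFinset H, ← coe_edgeFinset G,
      Set.ncard_coe_finset, Set.ncard_coe_finset]

lemma edeg_of_isRegular {G : SimpleGraph V} {d : ℕ} (hG : IsRegular G d) (v : V) :
    edeg G.edgeFinset v = d := by
  have h : G.edgeFinset.filter (fun e => v ∈ e) = G.incidenceFinset v := by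
    ext e
    simp [incidenceSet]
  rw [edeg, h, card_incidenceFinset_eq_degree, ← hG v, ← card_neighborFinset_eq_degree,
    neighborFinset_def, Set.ncard_eq_toFinset_card']

end Helpers

/-- Part 3 of Proposition 1: there is `C > 0` (depending only on `d`) such that for every
`n`, every `d`-regular graph `G` on `n` vertices and every `ε > 0` with
`p = (1+ε)/(d-1) ≤ 1`, `E|C₁(G_p)| ≤ C (n^{2/3} + ε n)`. -/
theorem general_upper_bound_supercritical (d : ℕ) (hd : 3 ≤ d) :
    ∃ C : ℝ, 0 < C ∧ ∀ n : ℕ, ∀ G : SimpleGraph (Fin n), IsRegular G d →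
      ∀ ε : ℝ, 0 < ε → (1 + ε) / ((d : ℝ) - 1) ≤ 1 →
        ∫⁻ H, (compSize H 1 : ℝ≥0∞) ∂(percMeasure G ((1 + ε) / ((d : ℝ) - 1)))
          ≤ ENNReal.ofReal (C * ((n : ℝ) ^ ((2 : ℝ) / 3) + ε * n)) := by
  obtain ⟨m, rfl⟩ : ∃ m, d = m + 1 := ⟨d - 1, by omega⟩
  have hm : 2 ≤ m := by omega
  refine ⟨1 + 8 * (m : ℝ) ^ 2, by positivity, fun n G hG ε hε hp1 => ?_⟩
  have hcast : ((m + 1 : ℕ) : ℝ) - 1 = m := by push_cast; ring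
  rw [hcast] at hp1 ⊢
  rw [lintegral_percMeasure G (by positivity) hp1]
  refine ENNReal.ofReal_le_ofReal ?_
  have hE : ∀ v, edeg G.edgeFinset v ≤ m + 1 := fun v => (edeg_of_isRegular hG v).le
  rcases Nat.eq_zero_or_pos n with rfl | hn
  · have h0 : ∀ H : SimpleGraph (Fin 0), compSize H 1 = 0 := fun H =>
      (compSize_mem H).elim id fun ⟨v, _⟩ => v.elim0
    simp only [h0, Nat.cast_zero, perc_const]
    positivity
  have hn' : (0 : ℝ) < n := by exact_mod_cast hn
  have hn1 : (1 : ℝ) ≤ n := by exact_mod_cast hn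
  -- With this `r`, both error terms `r ^ (-2)` and `n * r` equal `n ^ (2/3)`.
  obtain ⟨r, hr⟩ : ∃ r : ℝ, r = (n : ℝ) ^ (-(1 / 3) : ℝ) := ⟨_, rfl⟩
  have hr0 : 0 < r := hr ▸ Real.rpow_pos_of_pos hn' _
  have hr1 : r ≤ 1 := hr ▸ Real.rpow_le_one_of_one_le_of_nonpos hn1 (by norm_num)
  have hk : 1 / r ^ 2 = (n : ℝ) ^ ((2 : ℝ) / 3) := by
    rw [hr, ← Real.rpow_natCast, ← Real.rpow_mul hn'.le, one_div, ← Real.rpow_neg hn'.le]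
    norm_num
  have hnr : (n : ℝ) * r = (n : ℝ) ^ ((2 : ℝ) / 3) := by
    rw [hr, ← Real.rpow_one_add' hn'.le (by norm_num)]
    norm_num
  calc _ ≤ perc ((1 + ε) / m) G.edgeFinset (fun H =>
          1 / r ^ 2 + 2 * ∑ v, (1 - (1 - r ^ 2) ^ (cluster H {v}).card)) :=
        perc_mono (by positivity) hp1 _ fun H => compSize_le H hr0 hr1
    _ = 1 / r ^ 2 + 2 * ∑ v, perc ((1 + ε) / m) G.edgeFinset
          (fun H => 1 - (1 - r ^ 2) ^ (cluster H {v}).card) := by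
        rw [perc_add, perc_const, perc_mul, perc_sum]
    _ ≤ 1 / r ^ 2 + 2 * ∑ _v : Fin n, 4 * (m : ℝ) ^ 2 * (ε + r) := by
        gcongr with v
        exact perc_one_sub_le hm hε hp1 hr0.le hr1 _ hE v
    _ = (n : ℝ) ^ ((2 : ℝ) / 3) + 8 * (m : ℝ) ^ 2 * ((n : ℝ) ^ ((2 : ℝ) / 3) + ε * n) := by
        rw [hk, Finset.sum_const, Finset.card_univ, Fintype.card_fin, nsmul_eq_mul, ← hnr]
        ring
    _ ≤ _ := by
        have : 0 ≤ ε * n := by positivity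
        linarith

end Stmt2
end
end

section
/- Let d ≥ 1 and k ≥ 1 be integers and let a_0, …, a_{k−1} be integers with a_0 + ⋯ + a_{k−1} = −d. Call an index j ∈ {0, …, k−1} good if for every ℓ ∈ {0, …, k−2} one has Σ_{i=0}^{ℓ} a_{(j+i) mod k} > −d. Then the number of good indices is at least 1 and at most d. -/
open scoped Classical

/-!
Extend `a` periodically and let `S n = ∑_{i<n} a (i % k)`, so that `S (n + k) = S n - d`. An index
`j` is good iff `S j - d < S (j + m)` for all `0 < m < k`.

*Existence.* The first index `j` in `[0, k)` at which `S` is minimal is good: if `j + m < k`, use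
minimality and `d > 0`; otherwise `S (j + m) = S (j + m - k) - d` with `j + m - k < j`, so
`S (j + m - k) > S j`.

*Upper bound.* If `i < j` are both good, then goodness of `i` gives `S i - d < S j`, and goodness
of `j` at the point `i + k` gives `S j - d < S (i + k) = S i - d`. Hence `0 < S i - S j < d`, so `S`
takes distinct residues modulo `d` on the good indices.
-/

/-- Partial sums of the `k`-periodic extension of `a`. -/
def cyclicSum (k : ℕ) (a : ℕ → ℤ) (n : ℕ) : ℤ := ∑ i ∈ Finset.range n, a (i % k)

theorem cyclicSum_add (k : ℕ) (a : ℕ → ℤ) (j m : ℕ) :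
    cyclicSum k a (j + m) = cyclicSum k a j + ∑ i ∈ Finset.range m, a ((j + i) % k) :=
  Finset.sum_range_add _ j m

theorem cyclicSum_add_period (d k : ℕ) (a : ℕ → ℤ)
    (hsum : ∑ i ∈ Finset.range k, a i = -(d : ℤ)) (n : ℕ) :
    cyclicSum k a (n + k) = cyclicSum k a n - d := by
  have h : cyclicSum k a k = -(d : ℤ) := by
    rw [← hsum]
    exact Finset.sum_congr rfl fun i hi => by rw [Nat.mod_eq_of_lt (Finset.mem_range.1 hi)]
  have h' := cyclicSum_add k a k n
  simp only [Nat.add_mod_left] at h'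
  rw [Nat.add_comm, h', h, cyclicSum]
  ring

theorem good_iff (d k : ℕ) (a : ℕ → ℤ) (j : ℕ) :
    (∀ ℓ ∈ Finset.range (k - 1),
      -(d : ℤ) < ∑ i ∈ Finset.range (ℓ + 1), a ((j + i) % k)) ↔
    ∀ m, 0 < m → m < k → cyclicSum k a j - d < cyclicSum k a (j + m) := by
  constructor
  · intro h m hm hmk
    have := h (m - 1) (Finset.mem_range.2 (by omega))
    rw [Nat.sub_add_cancel hm] at this
    rw [cyclicSum_add]
    linarith
  · intro h ℓ hℓ
    have hℓ' := Finset.mem_range.1 hℓ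
    have := h (ℓ + 1) (by omega) (by omega)
    rw [cyclicSum_add] at this
    linarith

theorem exists_good (d k : ℕ) (hd : 1 ≤ d) (hk : 1 ≤ k) (S : ℕ → ℤ)
    (hS : ∀ n, S (n + k) = S n - d) :
    ∃ j < k, ∀ m, 0 < m → m < k → S j - d < S (j + m) := by
  have hex : ∃ j, j < k ∧ ∀ i < k, S j ≤ S i := by
    obtain ⟨j, hj, hmin⟩ := Finset.exists_min_image (Finset.range k) S ⟨0, Finset.mem_range.2 hk⟩
    exact ⟨j, Finset.mem_range.1 hj, fun i hi => hmin i (Finset.mem_range.2 hi)⟩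
  obtain ⟨hjk, hmin⟩ := Nat.find_spec hex
  have hfirst : ∀ i < Nat.find hex, S (Nat.find hex) < S i := by
    intro i hi
    by_contra! hle
    exact Nat.find_min hex hi ⟨by omega, fun t ht => hle.trans (hmin t ht)⟩
  refine ⟨Nat.find hex, hjk, fun m hm hmk => ?_⟩
  generalize Nat.find hex = j at *
  by_cases h : j + m < k
  · have := hmin _ h
    omega
  · have h1 := hfirst (j + m - k) (by omega)
    have h2 := hS (j + m - k)
    rw [Nat.sub_add_cancel (by omega)] at h2
    omega

theorem good_lt (d k : ℕ) (S : ℕ → ℤ) (hS : ∀ n, S (n + k) = S n - d) {i j : ℕ}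
    (hij : i < j) (hj : j < k)
    (gi : ∀ m, 0 < m → m < k → S i - d < S (i + m))
    (gj : ∀ m, 0 < m → m < k → S j - d < S (j + m)) :
    S j < S i ∧ S i < S j + d := by
  have h1 := gi (j - i) (by omega) (by omega)
  have h2 := gj (i + k - j) (by omega) (by omega)
  rw [show i + (j - i) = j by omega] at h1
  rw [show j + (i + k - j) = i + k by omega, hS] at h2
  omega

/-- Two integers at distance strictly between `0` and `d` are incongruent modulo `d`. -/
theorem emod_ne_of_lt {d x y : ℤ} (h : x < y ∧ y < x + d) : x % d ≠ y % d := by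
  intro he
  have hdvd : d ∣ y - x := Int.ModEq.dvd he
  have := Int.le_of_dvd (by omega) hdvd
  omega

/-- Lemma 9 (cyclic lemma of Spitzer type): let `d ≥ 1`, `k ≥ 1` and let
`a₀, …, a_{k-1}` be integers summing to `-d`. Call `j ∈ {0, …, k-1}` good if all cyclic
partial sums `Σ_{i=0}^{ℓ} a_{(j+i) mod k}` for `ℓ ∈ {0, …, k-2}` are `> -d`. Then the
number of good indices is at least `1` and at most `d`. -/
theorem cyclic_lemma (d k : ℕ) (hd : 1 ≤ d) (hk : 1 ≤ k) (a : ℕ → ℤ)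
    (hsum : ∑ i ∈ Finset.range k, a i = -(d : ℤ)) :
    1 ≤ ((Finset.range k).filter fun j =>
        ∀ ℓ ∈ Finset.range (k - 1),
          -(d : ℤ) < ∑ i ∈ Finset.range (ℓ + 1), a ((j + i) % k)).card ∧
    ((Finset.range k).filter fun j =>
        ∀ ℓ ∈ Finset.range (k - 1),
          -(d : ℤ) < ∑ i ∈ Finset.range (ℓ + 1), a ((j + i) % k)).card ≤ d := by
  have hS := cyclicSum_add_period d k a hsum
  simp only [good_iff]
  constructor
  · obtain ⟨j, hj, hgood⟩ := exists_good d k hd hk _ hS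
    exact Finset.card_pos.2 ⟨j, Finset.mem_filter.2 ⟨Finset.mem_range.2 hj, hgood⟩⟩
  · have hcard : (Finset.Ico (0 : ℤ) d).card = d := by simp
    refine le_of_le_of_eq (Finset.card_le_card_of_injOn (fun j => cyclicSum k a j % d) ?_ ?_) hcard
    · intro j _
      exact Finset.mem_coe.2 (Finset.mem_Ico.2
        ⟨Int.emod_nonneg _ (by omega), Int.emod_lt_of_pos _ (by omega)⟩)
    · intro i hi j hj he
      obtain ⟨hik, gi⟩ := Finset.mem_filter.1 (Finset.mem_coe.1 hi)
      obtain ⟨hjk, gj⟩ := Finset.mem_filter.1 (Finset.mem_coe.1 hj)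
      rw [Finset.mem_range] at hik hjk
      rcases lt_trichotomy i j with h | h | h
      · exact absurd he.symm (emod_ne_of_lt (good_lt d k _ hS h hjk gi gj))
      · exact h
      · exact absurd he (emod_ne_of_lt (good_lt d k _ hS h hik gj gi))
end

section
/- Fix λ ∈ ℝ and an integer d ≥ 3. There exist a constant D(λ,d) < ∞ and δ_0 > 0 such that for every δ ∈ (0, δ_0) and every admissible n with p = (1 + λ·n^{−1/3})/(d − 1) ∈ [0,1], the random graph G(n,d,p) satisfies P(|C_1| < ⌈δ·n^{2/3}⌉) ≤ D(λ,d)·δ^{1/2}. -/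
/-!
The proof explores the percolated random regular graph edge by edge, revealing the regular graph
and the percolation simultaneously, and controls the exploration by explicit potentials which
bound the failure probability by backward induction; no martingale theory is needed.

*Revealed edges.* A graph is identified with its edge set. After some steps the explorer knows a
set `A` of retained edges and a set `B` of deleted edges of the regular graph. With `extCount d E`
the number of `d`-regular graphs containing `E`, the state `(A, B)` has (unnormalised) probability
`mass d p A B = p^|A| (1-p)^|B| extCount d (A ∪ B)`, and `wt d p F A B` is the part of it on which
the percolated graph satisfies `F`. Choosing a vertex `v` with a free half-edge and summing over the
other end `w` of an unrevealed edge at `v`, every such `w` is counted, so both quantities satisfy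
exact recursions (`extCount_rec`, `wt_rec`): a uniformly chosen unrevealed edge at `v` leads to `w`
with probability proportional to `extCount d (insert s(v, w) (A ∪ B))`.

*The switching bound.* Replacing the edges `vw`, `ab` by `va`, `wb` shows that a given edge `vw`
lies in a uniform `d`-regular extension of `E` with probability at most `2 d² / n`, as long as the
set of touched vertices is small compared to `n` (`switching`, `switchBound_of_large`).

*The height process.* Let `Y` be the number of free half-edges at the vertices of the component
being explored. If `w` is a new vertex, `Y` moves by `d - 2` with probability `p` and by `-1`
otherwise, so the drift is `p (d - 1) - 1 = λ n^{-1/3}` and the variance is of order one; if `w`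
has been touched already, `Y` moves by `-1` or `-2`, and this has probability at most
`η = O(n^{-1/3})` during the first `O(n^{2/3})` steps. The lemma `one_step` turns this into a
one-step inequality for an arbitrary potential `g(Y)`.

*Climbing.* Put `h = δ^{1/4}`, `ρ = n^{1/3}` and `H = h ρ`. Explore components one after another,
restarting from a fresh vertex whenever `Y` reaches `0`. Since `Y²` gains at least `1/2` in
expectation in each step below `H`, the potential `(1 - θ)^s (2 - Y² / R²)`, with `R = H + d` and
`θ = 1 / (4 R²)`, shows that within `⌊ρ²⌋` steps the height exceeds `H`, except with probability
of order `exp(-ρ² / (32 H²)) ≤ 32 h²` (`climb`).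

*Survival.* From height `Y₀ ≥ H` the process stays positive for `d k` further steps, where
`k = ⌈h⁴ ρ²⌉`, except with probability of order `d k / H² = O(h²)`: this is Chebyshev's inequality,
in the form of the potential `(1 + μ²)^s ((Y₀ - Y)² + (d² + 5) s) / Y₀²` (`survive`). A component
whose exploration is still alive once `d k` half-edges have been used has at least `k`
vertices.

Adding the two errors gives `O(h²) = O(δ^{1/2})` (`core_bound`). When `h² ρ ≤ 1` the threshold
`⌈h⁴ ρ²⌉` is at most `1` and there is nothing to prove.
-/

open MeasureTheory ENNReal Filter

noncomputable section

namespace Stmt8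

open scoped Classical

instance {V : Type*} : MeasurableSpace (SimpleGraph V) := ⊤

/-- The multiset of sizes (numbers of vertices) of the connected components of `H`. -/
noncomputable def compSizes {V : Type*} [Fintype V] (H : SimpleGraph V) : Multiset ℕ :=
  ((Finset.univ : Finset V).image H.connectedComponentMk).val.map
    fun c => (Finset.univ.filter fun v => H.connectedComponentMk v = c).card

/-- The `ℓ`-th largest element of a multiset of naturals (1-indexed), `0` if there are
fewer than `ℓ` elements. -/
noncomputable def nthLargest (s : Multiset ℕ) (ℓ : ℕ) : ℕ :=
  (s.sort (· ≤ ·)).reverse.getD (ℓ - 1) 0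

/-- `|C_ℓ(H)|`: the number of vertices of the `ℓ`-th largest connected component of `H`. -/
noncomputable def compSize {V : Type*} [Fintype V] (H : SimpleGraph V) (ℓ : ℕ) : ℕ :=
  nthLargest (compSizes H) ℓ

/-- The weight of a spanning subgraph `H` of `G` under `p`-bond percolation:
each edge of `G` is retained independently with probability `p`. -/
noncomputable def percWeight {V : Type*} [Fintype V] (G : SimpleGraph V) (p : ℝ)
    (H : SimpleGraph V) : ℝ≥0∞ :=
  if H ≤ G then
    ENNReal.ofReal (p ^ H.edgeSet.ncard * (1 - p) ^ (G.edgeSet.ncard - H.edgeSet.ncard))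
  else 0

/-- The law of `p`-bond percolation on `G`, as a measure on graphs on the vertex set of `G`. -/
noncomputable def percMeasure {V : Type*} [Fintype V] (G : SimpleGraph V) (p : ℝ) :
    Measure (SimpleGraph V) :=
  Measure.sum fun H : SimpleGraph V => percWeight G p H • (Measure.dirac H)

/-- `G` is a `d`-regular graph. -/
def IsRegular {V : Type*} (G : SimpleGraph V) (d : ℕ) : Prop :=
  ∀ v, (G.neighborSet v).ncard = d

/-- The set of simple `d`-regular graphs on the vertex set `Fin n`. -/
noncomputable def regularGraphs (n d : ℕ) : Finset (SimpleGraph (Fin n)) :=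
  Finset.univ.filter fun G => IsRegular G d

/-- `n` is admissible: `n ≥ 1`, `d·n` is even, and a simple `d`-regular graph on `n`
vertices exists. -/
def Admissible (n d : ℕ) : Prop :=
  0 < n ∧ Even (d * n) ∧ (regularGraphs n d).Nonempty

/-- The law of `G(n,d,p)`: choose a uniform simple `d`-regular graph on `Fin n`, then
perform `p`-bond percolation on it. -/
noncomputable def gndp (n d : ℕ) (p : ℝ) : Measure (SimpleGraph (Fin n)) :=
  ((regularGraphs n d).card : ℝ≥0∞)⁻¹ • ∑ G ∈ regularGraphs n d, percMeasure G p

section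

variable {V : Type*} [Fintype V]

/-! ### Regular graphs as edge sets and the revealed-edge weights -/


/-- The degree of `x` in the graph with edge set `E`. -/
def deg (E : Finset (Sym2 V)) (x : V) : ℕ := (E.filter (x ∈ ·)).card

/-- The edge sets of the simple `d`-regular graphs on `V`. -/
def regSets (V : Type*) [Fintype V] (d : ℕ) : Finset (Finset (Sym2 V)) :=
  Finset.univ.filter fun G => (∀ e ∈ G, ¬ e.IsDiag) ∧ ∀ x, deg G x = d

/-- The number of `d`-regular graphs containing all edges of `E`. -/
def extCount (d : ℕ) (E : Finset (Sym2 V)) : ℕ := ((regSets V d).filter (E ⊆ ·)).card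

/-- A `d`-regular graph `G` and its percolated subgraph `T` are compatible with having revealed the
retained edges `A` and the deleted edges `B`, and `T` satisfies `F`. -/
def Compat (F : Finset (Sym2 V) → Prop) (A B G T : Finset (Sym2 V)) : Prop :=
  A ∪ B ⊆ G ∧ T ⊆ G ∧ A ⊆ T ∧ Disjoint T B ∧ F T

/-- The number of `d`-regular graphs times the probability that the edges of `A` are present and
retained, the edges of `B` are present and deleted, and the percolated graph satisfies `F`. -/
def wt (d : ℕ) (p : ℝ) (F : Finset (Sym2 V) → Prop) (A B : Finset (Sym2 V)) : ℝ :=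
  ∑ G ∈ regSets V d, ∑ T : Finset (Sym2 V),
    if Compat F A B G T then p ^ T.card * (1 - p) ^ (G.card - T.card) else 0

omit [Fintype V] in
theorem deg_insert {E : Finset (Sym2 V)} {v w : V} (hvw : w ≠ v) (he : s(v, w) ∉ E) (x : V) :
    deg (insert s(v, w) E) x = deg E x + (if x = v then 1 else 0) + (if x = w then 1 else 0) := by
  unfold deg
  rw [Finset.filter_insert]
  by_cases hx : x ∈ s(v, w)
  · rw [if_pos hx, Finset.card_insert_of_notMem (by simp [he])]
    rcases Sym2.mem_iff.1 hx with rfl | rfl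
    · simp [hvw.symm]
    · simp [hvw]
  · rw [if_neg hx]
    simp only [Sym2.mem_iff, not_or] at hx
    simp [hx.1, hx.2]

/-- In a `d`-regular graph `G ⊇ E`, the number of edges at `v` outside `E` is `d - deg E v`. -/
theorem card_new_nbrs {d : ℕ} {G E : Finset (Sym2 V)} (hG : G ∈ regSets V d) (hE : E ⊆ G) (v : V) :
    (Finset.univ.filter fun w : V => (w ≠ v ∧ s(v, w) ∉ E) ∧ s(v, w) ∈ G).card + deg E v = d := by
  simp only [regSets, Finset.mem_filter, Finset.mem_univ, true_and] at hG
  have h1 : (Finset.univ.filter fun w : V => (w ≠ v ∧ s(v, w) ∉ E) ∧ s(v, w) ∈ G).card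
      = ((G \ E).filter (v ∈ ·)).card := by
    apply Finset.card_bij (fun w _ => s(v, w))
    · intro w hw
      simp only [Finset.mem_filter, Finset.mem_univ, true_and] at hw
      simp [hw.1.2, hw.2]
    · intro a _ b _ h
      exact Sym2.congr_right.1 h
    · intro e he
      simp only [Finset.mem_filter, Finset.mem_sdiff] at he
      obtain ⟨w, rfl⟩ := Sym2.mem_iff_exists.1 he.2
      refine ⟨w, ?_, rfl⟩
      have := hG.1 _ he.1.1
      simp only [Sym2.mk_isDiag_iff] at this
      simp [he.1.1, he.1.2, Ne.symm this]
  rw [h1, ← hG.2 v]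
  unfold deg
  rw [← Finset.card_union_of_disjoint]
  · rw [← Finset.filter_union, Finset.sdiff_union_of_subset hE]
  · exact Finset.disjoint_filter_filter Finset.sdiff_disjoint

/-- Double counting of the pairs of a regular graph `G ⊇ E` and an edge of `G \ E` at `v`. -/
theorem extCount_rec (d : ℕ) (E : Finset (Sym2 V)) (v : V) :
    ∑ w ∈ Finset.univ.filter (fun w : V => w ≠ v ∧ s(v, w) ∉ E),
      (extCount d (insert s(v, w) E) : ℝ) = ((d : ℝ) - deg E v) * extCount d E := by
  unfold extCount
  simp only [Finset.card_filter, Nat.cast_sum]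
  rw [Finset.sum_comm, Finset.mul_sum]
  refine Finset.sum_congr rfl fun G hG => ?_
  by_cases hE : E ⊆ G
  · have := card_new_nbrs hG hE v
    rw [← this]
    simp [Finset.insert_subset_iff, hE, Finset.filter_filter]
  · simp [Finset.insert_subset_iff, hE]

/-- The analogue of `extCount_rec` for `wt`: each of the `d - deg (A ∪ B) v` unrevealed edges at `v`
is either retained or deleted. -/
theorem wt_rec (d : ℕ) (p : ℝ) (F : Finset (Sym2 V) → Prop) (A B : Finset (Sym2 V)) (v : V) :
    ∑ w ∈ Finset.univ.filter (fun w : V => w ≠ v ∧ s(v, w) ∉ A ∪ B),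
      (wt d p F (insert s(v, w) A) B + wt d p F A (insert s(v, w) B))
      = ((d : ℝ) - deg (A ∪ B) v) * wt d p F A B := by
  unfold wt
  simp only [← Finset.sum_add_distrib]
  rw [Finset.sum_comm, Finset.mul_sum]
  refine Finset.sum_congr rfl fun G hG => ?_
  rw [Finset.sum_comm, Finset.mul_sum]
  refine Finset.sum_congr rfl fun T _ => ?_
  by_cases hc : Compat F A B G T
  · rw [if_pos hc]
    have h := card_new_nbrs hG hc.1 v
    have : ((d : ℝ) - deg (A ∪ B) v) = ((Finset.univ.filter fun w : V =>
        (w ≠ v ∧ s(v, w) ∉ A ∪ B) ∧ s(v, w) ∈ G).card : ℝ) := by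
      rw [← h]; push_cast; ring
    rw [this, ← Finset.filter_filter (fun w : V => w ≠ v ∧ s(v, w) ∉ A ∪ B), Finset.card_filter]
    push_cast
    rw [Finset.sum_mul]
    refine Finset.sum_congr rfl fun w hw => ?_
    simp only [Finset.mem_filter, Finset.mem_univ, true_and, Finset.mem_union, not_or] at hw
    obtain ⟨h1, h2, h3, h4, h5⟩ := hc
    have e1 : Compat F (insert s(v, w) A) B G T ↔ s(v, w) ∈ T := by
      unfold Compat
      rw [Finset.insert_union, Finset.insert_subset_iff, Finset.insert_subset_iff]
      exact ⟨fun h => h.2.2.1.1, fun h => ⟨⟨h2 h, h1⟩, h2, ⟨h, h3⟩, h4, h5⟩⟩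
    have e2 : Compat F A (insert s(v, w) B) G T ↔ s(v, w) ∈ G ∧ s(v, w) ∉ T := by
      unfold Compat
      rw [Finset.union_insert, Finset.insert_subset_iff, Finset.disjoint_insert_right]
      exact ⟨fun h => ⟨h.1.1, h.2.2.2.1.1⟩, fun h => ⟨⟨h.1, h1⟩, h2, h3, ⟨h.2, h4⟩, h5⟩⟩
    simp only [e1, e2]
    by_cases hT : s(v, w) ∈ T
    · simp [hT, h2 hT]
    · by_cases hG' : s(v, w) ∈ G <;> simp [hT, hG']
  · rw [if_neg hc, mul_zero]
    refine Finset.sum_eq_zero fun w _ => ?_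
    rw [if_neg, if_neg, add_zero]
    · rintro ⟨h1, h2, h3, h4, h5⟩
      rw [Finset.union_insert, Finset.insert_subset_iff] at h1
      rw [Finset.disjoint_insert_right] at h4
      exact hc ⟨h1.2, h2, h3, h4.2, h5⟩
    · rintro ⟨h1, h2, h3, h4, h5⟩
      rw [Finset.insert_union, Finset.insert_subset_iff] at h1
      rw [Finset.insert_subset_iff] at h3
      exact hc ⟨h1.2, h2, h3.2, h4, h5⟩

/-- The percolation probability that `A` is retained and `B` is deleted. -/
theorem sum_interval {A B G : Finset (Sym2 V)} (hAB : Disjoint A B) (hG : A ∪ B ⊆ G) (p : ℝ) :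
    ∑ T ∈ Finset.univ.filter (fun T : Finset (Sym2 V) => T ⊆ G ∧ A ⊆ T ∧ Disjoint T B),
      p ^ T.card * (1 - p) ^ (G.card - T.card) = p ^ A.card * (1 - p) ^ B.card := by
  have hb := Finset.sum_pow_mul_eq_add_pow p (1 - p) (G \ (A ∪ B))
  rw [add_sub_cancel, one_pow] at hb
  refine Eq.trans ?_ ((Finset.mul_sum _ _ (p ^ A.card * (1 - p) ^ B.card)).symm.trans
    (by rw [hb, mul_one]))
  refine Finset.sum_bij' (fun T _ => T \ A) (fun s _ => A ∪ s) ?_ ?_ ?_ ?_ ?_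
  · intro T hT
    simp only [Finset.mem_filter, Finset.mem_univ, true_and, Finset.mem_powerset] at hT ⊢
    intro e he
    simp only [Finset.mem_sdiff, Finset.mem_union, not_or] at he ⊢
    exact ⟨hT.1 he.1, he.2, Finset.disjoint_left.1 hT.2.2 he.1⟩
  · intro s hs
    simp only [Finset.mem_filter, Finset.mem_univ, true_and, Finset.mem_powerset] at hs ⊢
    refine ⟨Finset.union_subset (Finset.subset_union_left.trans hG)
      (hs.trans Finset.sdiff_subset), Finset.subset_union_left, ?_⟩
    rw [Finset.disjoint_union_left]
    refine ⟨hAB, Finset.disjoint_left.2 fun e he hB => ?_⟩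
    have := hs he
    simp [hB] at this
  · intro T hT
    simp only [Finset.mem_filter, Finset.mem_univ, true_and] at hT
    exact Finset.union_sdiff_of_subset hT.2.1
  · intro s hs
    simp only [Finset.mem_powerset] at hs
    rw [Finset.union_sdiff_cancel_left]
    refine Finset.disjoint_left.2 fun e he he' => ?_
    have := hs he'
    simp [he] at this
  · intro T hT
    simp only [Finset.mem_filter, Finset.mem_univ, true_and] at hT
    have c1 := Finset.card_sdiff_add_card_eq_card hT.2.1
    have c2 := Finset.card_sdiff_add_card_eq_card hG
    have c3 := Finset.card_union_of_disjoint hAB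
    have c4 : (T ∪ B).card ≤ G.card := Finset.card_le_card
      (Finset.union_subset hT.1 (Finset.subset_union_right.trans hG))
    rw [Finset.card_union_of_disjoint hT.2.2] at c4
    have e1 : T.card = A.card + (T \ A).card := by omega
    have e2 : G.card - T.card = B.card + ((G \ (A ∪ B)).card - (T \ A).card) := by omega
    rw [e2, e1, pow_add, pow_add]
    ring

theorem wt_le {d : ℕ} {p : ℝ} (h0 : 0 ≤ p) (h1 : p ≤ 1) (F : Finset (Sym2 V) → Prop)
    {A B : Finset (Sym2 V)} (hAB : Disjoint A B) :
    wt d p F A B ≤ p ^ A.card * (1 - p) ^ B.card * extCount d (A ∪ B) := by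
  unfold wt extCount
  rw [Finset.card_filter]
  push_cast
  rw [Finset.mul_sum]
  refine Finset.sum_le_sum fun G _ => ?_
  by_cases hG : A ∪ B ⊆ G
  · rw [if_pos hG, mul_one, ← sum_interval hAB hG, Finset.sum_filter]
    refine Finset.sum_le_sum fun T _ => ?_
    have h1' : 0 ≤ 1 - p := by linarith
    split_ifs with ha hb
    · exact le_rfl
    · exact absurd ⟨ha.2.1, ha.2.2.1, ha.2.2.2.1⟩ hb
    · positivity
    · exact le_rfl
  · rw [if_neg hG, mul_zero]
    exact (Finset.sum_eq_zero fun T _ => if_neg fun h => hG h.1).le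

/-! ### The switching bound -/

/-- The neighbours of `x` in the graph with edge set `G`. -/
def nbrs (G : Finset (Sym2 V)) (x : V) : Finset V := Finset.univ.filter fun y => s(x, y) ∈ G

theorem mem_nbrs {G : Finset (Sym2 V)} {x y : V} : y ∈ nbrs G x ↔ s(x, y) ∈ G := by
  simp [nbrs]

theorem card_nbrs {d : ℕ} {G : Finset (Sym2 V)} (hG : G ∈ regSets V d) (x : V) :
    (nbrs G x).card = d := by
  have h := card_new_nbrs hG (Finset.empty_subset G) x
  have h2 : deg (∅ : Finset (Sym2 V)) x = 0 := by simp [deg]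
  rw [h2, add_zero] at h
  rw [← h]
  congr 1
  ext y
  simp only [nbrs, Finset.mem_filter, Finset.mem_univ, true_and, Finset.notMem_empty,
    not_false_eq_true, and_true]
  refine ⟨fun hy => ⟨?_, hy⟩, fun hy => hy.2⟩
  rintro rfl
  simp only [regSets, Finset.mem_filter, Finset.mem_univ, true_and] at hG
  exact hG.1 _ hy (by simp)

/-- The vertices `a` that are not used in a switching of the edge `vw`: the vertices of `S`, the
vertex `v` and its neighbours, and all neighbours of `S`, of `w`, and of the neighbours of `w`. -/
def avoid (G : Finset (Sym2 V)) (S : Finset V) (v w : V) : Finset V :=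
  (S ∪ insert v (nbrs G v)) ∪ (S ∪ insert w (nbrs G w)).biUnion (nbrs G)

theorem card_avoid {d : ℕ} {G : Finset (Sym2 V)} (hG : G ∈ regSets V d) (S : Finset V) (v w : V) :
    (avoid G S v w).card ≤ (d + 1) * (S.card + d + 1) := by
  have h : ∀ u, (S ∪ insert u (nbrs G u)).card ≤ S.card + d + 1 := fun u => by
    have h1 := Finset.card_union_le S (insert u (nbrs G u))
    have h2 := Finset.card_insert_le u (nbrs G u)
    rw [card_nbrs hG] at h2
    omega
  have h3 : ((S ∪ insert w (nbrs G w)).biUnion (nbrs G)).card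
      ≤ (S ∪ insert w (nbrs G w)).card * d :=
    Finset.card_biUnion_le_card_mul _ _ _ fun x _ => (card_nbrs hG x).le
  have h4 := Nat.mul_le_mul_right d (h w)
  have h5 := Finset.card_union_le (S ∪ insert v (nbrs G v))
    ((S ∪ insert w (nbrs G w)).biUnion (nbrs G))
  have h6 := h v
  unfold avoid
  nlinarith

/-- A chosen neighbour of `a` in `G` (and `a` itself if there is none). -/
def partner (G : Finset (Sym2 V)) (a : V) : V :=
  if h : ∃ b, s(a, b) ∈ G then h.choose else a

theorem partner_spec {d : ℕ} (hd : 1 ≤ d) {G : Finset (Sym2 V)} (hG : G ∈ regSets V d) (a : V) :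
    s(a, partner G a) ∈ G := by
  have h : ∃ b, s(a, b) ∈ G := by
    have : (nbrs G a).Nonempty := by
      rw [← Finset.card_pos, card_nbrs hG]; omega
    obtain ⟨b, hb⟩ := this
    exact ⟨b, mem_nbrs.1 hb⟩
  unfold partner
  rw [dif_pos h]
  exact h.choose_spec

/-- The edge set `G` without the edges `vw` and `ab`. -/
def core (G : Finset (Sym2 V)) (v w a b : V) : Finset (Sym2 V) :=
  (G.erase s(v, w)).erase s(a, b)

/-- The switching of `G` which replaces the edges `vw`, `ab` by `va`, `wb`. -/
def switch (G : Finset (Sym2 V)) (v w a b : V) : Finset (Sym2 V) :=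
  insert s(v, a) (insert s(w, b) (core G v w a b))

/-- The conditions under which replacing `vw`, `ab` by `va`, `wb` keeps the graph simple and regular
and does not touch edges spanned by `S`. -/
structure Good (G : Finset (Sym2 V)) (S : Finset V) (v w a b : V) : Prop where
  aS : a ∉ S
  bS : b ∉ S
  vw : v ≠ w
  ab : a ≠ b
  av : a ≠ v
  aw : a ≠ w
  bv : b ≠ v
  bw : b ≠ w
  mvw : s(v, w) ∈ G
  mab : s(a, b) ∈ G
  mva : s(v, a) ∉ G
  mwb : s(w, b) ∉ G

theorem good_of {d : ℕ} (hd : 1 ≤ d) {G : Finset (Sym2 V)} (hG : G ∈ regSets V d) {S : Finset V}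
    {v w a : V} (hv : v ∈ S) (hvw : w ≠ v) (hm : s(v, w) ∈ G) (ha : a ∉ avoid G S v w) :
    Good G S v w a (partner G a) := by
  have hp := partner_spec hd hG a
  set b := partner G a
  have hG' := hG
  simp only [regSets, Finset.mem_filter, Finset.mem_univ, true_and] at hG'
  simp only [avoid, Finset.mem_union, Finset.mem_insert, Finset.mem_biUnion, mem_nbrs, not_or,
    not_exists, not_and] at ha
  obtain ⟨⟨a1, a2, a3⟩, a4⟩ := ha
  have hba : s(b, a) ∈ G := by rw [Sym2.eq_swap]; exact hp
  have hb1 : b ∉ S := fun h => a4 b (Or.inl h) hba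
  have hb2 : b ≠ w := fun h => a4 b (Or.inr (Or.inl h)) hba
  have hb3 : s(w, b) ∉ G := fun h => a4 b (Or.inr (Or.inr h)) hba
  refine ⟨a1, hb1, hvw.symm, ?_, a2, ?_, ?_, hb2, hm, hp, a3, hb3⟩
  · intro h
    exact hG'.1 _ hp (by simpa using h)
  · rintro rfl; exact a3 hm
  · rintro h; rw [h] at hb1; exact hb1 hv

omit [Fintype V] in
/-- With `Good.core_eq`, this shows that a switching can be undone once `v, w, a, b` are known. -/
theorem Good.insert_core {G : Finset (Sym2 V)} {S : Finset V} {v w a b : V}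
    (h : Good G S v w a b) : insert s(v, w) (insert s(a, b) (core G v w a b)) = G := by
  unfold core
  rw [Finset.insert_erase, Finset.insert_erase h.mvw]
  rw [Finset.mem_erase]
  refine ⟨fun he => ?_, h.mab⟩
  rcases Sym2.eq_iff.1 he with ⟨h1, _⟩ | ⟨h1, _⟩
  · exact h.av h1
  · exact h.aw h1

omit [Fintype V] in
theorem Good.core_eq {G : Finset (Sym2 V)} {S : Finset V} {v w a b : V}
    (h : Good G S v w a b) :
    ((switch G v w a b).erase s(v, a)).erase s(w, b) = core G v w a b := by
  unfold switch
  rw [Finset.erase_insert, Finset.erase_insert]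
  · intro hm
    exact h.mwb (Finset.mem_of_mem_erase (Finset.mem_of_mem_erase hm))
  · rw [Finset.mem_insert, not_or]
    refine ⟨fun he => ?_, fun hm =>
      h.mva (Finset.mem_of_mem_erase (Finset.mem_of_mem_erase hm))⟩
    rcases Sym2.eq_iff.1 he with ⟨h1, _⟩ | ⟨_, h1⟩
    · exact h.vw h1
    · exact h.aw h1

theorem Good.switch_mem {d : ℕ} {G : Finset (Sym2 V)} (hG : G ∈ regSets V d) {S : Finset V}
    {v w a b : V} (h : Good G S v w a b) : switch G v w a b ∈ regSets V d := by
  simp only [regSets, Finset.mem_filter, Finset.mem_univ, true_and] at hG ⊢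
  constructor
  · intro e he
    simp only [switch, Finset.mem_insert] at he
    rcases he with rfl | rfl | he
    · simpa using h.av.symm
    · simpa using h.bw.symm
    · exact hG.1 e (Finset.mem_of_mem_erase (Finset.mem_of_mem_erase he))
  · intro x
    have hd := hG.2 x
    have c1 : s(a, b) ∉ core G v w a b := by simp [core]
    have c2 : s(v, w) ∉ insert s(a, b) (core G v w a b) := by
      rw [Finset.mem_insert, not_or]
      refine ⟨fun he => ?_, by simp [core]⟩
      rcases Sym2.eq_iff.1 he with ⟨h1, _⟩ | ⟨_, h1⟩
      · exact h.av h1.symm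
      · exact h.aw h1.symm
    have c3 : s(w, b) ∉ core G v w a b := fun hm =>
      h.mwb (Finset.mem_of_mem_erase (Finset.mem_of_mem_erase hm))
    have c4 : s(v, a) ∉ insert s(w, b) (core G v w a b) := by
      rw [Finset.mem_insert, not_or]
      refine ⟨fun he => ?_, fun hm =>
        h.mva (Finset.mem_of_mem_erase (Finset.mem_of_mem_erase hm))⟩
      rcases Sym2.eq_iff.1 he with ⟨h1, _⟩ | ⟨_, h1⟩
      · exact h.vw h1
      · exact h.aw h1
    rw [← h.insert_core, deg_insert h.vw.symm c2, deg_insert h.ab.symm c1] at hd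
    rw [switch, deg_insert h.av c4, deg_insert h.bw c3]
    omega

/-- Switching bound: with `N' = extCount d (insert s(v, w) E)` and `N = extCount d E`, one has
`(n - (d + 1) (|S| + d + 1)) N' ≤ d² N`. Each `G` counted by `N'` admits at least
`n - (d + 1) (|S| + d + 1)` choices of `a`, and from the switched graph, which contains `E`, the
original one is recovered from `a ∼ v` and `b ∼ w`, for which there are `d²` possibilities. -/
theorem switching {d : ℕ} (hd : 1 ≤ d) {E : Finset (Sym2 V)} {S : Finset V}
    (hES : ∀ e ∈ E, ∀ x ∈ e, x ∈ S) {v w : V} (hv : v ∈ S) (hvw : w ≠ v) (he : s(v, w) ∉ E) :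
    Fintype.card V * extCount d (insert s(v, w) E)
      ≤ (d + 1) * (S.card + d + 1) * extCount d (insert s(v, w) E) + d ^ 2 * extCount d E := by
  -- `P`: pairs of a graph and an admissible `a`; `Q`: pairs of a graph and a possible `(a, b)`
  set P := ((regSets V d).filter (insert s(v, w) E ⊆ ·)).sigma
    (fun G => Finset.univ \ avoid G S v w) with hP
  set Q := ((regSets V d).filter (E ⊆ ·)).sigma
    (fun G => nbrs G v ×ˢ nbrs G w) with hQ
  have hcP : Fintype.card V * extCount d (insert s(v, w) E)
      ≤ (d + 1) * (S.card + d + 1) * extCount d (insert s(v, w) E) + P.card := by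
    rw [hP, Finset.card_sigma, extCount, mul_comm, ← smul_eq_mul, ← Finset.sum_const,
      mul_comm _ (Finset.card _), ← smul_eq_mul (Finset.card _), ← Finset.sum_const,
      ← Finset.sum_add_distrib]
    refine Finset.sum_le_sum fun G hG => ?_
    have h1 := card_avoid (Finset.mem_filter.1 hG).1 S v w
    have h2 := Finset.card_sdiff_add_card_eq_card (Finset.subset_univ (avoid G S v w))
    rw [Finset.card_univ] at h2
    omega
  have hcQ : Q.card = d ^ 2 * extCount d E := by
    rw [hQ, Finset.card_sigma, extCount, mul_comm, ← smul_eq_mul, ← Finset.sum_const]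
    refine Finset.sum_congr rfl fun G hG => ?_
    rw [Finset.card_product, card_nbrs (Finset.mem_filter.1 hG).1,
      card_nbrs (Finset.mem_filter.1 hG).1, sq]
  have hgood : ∀ x ∈ P, Good x.1 S v w x.2 (partner x.1 x.2) ∧ x.1 ∈ regSets V d ∧ E ⊆ x.1 := by
    intro x hx
    simp only [hP, Finset.mem_sigma, Finset.mem_filter, Finset.mem_sdiff, Finset.mem_univ,
      true_and, Finset.insert_subset_iff] at hx
    exact ⟨good_of hd hx.1.1 hv hvw hx.1.2.1 hx.2, hx.1.1, hx.1.2.2⟩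
  have hPQ : P.card ≤ Q.card := by
    refine Finset.card_le_card_of_injOn
      (fun x => (⟨switch x.1 v w x.2 (partner x.1 x.2), (x.2, partner x.1 x.2)⟩ :
        Σ _ : Finset (Sym2 V), V × V)) ?_ ?_
    · intro x hx
      obtain ⟨hg, hr, hE⟩ := hgood x hx
      simp only [hQ, Finset.coe_sigma, Set.mem_sigma_iff, Finset.mem_coe, Finset.mem_filter,
        Finset.mem_product, mem_nbrs]
      refine ⟨⟨hg.switch_mem hr, ?_⟩, by simp [switch], by simp [switch]⟩
      intro e heE
      simp only [switch, core, Finset.mem_insert, Finset.mem_erase]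
      refine Or.inr (Or.inr ⟨?_, ?_, hE heE⟩)
      · rintro rfl
        exact hg.aS (hES _ heE _ (Sym2.mem_mk_left _ _))
      · rintro rfl
        exact he heE
    · intro x hx y hy hxy
      obtain ⟨hgx, -, -⟩ := hgood x hx
      obtain ⟨hgy, -, -⟩ := hgood y hy
      obtain ⟨G, a⟩ := x
      obtain ⟨G', a'⟩ := y
      simp only [Sigma.mk.injEq, heq_eq_eq, Prod.mk.injEq] at hxy
      obtain ⟨h1, rfl, h2⟩ := hxy
      have c1 := hgx.core_eq
      have c2 := hgy.core_eq
      have c3 := hgx.insert_core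
      have c4 := hgy.insert_core
      simp only at c1 c2 c3 c4
      rw [h1, h2, c2] at c1
      rw [h2, ← c1, c4] at c3
      rw [c3]
  omega

/-! ### One exploration step -/

/-- The exploration invariant: `A` and `B` are the retained and deleted revealed edges, `S` contains
all touched vertices, and `C` is the set of vertices found so far in the current component. -/
structure Inv (A B : Finset (Sym2 V)) (C S : Finset V) : Prop where
  disj : Disjoint A B
  CS : C ⊆ S
  ES : ∀ e ∈ A ∪ B, ∀ x ∈ e, x ∈ S
  conn : ∀ x ∈ C, ∀ y ∈ C, (SimpleGraph.fromEdgeSet (A : Set (Sym2 V))).Reachable x y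

/-- The number of free half-edges at the vertices of `C`, the height of the exploration process. It
is real-valued, so that it may be negative in states that do not occur in an exploration. -/
def act (d : ℕ) (E : Finset (Sym2 V)) (C : Finset V) : ℝ := ∑ x ∈ C, ((d : ℝ) - deg E x)

/-- The number of revealed half-edges at the vertices of `C`. -/
def used (E : Finset (Sym2 V)) (C : Finset V) : ℕ := ∑ x ∈ C, deg E x

omit [Fintype V] in
theorem act_eq (d : ℕ) (E : Finset (Sym2 V)) (C : Finset V) :
    act d E C = d * C.card - used E C := by
  simp [act, used, mul_comm]

omit [Fintype V] in
theorem used_insert {E : Finset (Sym2 V)} {C : Finset V} {v w : V} (hv : v ∈ C) (hvw : w ≠ v)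
    (he : s(v, w) ∉ E) :
    used (insert s(v, w) E) C = used E C + 1 + (if w ∈ C then 1 else 0) := by
  unfold used
  simp only [deg_insert hvw he, Finset.sum_add_distrib, Finset.sum_ite_eq', hv, if_true]

omit [Fintype V] in
theorem deg_eq_zero {A B : Finset (Sym2 V)} {C S : Finset V} (hI : Inv A B C S) {w : V}
    (hw : w ∉ S) : deg (A ∪ B) w = 0 := by
  unfold deg
  rw [Finset.card_eq_zero, Finset.filter_eq_empty_iff]
  exact fun e he hwe => hw (hI.ES e he w hwe)

omit [Fintype V] in
theorem reach_mono {A A' : Finset (Sym2 V)} (h : A ⊆ A') {x y : V}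
    (hr : (SimpleGraph.fromEdgeSet (A : Set (Sym2 V))).Reachable x y) :
    (SimpleGraph.fromEdgeSet (A' : Set (Sym2 V))).Reachable x y :=
  hr.mono (SimpleGraph.fromEdgeSet_mono (Finset.coe_subset.2 h))

omit [Fintype V] in
/-- The invariant is preserved when a retained edge at `C` is revealed and `C` is not enlarged. -/
theorem Inv.retain {A B : Finset (Sym2 V)} {C S : Finset V} (hI : Inv A B C S) {v w : V}
    (hv : v ∈ C) (he : s(v, w) ∉ A ∪ B) :
    Inv (insert s(v, w) A) B C (insert w S) := by
  rw [Finset.mem_union, not_or] at he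
  refine ⟨?_, hI.CS.trans (Finset.subset_insert _ _), ?_, fun x hx y hy =>
    reach_mono (Finset.subset_insert _ _) (hI.conn x hx y hy)⟩
  · rw [Finset.disjoint_insert_left]
    exact ⟨he.2, hI.disj⟩
  · intro e he x hx
    rw [Finset.insert_union, Finset.mem_insert] at he
    rcases he with rfl | he
    · rcases Sym2.mem_iff.1 hx with rfl | rfl
      · exact Finset.mem_insert_of_mem (hI.CS hv)
      · exact Finset.mem_insert_self _ _
    · exact Finset.mem_insert_of_mem (hI.ES e he x hx)

omit [Fintype V] in
/-- The invariant is preserved when a deleted edge at `C` is revealed. -/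
theorem Inv.delete {A B : Finset (Sym2 V)} {C S : Finset V} (hI : Inv A B C S) {v w : V}
    (hv : v ∈ C) (he : s(v, w) ∉ A ∪ B) :
    Inv A (insert s(v, w) B) C (insert w S) := by
  rw [Finset.mem_union, not_or] at he
  refine ⟨?_, hI.CS.trans (Finset.subset_insert _ _), ?_, hI.conn⟩
  · rw [Finset.disjoint_insert_right]
    exact ⟨he.1, hI.disj⟩
  · intro e he x hx
    rw [Finset.union_insert, Finset.mem_insert] at he
    rcases he with rfl | he
    · rcases Sym2.mem_iff.1 hx with rfl | rfl
      · exact Finset.mem_insert_of_mem (hI.CS hv)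
      · exact Finset.mem_insert_self _ _
    · exact Finset.mem_insert_of_mem (hI.ES e he x hx)

omit [Fintype V] in
/-- The invariant is preserved when a retained edge from `C` to `w` is revealed and `w` joins `C`. -/
theorem Inv.grow {A B : Finset (Sym2 V)} {C S : Finset V} (hI : Inv A B C S) {v w : V}
    (hv : v ∈ C) (hvw : w ≠ v) (he : s(v, w) ∉ A ∪ B) :
    Inv (insert s(v, w) A) B (insert w C) (insert w S) := by
  have h := hI.retain hv he
  refine ⟨h.disj, Finset.insert_subset_insert _ hI.CS, h.ES, ?_⟩
  have hadj : (SimpleGraph.fromEdgeSet ((insert s(v, w) A : Finset (Sym2 V)) :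
      Set (Sym2 V))).Reachable v w := by
    apply SimpleGraph.Adj.reachable
    rw [SimpleGraph.fromEdgeSet_adj]
    exact ⟨by simp, hvw.symm⟩
  have key : ∀ x ∈ insert w C, (SimpleGraph.fromEdgeSet ((insert s(v, w) A : Finset (Sym2 V)) :
      Set (Sym2 V))).Reachable v x := by
    intro x hx
    rcases Finset.mem_insert.1 hx with rfl | hx
    · exact hadj
    · exact h.conn v hv x hx
  exact fun x hx y hy => (key x hx).symm.trans (key y hy)

/-- The number of `d`-regular graphs times the probability that the edges of `A` are present and
retained and those of `B` present and deleted. -/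
def mass (d : ℕ) (p : ℝ) (A B : Finset (Sym2 V)) : ℝ :=
  p ^ A.card * (1 - p) ^ B.card * extCount d (A ∪ B)

/-- One step of the exploration. If the failure weight of every possible next state is at most its mass
times `g(Y')`, then that of the current state is at most its mass times `m + |S| q r`. Here `m`
bounds the mean of `g` over the moves `Y + d - 2` and `Y - 1` made at a fresh vertex, and `r` bounds
the excess of `g` over `m` after a move to a touched vertex, each of which is hit with
conditional probability at most `q`. -/
theorem one_step {d : ℕ} {p : ℝ} (h0 : 0 ≤ p) (h1 : p ≤ 1)
    {F : Finset (Sym2 V) → Prop} {A B : Finset (Sym2 V)} {C S : Finset V} (hI : Inv A B C S)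
    (hY : 0 < act d (A ∪ B) C) {q : ℝ} (hq0 : 0 ≤ q)
    (hq : ∀ v ∈ S, ∀ w, w ≠ v → s(v, w) ∉ A ∪ B →
      (extCount d (insert s(v, w) (A ∪ B)) : ℝ) ≤ q * extCount d (A ∪ B))
    {g : ℝ → ℝ} {m r : ℝ} (hr : 0 ≤ r)
    (hm : p * g (act d (A ∪ B) C + d - 2) + (1 - p) * g (act d (A ∪ B) C - 1) ≤ m)
    (hg1 : g (act d (A ∪ B) C - 1) ≤ m + r) (hg2 : g (act d (A ∪ B) C - 2) ≤ m + r)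
    (hnext : ∀ A' B' C' S', Inv A' B' C' S' → S'.card ≤ S.card + 1 →
      used (A ∪ B) C + 1 ≤ used (A' ∪ B') C' →
      (act d (A' ∪ B') C' = act d (A ∪ B) C + d - 2 ∨ act d (A' ∪ B') C' = act d (A ∪ B) C - 1 ∨
        act d (A' ∪ B') C' = act d (A ∪ B) C - 2) →
      wt d p F A' B' ≤ mass d p A' B' * g (act d (A' ∪ B') C')) :
    wt d p F A B ≤ mass d p A B * (m + S.card * q * r) := by
  -- the explored vertex: some vertex of `C` has a free half-edge since `Y > 0`
  obtain ⟨v, hvC, hv⟩ : ∃ v ∈ C, (0 : ℝ) < (d : ℝ) - deg (A ∪ B) v := by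
    by_contra hcon
    push Not at hcon
    exact absurd hY (not_lt.2 (Finset.sum_nonpos hcon))
  have hvS := hI.CS hvC
  have hp1 : 0 ≤ 1 - p := by linarith
  have hv1 : (1 : ℝ) ≤ (d : ℝ) - deg (A ∪ B) v := by
    have : deg (A ∪ B) v < d := by
      have : (deg (A ∪ B) v : ℝ) < d := by linarith
      exact_mod_cast this
    have : ((deg (A ∪ B) v + 1 : ℕ) : ℝ) ≤ d := by exact_mod_cast this
    push_cast at this
    linarith
  set Y := act d (A ∪ B) C with hYdef
  set π : ℝ := p ^ A.card * (1 - p) ^ B.card with hπ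
  have hπ0 : 0 ≤ π := by positivity
  set J := Finset.univ.filter (fun w : V => w ≠ v ∧ s(v, w) ∉ A ∪ B) with hJ
  have hterm : ∀ w ∈ J, wt d p F (insert s(v, w) A) B + wt d p F A (insert s(v, w) B)
      ≤ π * (extCount d (insert s(v, w) (A ∪ B)) * m
        + (if w ∈ S then (extCount d (insert s(v, w) (A ∪ B)) : ℝ) * r else 0)) := by
    intro w hw
    simp only [hJ, Finset.mem_filter, Finset.mem_univ, true_and] at hw
    obtain ⟨hwv, he⟩ := hw
    have he' := he
    rw [Finset.mem_union, not_or] at he'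
    have mo : mass d p (insert s(v, w) A) B = π * p * extCount d (insert s(v, w) (A ∪ B)) := by
      rw [mass, Finset.card_insert_of_notMem he'.1, Finset.insert_union, pow_succ]
      ring
    have mc : mass d p A (insert s(v, w) B)
        = π * (1 - p) * extCount d (insert s(v, w) (A ∪ B)) := by
      rw [mass, Finset.card_insert_of_notMem he'.2, Finset.union_insert, pow_succ]
      ring
    have hu := used_insert hvC hwv he
    have hcard : (insert w S).card ≤ S.card + 1 := Finset.card_insert_le _ _
    have hN : (0 : ℝ) ≤ extCount d (insert s(v, w) (A ∪ B)) := Nat.cast_nonneg _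
    have hac : act d (insert s(v, w) (A ∪ B)) C = Y - 1 - (if w ∈ C then 1 else 0) := by
      rw [act_eq, hu, hYdef, act_eq]; push_cast; ring
    by_cases hwS : w ∈ S
    · -- a touched `w` is not added to `C`, even if the edge is retained
      have hY' : act d (insert s(v, w) (A ∪ B)) C = Y - 1 ∨
          act d (insert s(v, w) (A ∪ B)) C = Y - 2 := by
        rw [hac]
        split_ifs
        · right; ring
        · left; ring
      have hgg : g (act d (insert s(v, w) (A ∪ B)) C) ≤ m + r := by
        rcases hY' with h | h <;> rw [h] <;> assumption
      have ho := hnext _ _ C _ (hI.retain hvC he) hcard (by rw [Finset.insert_union]; omega)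
        (by rw [Finset.insert_union]; exact Or.inr hY')
      have hc := hnext _ _ C _ (hI.delete hvC he) hcard (by rw [Finset.union_insert]; omega)
        (by rw [Finset.union_insert]; exact Or.inr hY')
      rw [mo, Finset.insert_union] at ho
      rw [mc, Finset.union_insert] at hc
      rw [if_pos hwS]
      have := mul_le_mul_of_nonneg_left hgg (mul_nonneg hπ0 hN)
      nlinarith
    · have hwC : w ∉ C := fun h => hwS (hI.CS h)
      rw [if_neg hwC, sub_zero] at hac
      have hdw : deg (insert s(v, w) (A ∪ B)) w = 1 := by
        rw [deg_insert hwv he, deg_eq_zero hI hwS]; simp [hwv]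
      have hao : act d (insert s(v, w) (A ∪ B)) (insert w C) = Y + d - 2 := by
        unfold act at hac ⊢
        rw [Finset.sum_insert hwC, hac, hdw]
        push_cast; ring
      have huo : used (insert s(v, w) (A ∪ B)) (insert w C) = used (A ∪ B) C + 2 := by
        rw [if_neg hwC] at hu
        unfold used at hu ⊢
        rw [Finset.sum_insert hwC, hu, hdw]
        ring
      have ho := hnext _ _ (insert w C) _ (hI.grow hvC hwv he) hcard
        (by rw [Finset.insert_union]; omega) (by rw [Finset.insert_union]; exact Or.inl hao)
      have hc := hnext _ _ C _ (hI.delete hvC he) hcard (by rw [Finset.union_insert]; omega)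
        (by rw [Finset.union_insert]; exact Or.inr (Or.inl hac))
      rw [mo, Finset.insert_union, hao] at ho
      rw [mc, Finset.union_insert, hac] at hc
      rw [if_neg hwS, add_zero]
      have := mul_le_mul_of_nonneg_left hm (mul_nonneg hπ0 hN)
      nlinarith
  have hsum := Finset.sum_le_sum hterm
  rw [wt_rec, ← Finset.mul_sum, Finset.sum_add_distrib, ← Finset.sum_mul, extCount_rec] at hsum
  have hold : ∑ w ∈ J, (if w ∈ S then (extCount d (insert s(v, w) (A ∪ B)) : ℝ) * r else 0)
      ≤ S.card * (q * extCount d (A ∪ B) * r) := by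
    rw [← Finset.sum_filter, ← nsmul_eq_mul, ← Finset.sum_const]
    have hN : (0 : ℝ) ≤ q * extCount d (A ∪ B) * r := by positivity
    calc _ ≤ ∑ w ∈ J.filter (· ∈ S), q * extCount d (A ∪ B) * r := by
          refine Finset.sum_le_sum fun w hw => ?_
          simp only [hJ, Finset.mem_filter, Finset.mem_univ, true_and] at hw
          exact mul_le_mul_of_nonneg_right (hq v hvS w hw.1.1 hw.1.2) hr
      _ ≤ _ := by
          refine Finset.sum_le_sum_of_subset_of_nonneg ?_ fun _ _ _ => hN
          intro w hw
          exact (Finset.mem_filter.1 hw).2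
  have hfin : ((d : ℝ) - deg (A ∪ B) v) * wt d p F A B
      ≤ ((d : ℝ) - deg (A ∪ B) v) * (mass d p A B * (m + S.card * q * r)) := by
    refine hsum.trans ?_
    have e : mass d p A B = π * extCount d (A ∪ B) := rfl
    rw [e]
    have hN : (0 : ℝ) ≤ S.card * (q * extCount d (A ∪ B) * r) := by positivity
    have h2 : (S.card * (q * extCount d (A ∪ B) * r) : ℝ)
        ≤ ((d : ℝ) - deg (A ∪ B) v) * (S.card * (q * extCount d (A ∪ B) * r)) :=
      le_mul_of_one_le_left hN hv1
    have h3 := mul_le_mul_of_nonneg_left (hold.trans h2) hπ0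
    linarith
  exact le_of_mul_le_mul_left hfin hv

/-! ### The failure event -/

/-- A nonempty set of mutually reachable vertices is at most as large as the largest component. -/
theorem card_le_compSize (H : SimpleGraph V) {C : Finset V} (hne : C.Nonempty)
    (hC : ∀ x ∈ C, ∀ y ∈ C, H.Reachable x y) : C.card ≤ compSize H 1 := by
  obtain ⟨v, hv⟩ := hne
  set a := (Finset.univ.filter fun u => H.connectedComponentMk u = H.connectedComponentMk v).card
    with ha
  have h1 : C.card ≤ a := by
    refine Finset.card_le_card fun x hx => ?_
    simp only [Finset.mem_filter, Finset.mem_univ, true_and]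
    exact SimpleGraph.ConnectedComponent.sound (hC x hx v hv)
  have h2 : a ∈ compSizes H := by
    unfold compSizes
    refine Multiset.mem_map.2 ⟨H.connectedComponentMk v, ?_, rfl⟩
    exact Finset.mem_image_of_mem _ (Finset.mem_univ v)
  refine h1.trans ?_
  unfold compSize nthLargest
  have h3 : a ∈ ((compSizes H).sort (· ≤ ·)).reverse := by simpa using h2
  have h4 : ((compSizes H).sort (· ≤ ·)).reverse.Pairwise (· ≥ ·) := by
    rw [List.pairwise_reverse]
    exact (Multiset.pairwise_sort _ _)
  generalize ((compSizes H).sort (· ≤ ·)).reverse = l at h3 h4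
  cases l with
  | nil => simp at h3
  | cons b t =>
    simp only [Nat.sub_self, List.getD_cons_zero]
    rcases List.mem_cons.1 h3 with h | h
    · exact h.le
    · exact (List.pairwise_cons.1 h4).1 _ h

/-- The percolated graph with edge set `T` has no component with at least `k` vertices. -/
def Fail (k : ℕ) (T : Finset (Sym2 V)) : Prop :=
  compSize (SimpleGraph.fromEdgeSet (T : Set (Sym2 V))) 1 < k

theorem wt_eq_zero {d k : ℕ} {p : ℝ} {A B : Finset (Sym2 V)} {C S : Finset V}
    (hI : Inv A B C S) (hk : k ≤ C.card) : wt d p (Fail k) A B = 0 := by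
  unfold wt
  refine Finset.sum_eq_zero fun G _ => Finset.sum_eq_zero fun T _ => if_neg ?_
  rintro ⟨-, -, hA, -, hF⟩
  unfold Fail at hF
  have hne : C.Nonempty := by rw [← Finset.card_pos]; omega
  have := card_le_compSize (SimpleGraph.fromEdgeSet (T : Set (Sym2 V))) hne
    fun x hx y hy => reach_mono hA (hI.conn x hx y hy)
  omega

theorem mass_nonneg {d : ℕ} {p : ℝ} (h0 : 0 ≤ p) (h1 : p ≤ 1) (A B : Finset (Sym2 V)) :
    0 ≤ mass d p A B := by
  have : 0 ≤ 1 - p := by linarith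
  unfold mass; positivity


/-! ### Elementary inequalities for the potentials -/

theorem arith_survive_sum {x μ ν η D s : ℝ} (hη1 : η ≤ 1) (hμ : μ = |ν| + 2 * η)
    (hD : 0 ≤ D) (hs : 0 ≤ s) :
    x ^ 2 + 2 * |x| * |ν| + D + (D + 5) * s + η * (4 * |x| + 4)
      ≤ (1 + μ ^ 2) * (x ^ 2 + (D + 5) * (s + 1)) := by
  have a1 : 2 * |x| * μ ≤ x ^ 2 * μ ^ 2 + 1 := by
    have := sq_nonneg (|x| * μ - 1)
    have h4 : (|x| * μ) ^ 2 = x ^ 2 * μ ^ 2 := by rw [mul_pow, sq_abs]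
    linarith
  have a2 : 0 ≤ μ ^ 2 * ((D + 5) * (s + 1)) := by positivity
  have a3 : 2 * |x| * μ = 2 * |x| * |ν| + 4 * (η * |x|) := by rw [hμ]; ring
  linarith

theorem arith_survive_fresh {x ν p d : ℝ} (hd : 1 ≤ d) (h0 : 0 ≤ p) (h1 : p ≤ 1) :
    x ^ 2 - 2 * x * (1 + ν - 1) + (p * ((d - 2) ^ 2 - 1) + 1) ≤ x ^ 2 + 2 * |x| * |ν| + d ^ 2 := by
  have a1 : -(x * ν) ≤ |x| * |ν| := by
    rw [← abs_mul]; linarith [neg_abs_le (x * ν)]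
  have a2 : p * ((d - 2) ^ 2 - 1) + 1 ≤ d ^ 2 := by
    have b1 : p * (d - 2) ^ 2 ≤ 1 * (d - 2) ^ 2 := mul_le_mul_of_nonneg_right h1 (sq_nonneg _)
    have b2 : (d - 2) ^ 2 = d ^ 2 - 4 * d + 4 := by ring
    by_cases hp : d ≤ 3
    · have b3 : (d - 2) ^ 2 ≤ 1 := by nlinarith
      have b4 : p * (d - 2) ^ 2 ≤ p * 1 := mul_le_mul_of_nonneg_left b3 h0
      nlinarith
    · push Not at hp
      nlinarith
  linarith

theorem arith_survive_one {x ν D s : ℝ} (hD : 0 ≤ D) :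
    (x + 1) ^ 2 + s ≤ x ^ 2 + 2 * |x| * |ν| + D + s + (4 * |x| + 4) := by
  have := le_abs_self x
  have := abs_nonneg x
  have : 0 ≤ 2 * |x| * |ν| := by positivity
  linarith [add_sq x 1]

theorem arith_survive_two {x ν D s : ℝ} (hD : 0 ≤ D) :
    (x + 2) ^ 2 + s ≤ x ^ 2 + 2 * |x| * |ν| + D + s + (4 * |x| + 4) := by
  have := le_abs_self x
  have : 0 ≤ 2 * |x| * |ν| := by positivity
  linarith [add_sq x 2]

theorem arith_climb_sum {Y H R ν η θ : ℝ} (hYH : Y ≤ H) (hη0 : 0 ≤ η)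
    (hR : 0 < R) (hθ : θ = 1 / (4 * R ^ 2))
    (hsmall : η + 2 * H * |ν| + 4 * η * H ≤ 1 / 2) :
    (2 * R ^ 2 - (Y ^ 2 + 1 - 2 * Y * |ν|)) + η * (1 + 4 * Y) ≤ (1 - θ) * (2 * R ^ 2 - Y ^ 2) := by
  have a1 : θ * (2 * R ^ 2) = 1 / 2 := by rw [hθ]; field_simp; norm_num
  have a0 : 0 ≤ θ := by rw [hθ]; positivity
  have a2 : 2 * Y * |ν| ≤ 2 * H * |ν| := by gcongr
  have a3 : 4 * η * Y ≤ 4 * η * H := by gcongr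
  have a4 : 0 ≤ θ * Y ^ 2 := by positivity
  linarith

theorem arith_climb_fresh {Y R ν p d : ℝ} (hY : 0 ≤ Y) (hd : 3 ≤ d) (h0 : 0 ≤ p) :
    2 * R ^ 2 - (Y ^ 2 + 2 * Y * (1 + ν - 1) + (p * ((d - 2) ^ 2 - 1) + 1))
      ≤ 2 * R ^ 2 - (Y ^ 2 + 1 - 2 * Y * |ν|) := by
  have a1 : Y * -ν ≤ Y * |ν| := mul_le_mul_of_nonneg_left (neg_le_abs ν) hY
  have a2 : 0 ≤ p * ((d - 2) ^ 2 - 1) := mul_nonneg h0 (by nlinarith)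
  linarith

theorem arith_climb_one {Y R ν : ℝ} (hY : 0 ≤ Y) :
    2 * R ^ 2 - (Y - 1) ^ 2 ≤ 2 * R ^ 2 - (Y ^ 2 + 1 - 2 * Y * |ν|) + (1 + 4 * Y) := by
  have : 0 ≤ 2 * Y * |ν| := by positivity
  linarith [sub_sq Y 1]

theorem arith_climb_two {Y R ν : ℝ} (hY : 0 ≤ Y) :
    2 * R ^ 2 - (Y - 2) ^ 2 ≤ 2 * R ^ 2 - (Y ^ 2 + 1 - 2 * Y * |ν|) + (1 + 4 * Y) := by
  have : 0 ≤ 2 * Y * |ν| := by positivity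
  linarith [sub_sq Y 2]

/-! ### Surviving from a large height -/

/-- While at most `L` vertices have been touched, the conditional probability that a given edge with
an end among the touched vertices is present is at most `q`. -/
def SwitchBound (V : Type*) [Fintype V] (d L : ℕ) (q : ℝ) : Prop :=
  ∀ (A B : Finset (Sym2 V)) (C S : Finset V), Inv A B C S → S.card ≤ L →
    ∀ v ∈ S, ∀ w, w ≠ v → s(v, w) ∉ A ∪ B →
      (extCount d (insert s(v, w) (A ∪ B)) : ℝ) ≤ q * extCount d (A ∪ B)

/-- Survival estimate with reference height `y`. If `s` further steps suffice to use `d k` half-edges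
at `C`, then the conditional failure probability is at most
`(1 + μ²)^s ((y - Y)² + (d² + 5) s) / y²`. At `Y ≤ 0` this bound is at least `1`, and at the end
`Y = d |C| - used > 0` forces `|C| ≥ k`. -/
theorem survive {d k L : ℕ} (hd : 1 ≤ d) {p q ν η μ : ℝ} (h0 : 0 ≤ p) (h1 : p ≤ 1)
    (hq0 : 0 ≤ q) (hq : SwitchBound V d L q) (hν : p * ((d : ℝ) - 1) = 1 + ν)
    (hη : L * q ≤ η) (hη1 : η ≤ 1) (hμ : μ = |ν| + 2 * η) {y : ℝ} (hy : 0 < y) (s : ℕ) :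
    ∀ (A B : Finset (Sym2 V)) (C S : Finset V), Inv A B C S → S.card + s ≤ L →
      d * k ≤ used (A ∪ B) C + s →
      wt d p (Fail k) A B ≤ mass d p A B *
        ((1 + μ ^ 2) ^ s / y ^ 2 * ((y - act d (A ∪ B) C) ^ 2 + (d ^ 2 + 5) * s)) := by
  have hη0 : 0 ≤ η := le_trans (by positivity) hη
  have hd1 : (1 : ℝ) ≤ d := by exact_mod_cast hd
  induction s with
  | zero =>
    intro A B C S hI _ hu
    have hM := mass_nonneg (d := d) h0 h1 A B
    rcases lt_or_ge 0 (act d (A ∪ B) C) with hY | hY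
    · rw [wt_eq_zero hI]
      · positivity
      · rw [act_eq] at hY
        have hY' : (used (A ∪ B) C : ℝ) < ((d * C.card : ℕ) : ℝ) := by push_cast; linarith
        have hY'' : used (A ∪ B) C < d * C.card := by exact_mod_cast hY'
        have : d * k < d * C.card := by omega
        exact (Nat.lt_of_mul_lt_mul_left this).le
    · refine (wt_le h0 h1 _ hI.disj).trans (le_mul_of_one_le_right hM ?_)
      rw [pow_zero, div_mul_eq_mul_div, one_mul, le_div_iff₀ (by positivity)]
      push_cast
      nlinarith
  | succ s ih =>
    intro A B C S hI hS hu
    have hM := mass_nonneg (d := d) h0 h1 A B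
    set Y := act d (A ∪ B) C with hYd
    have hpow : (1 : ℝ) ≤ (1 + μ ^ 2) ^ s := one_le_pow₀ (by nlinarith [sq_nonneg μ])
    rcases lt_or_ge 0 Y with hY | hY
    · set c := (1 + μ ^ 2) ^ s / y ^ 2 with hc
      have hc0 : 0 ≤ c := by positivity
      set x := y - Y with hx
      have hst := one_step (F := Fail k) h0 h1 hI hY hq0 (hq A B C S hI (by omega))
        (g := fun z => c * ((y - z) ^ 2 + (d ^ 2 + 5) * s))
        (m := c * (x ^ 2 + 2 * |x| * |ν| + d ^ 2 + (d ^ 2 + 5) * s))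
        (r := c * (4 * |x| + 4)) (by positivity) ?_ ?_ ?_ ?_
      · refine hst.trans (mul_le_mul_of_nonneg_left ?_ hM)
        have hSq : (S.card : ℝ) * q ≤ η := by
          refine le_trans (mul_le_mul_of_nonneg_right ?_ hq0) hη
          exact_mod_cast (by omega : S.card ≤ L)
        have h2 : (S.card : ℝ) * q * (c * (4 * |x| + 4)) ≤ η * (c * (4 * |x| + 4)) :=
          mul_le_mul_of_nonneg_right hSq (by positivity)
        refine (add_le_add_right h2 _).trans ?_
        have e : (1 + μ ^ 2) ^ (s + 1) / y ^ 2 = c * (1 + μ ^ 2) := by rw [hc, pow_succ]; ring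
        rw [e]
        have h3 := arith_survive_sum (x := x) hη1 hμ (sq_nonneg (d : ℝ)) (Nat.cast_nonneg s)
        have h4 := mul_le_mul_of_nonneg_left h3 hc0
        push_cast
        linarith
      · have e : p * (c * ((y - (Y + d - 2)) ^ 2 + (d ^ 2 + 5) * s))
            + (1 - p) * (c * ((y - (Y - 1)) ^ 2 + (d ^ 2 + 5) * s))
            = c * (x ^ 2 - 2 * x * (p * ((d : ℝ) - 1) - 1) + (p * (((d : ℝ) - 2) ^ 2 - 1) + 1)
              + (d ^ 2 + 5) * s) := by
          rw [hx]; ring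
        rw [e, hν]
        refine mul_le_mul_of_nonneg_left ?_ hc0
        exact add_le_add_left (arith_survive_fresh hd1 h0 h1) _
      · rw [← mul_add]
        refine mul_le_mul_of_nonneg_left ?_ hc0
        have : y - (Y - 1) = x + 1 := by rw [hx]; ring
        rw [this]
        exact arith_survive_one (by positivity)
      · rw [← mul_add]
        refine mul_le_mul_of_nonneg_left ?_ hc0
        have : y - (Y - 2) = x + 2 := by rw [hx]; ring
        rw [this]
        exact arith_survive_two (by positivity)
      · intro A' B' C' S' hI' hS' hu' _
        exact ih A' B' C' S' hI' (by omega) (by omega)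
    · refine (wt_le h0 h1 _ hI.disj).trans (le_mul_of_one_le_right hM ?_)
      have hpow : (1 : ℝ) ≤ (1 + μ ^ 2) ^ (s + 1) := one_le_pow₀ (by nlinarith [sq_nonneg μ])
      have h3 : 1 ≤ ((y - Y) ^ 2 + (d ^ 2 + 5) * ((s + 1 : ℕ) : ℝ)) / y ^ 2 := by
        rw [le_div_iff₀ (by positivity), one_mul]
        have : (0 : ℝ) ≤ (d ^ 2 + 5) * ((s + 1 : ℕ) : ℝ) := by positivity
        have h4 : y ^ 2 ≤ (y - Y) ^ 2 := pow_le_pow_left₀ hy.le (by linarith) 2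
        linarith
      rw [div_mul_eq_mul_div, mul_div_assoc]
      exact one_le_mul_of_one_le_of_one_le hpow h3

/-! ### Climbing to a large height -/

/-- Climbing estimate with `s` steps left. The conditional failure probability is at most `ε`, the
error of `survive` from height `H`, plus `(1 - θ)^s (2 - Y² / R²)`. If `Y ≤ 0`, the exploration
restarts at an untouched vertex, where the height is `d` and the bound is not larger; this is why
two new vertices are budgeted for each step in `S.card + 2 * s + K ≤ L`. -/
theorem climb {d k L K : ℕ} (hd : 3 ≤ d) {p q ν η μ H θ R ε : ℝ} (h0 : 0 ≤ p) (h1 : p ≤ 1)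
    (hq0 : 0 ≤ q) (hq : SwitchBound V d L q) (hν : p * ((d : ℝ) - 1) = 1 + ν)
    (hη : L * q ≤ η) (hη1 : η ≤ 1) (hμ : μ = |ν| + 2 * η) (hL : L < Fintype.card V)
    (hK : d * k ≤ K) (hdH : d < H) (hR : R = H + d) (hθ : θ = 1 / (4 * R ^ 2))
    (hε : ε = (1 + μ ^ 2) ^ K / H ^ 2 * ((d ^ 2 + 5) * K))
    (hsmall : η + 2 * H * |ν| + 4 * η * H ≤ 1 / 2) (s : ℕ) :
    ∀ (A B : Finset (Sym2 V)) (C S : Finset V), Inv A B C S → S.card + 2 * s + K ≤ L →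
      -2 ≤ act d (A ∪ B) C → act d (A ∪ B) C ≤ R →
      wt d p (Fail k) A B ≤ mass d p A B *
        (ε + (1 - θ) ^ s * (2 - act d (A ∪ B) C ^ 2 / R ^ 2)) := by
  have hη0 : 0 ≤ η := le_trans (by positivity) hη
  have hd3 : (3 : ℝ) ≤ d := by exact_mod_cast hd
  have hR0 : 0 < R := by linarith
  have hH0 : 0 < H := by linarith
  have hε0 : 0 ≤ ε := by rw [hε]; positivity
  have hθ1 : 0 ≤ 1 - θ := by
    rw [hθ, sub_nonneg, div_le_one (by positivity)]
    nlinarith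
  have hfrac : ∀ z : ℝ, -2 ≤ z → z ≤ R → z ^ 2 / R ^ 2 ≤ 1 := by
    intro z hz1 hz2
    rw [div_le_one (by positivity)]
    nlinarith
  induction s with
  | zero =>
    intro A B C S hI _ hY1 hY2
    have hM := mass_nonneg (d := d) h0 h1 A B
    refine (wt_le h0 h1 _ hI.disj).trans (le_mul_of_one_le_right hM ?_)
    have := hfrac _ hY1 hY2
    rw [pow_zero]
    linarith
  | succ s ih =>
    -- positive heights; one vertex of the budget is saved for the restart
    have main : ∀ (A B : Finset (Sym2 V)) (C S : Finset V), Inv A B C S →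
        S.card + 2 * s + 1 + K ≤ L → 0 < act d (A ∪ B) C → act d (A ∪ B) C ≤ R →
        wt d p (Fail k) A B ≤ mass d p A B *
          (ε + (1 - θ) ^ (s + 1) * (2 - act d (A ∪ B) C ^ 2 / R ^ 2)) := by
      intro A B C S hI hS hY1 hY2
      have hM := mass_nonneg (d := d) h0 h1 A B
      set Y := act d (A ∪ B) C with hYd
      have hfY := hfrac Y (by linarith) hY2
      -- above `H` the estimate `survive` takes over with reference height `Y`
      rcases le_or_gt H Y with hHY | hHY
      · have hsv := survive (k := k) (by omega) h0 h1 hq0 hq hν hη hη1 hμ (y := Y) (by linarith) K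
          A B C S hI (by omega) (by omega)
        refine hsv.trans (mul_le_mul_of_nonneg_left ?_ hM)
        have h2 : 0 ≤ (1 - θ) ^ (s + 1) * (2 - Y ^ 2 / R ^ 2) :=
          mul_nonneg (pow_nonneg hθ1 _) (by linarith)
        have h3 : (1 + μ ^ 2) ^ K / Y ^ 2 * ((Y - Y) ^ 2 + (d ^ 2 + 5) * K) ≤ ε := by
          rw [hε, sub_self, zero_pow two_ne_zero, zero_add]
          gcongr
        linarith
      · set c := (1 - θ) ^ s / R ^ 2 with hc
        have hc0 : 0 ≤ c := div_nonneg (pow_nonneg hθ1 _) (by positivity)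
        have hcR : ∀ z : ℝ, (1 - θ) ^ s * (2 - z ^ 2 / R ^ 2) = c * (2 * R ^ 2 - z ^ 2) := by
          intro z
          rw [hc]; field_simp
        have hst := one_step (F := Fail k) h0 h1 hI hY1 hq0 (hq A B C S hI (by omega))
          (g := fun z => ε + (1 - θ) ^ s * (2 - z ^ 2 / R ^ 2))
          (m := ε + c * (2 * R ^ 2 - (Y ^ 2 + 1 - 2 * Y * |ν|)))
          (r := c * (1 + 4 * Y)) (by positivity) ?_ ?_ ?_ ?_
        · refine hst.trans (mul_le_mul_of_nonneg_left ?_ hM)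
          have hSq : (S.card : ℝ) * q ≤ η := by
            refine le_trans (mul_le_mul_of_nonneg_right ?_ hq0) hη
            exact_mod_cast (by omega : S.card ≤ L)
          have h2 : (S.card : ℝ) * q * (c * (1 + 4 * Y)) ≤ η * (c * (1 + 4 * Y)) :=
            mul_le_mul_of_nonneg_right hSq (by positivity)
          have e : (1 - θ) ^ (s + 1) * (2 - Y ^ 2 / R ^ 2)
              = c * ((1 - θ) * (2 * R ^ 2 - Y ^ 2)) := by
            rw [mul_left_comm, ← hcR]; ring
          rw [e]
          have h3 := mul_le_mul_of_nonneg_left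
            (arith_climb_sum hHY.le hη0 hR0 hθ hsmall) hc0
          linarith
        · rw [hcR, hcR]
          have e : p * (ε + c * (2 * R ^ 2 - (Y + d - 2) ^ 2))
              + (1 - p) * (ε + c * (2 * R ^ 2 - (Y - 1) ^ 2))
              = ε + c * (2 * R ^ 2 - (Y ^ 2 + 2 * Y * (p * ((d : ℝ) - 1) - 1)
                + (p * (((d : ℝ) - 2) ^ 2 - 1) + 1))) := by ring
          rw [e, hν]
          refine add_le_add_right (mul_le_mul_of_nonneg_left ?_ hc0) _
          exact arith_climb_fresh hY1.le hd3 h0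
        · rw [hcR, add_assoc, ← mul_add]
          refine add_le_add_right (mul_le_mul_of_nonneg_left ?_ hc0) _
          exact arith_climb_one hY1.le
        · rw [hcR, add_assoc, ← mul_add]
          refine add_le_add_right (mul_le_mul_of_nonneg_left ?_ hc0) _
          exact arith_climb_two hY1.le
        · intro A' B' C' S' hI' hS' _ hY'
          refine ih A' B' C' S' hI' (by omega) ?_ ?_ <;> rcases hY' with h | h | h <;> rw [h] <;>
            linarith
    intro A B C S hI hS hY1 hY2
    rcases lt_or_ge 0 (act d (A ∪ B) C) with hY | hY
    · exact main A B C S hI (by omega) hY hY2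
    · have hM := mass_nonneg (d := d) h0 h1 A B
      obtain ⟨v, hv⟩ : ∃ v, v ∉ S := by
        by_contra hcon
        push Not at hcon
        have : S = Finset.univ := Finset.eq_univ_iff_forall.2 hcon
        rw [this, Finset.card_univ] at hS
        omega
      have hI' : Inv A B {v} (insert v S) := by
        refine ⟨hI.disj, by simp, fun e he x hx => Finset.mem_insert_of_mem (hI.ES e he x hx), ?_⟩
        intro x hx y hy
        rw [Finset.mem_singleton] at hx hy
        rw [hx, hy]
      have hact : act d (A ∪ B) {v} = d := by
        simp [act, deg_eq_zero hI hv]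
      have hcard := Finset.card_insert_le v S
      refine (main A B {v} (insert v S) hI' (by omega) (by rw [hact]; linarith)
        (by rw [hact]; linarith)).trans (mul_le_mul_of_nonneg_left ?_ hM)
      rw [hact]
      have : act d (A ∪ B) C ^ 2 ≤ (d : ℝ) ^ 2 := by nlinarith
      have h3 := pow_nonneg hθ1 (s + 1)
      gcongr

theorem switchBound_of_large {d L : ℕ} (hd : 1 ≤ d)
    (hn : 2 * ((d : ℝ) + 1) * (L + d + 1) ≤ Fintype.card V) :
    SwitchBound V d L (2 * d ^ 2 / Fintype.card V) := by
  intro A B C S hI hS v hv w hwv he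
  have h := switching hd hI.ES hv hwv he
  set N' := extCount d (insert s(v, w) (A ∪ B))
  set N := extCount d (A ∪ B)
  set n := Fintype.card V
  have hn0 : (0 : ℝ) < n := lt_of_lt_of_le (by positivity) hn
  have h' : (n : ℝ) * N' ≤ (d + 1) * (S.card + d + 1) * N' + d ^ 2 * N := by exact_mod_cast h
  have h2 : ((d : ℝ) + 1) * (S.card + d + 1) * N' ≤ (d + 1) * (L + d + 1) * N' := by
    have : (S.card : ℝ) ≤ L := by exact_mod_cast hS
    gcongr
  have h3 : 2 * ((d : ℝ) + 1) * (L + d + 1) * N' ≤ n * N' := by gcongr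
  rw [div_mul_eq_mul_div, le_div_iff₀ hn0]
  linarith

/-- The estimate of `climb` for the exploration started from a single vertex. -/
theorem start_bound [Nonempty V] {d k L K : ℕ} (hd : 3 ≤ d) {p q ν η μ H θ R ε : ℝ}
    (h0 : 0 ≤ p) (h1 : p ≤ 1)
    (hq0 : 0 ≤ q) (hq : SwitchBound V d L q) (hν : p * ((d : ℝ) - 1) = 1 + ν)
    (hη : L * q ≤ η) (hη1 : η ≤ 1) (hμ : μ = |ν| + 2 * η) (hL : L < Fintype.card V)
    (hK : d * k ≤ K) (hdH : d < H) (hR : R = H + d) (hθ : θ = 1 / (4 * R ^ 2)) (hθ1 : θ ≤ 1)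
    (hε : ε = (1 + μ ^ 2) ^ K / H ^ 2 * ((d ^ 2 + 5) * K))
    (hsmall : η + 2 * H * |ν| + 4 * η * H ≤ 1 / 2) (s : ℕ) (hs : 1 + 2 * s + K ≤ L) :
    wt (V := V) d p (Fail k) ∅ ∅ ≤ extCount d (∅ : Finset (Sym2 V)) *
        (ε + (1 - θ) ^ s * 2) := by
  obtain ⟨r⟩ := ‹Nonempty V›
  have hI : Inv (∅ : Finset (Sym2 V)) ∅ {r} {r} :=
    ⟨by simp, by simp, by simp, fun x hx y hy => by
      rw [Finset.mem_singleton] at hx hy; rw [hx, hy]⟩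
  have hact : act d (∅ ∪ ∅ : Finset (Sym2 V)) {r} = d := by simp [act, deg]
  have hd0 : (0 : ℝ) ≤ d := by positivity
  have h := climb hd h0 h1 hq0 hq hν hη hη1 hμ hL hK hdH hR hθ hε hsmall s ∅ ∅ {r} {r} hI
    (by simpa using hs) (by rw [hact]; linarith) (by rw [hact]; linarith)
  have hmass : mass (V := V) d p ∅ ∅ = extCount d (∅ : Finset (Sym2 V)) := by simp [mass]
  rw [hmass] at h
  refine h.trans (mul_le_mul_of_nonneg_left ?_ (Nat.cast_nonneg _))
  have : 0 ≤ act d (∅ ∪ ∅ : Finset (Sym2 V)) {r} ^ 2 / R ^ 2 := by positivity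
  have h3 : 0 ≤ (1 - θ) ^ s := pow_nonneg (by linarith) s
  gcongr
  linarith

/-! ### The choice of parameters -/

/-- A constant so large that `h * bigM d lam ≤ 1` and `1 < h ^ 2 * ρ` imply all the smallness
conditions on `h` and `1 / ρ` in the estimates; each summand serves one of them. -/
def bigM (d : ℕ) (lam : ℝ) : ℝ :=
  1 + 2 * (d + 1) * (d + 5) + 80 * d ^ 2 + 4 * |lam| + 2 * d * (|lam| + 16 * d ^ 2) ^ 2

theorem one_le_bigM (d : ℕ) (lam : ℝ) : 1 ≤ bigM d lam := by
  have t1 : 0 ≤ |lam| := abs_nonneg _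
  have t2 : (0 : ℝ) ≤ 2 * d * (|lam| + 16 * d ^ 2) ^ 2 := by positivity
  have t3 : (0 : ℝ) ≤ 2 * (d + 1) * (d + 5) := by positivity
  have t4 : (0 : ℝ) ≤ 80 * d ^ 2 := by positivity
  unfold bigM
  linarith

set_option maxHeartbeats 1000000 in
theorem core_bound [Nonempty V] {d : ℕ} (hd : 3 ≤ d) {lam h ρ p : ℝ}
    (hρ3 : ρ ^ 3 = Fintype.card V) (hh : 0 < h) (hM : h * bigM d lam ≤ 1) (hρh : 1 < h ^ 2 * ρ)
    (h0 : 0 ≤ p) (h1 : p ≤ 1) (hp : p * ((d : ℝ) - 1) = 1 + lam / ρ) :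
    wt (V := V) d p (Fail ⌈h ^ 4 * ρ ^ 2⌉₊) ∅ ∅ ≤ extCount d (∅ : Finset (Sym2 V)) *
        ((6 * d * (d ^ 2 + 5) + 64) * h ^ 2) := by
  have hd3 : (3 : ℝ) ≤ d := by exact_mod_cast hd
  set M := bigM d lam with hMd
  unfold bigM at hMd
  have t1 : 0 ≤ |lam| := abs_nonneg _
  have t2 : (0 : ℝ) ≤ 2 * d * (|lam| + 16 * d ^ 2) ^ 2 := by positivity
  have t3 : (0 : ℝ) ≤ 2 * (d + 1) * (d + 5) := by positivity
  have t4 : (0 : ℝ) ≤ 80 * d ^ 2 := by positivity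
  have hM1 : 1 ≤ M := by linarith
  have hhX : ∀ X, X ≤ M → h * X ≤ 1 := fun X hX => (mul_le_mul_of_nonneg_left hX hh.le).trans hM
  have hh1 : h ≤ 1 := by simpa using hhX 1 hM1
  have hh2 : h ^ 2 ≤ h := by rw [sq]; exact mul_le_of_le_one_left hh.le hh1
  have hh4 : h ^ 4 ≤ h := by
    calc h ^ 4 = h ^ 2 * h ^ 2 := by ring
      _ ≤ h * 1 := by gcongr; linarith
      _ = h := mul_one h
  have hρ0 : 0 < ρ := by
    by_contra hcon
    have : h ^ 2 * ρ ≤ 0 := mul_nonpos_of_nonneg_of_nonpos (by positivity) (by linarith)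
    linarith
  -- every `X ≤ M` satisfies `X ≤ h ρ`, since `h X ≤ 1 < h (h ρ)`
  have hhρ : 1 < h * ρ := lt_of_lt_of_le hρh (mul_le_mul_of_nonneg_right hh2 hρ0.le)
  have hρM : ∀ X, X ≤ M → X ≤ h * ρ := by
    intro X hX
    have a : h * X ≤ h * (h * ρ) := by
      have := hhX X hX
      have e : h * (h * ρ) = h ^ 2 * ρ := by ring
      linarith
    exact le_of_mul_le_mul_left a hh
  have hhρρ : h * ρ ≤ ρ := mul_le_of_le_one_left hρ0.le hh1
  have hinv : 1 / ρ ≤ h ^ 2 := by rw [div_le_iff₀ hρ0]; exact hρh.le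
  have hn : (0 : ℝ) < Fintype.card V := by rw [← hρ3]; positivity
  set k := ⌈h ^ 4 * ρ ^ 2⌉₊ with hk
  have hkge : 1 ≤ h ^ 4 * ρ ^ 2 := by
    have : h ^ 4 * ρ ^ 2 = (h ^ 2 * ρ) ^ 2 := by ring
    rw [this]; exact one_le_pow₀ hρh.le
  have hkle : (k : ℝ) ≤ 2 * (h ^ 4 * ρ ^ 2) := by
    have := Nat.ceil_lt_add_one (a := h ^ 4 * ρ ^ 2) (by positivity)
    linarith
  have hρ80 : 80 * (d : ℝ) ^ 2 ≤ h * ρ := hρM _ (by linarith)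
  have hρ2 : 2 ≤ ρ := by
    have : (3 : ℝ) ^ 2 ≤ d ^ 2 := by gcongr
    linarith
  -- `T` climbing steps, `K` survival steps, `L` a bound for the number of touched vertices
  set T := ⌊ρ ^ 2⌋₊ with hT
  have hTle : (T : ℝ) ≤ ρ ^ 2 := Nat.floor_le (by positivity)
  have hTge : ρ ^ 2 / 2 ≤ T := by
    have := Nat.lt_floor_add_one (ρ ^ 2)
    have : 2 ^ 2 ≤ ρ ^ 2 := by gcongr
    linarith
  have hρ21 : 1 ≤ ρ ^ 2 := one_le_pow₀ (by linarith)
  set K := d * k with hK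
  have hKle : (K : ℝ) ≤ 2 * d * h ^ 4 * ρ ^ 2 := by
    rw [hK]; push_cast
    calc (d : ℝ) * k ≤ d * (2 * (h ^ 4 * ρ ^ 2)) := by gcongr
      _ = _ := by ring
  set L := 1 + 2 * T + K with hL
  have hdh : 2 * (d : ℝ) * h ^ 4 ≤ 1 := by
    have a : h * (2 * d) ≤ 1 := hhX _ (by
      have : (0 : ℝ) ≤ (d - 3) * d := mul_nonneg (by linarith) (by linarith)
      linarith)
    have b : 2 * (d : ℝ) * h ^ 4 ≤ 2 * d * h := by gcongr
    linarith
  have hLle : (L : ℝ) ≤ 4 * ρ ^ 2 := by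
    rw [hL]; push_cast
    have : 2 * d * h ^ 4 * ρ ^ 2 ≤ 1 * ρ ^ 2 := mul_le_mul_of_nonneg_right hdh (by positivity)
    linarith
  have hlarge : 2 * ((d : ℝ) + 1) * (L + d + 1) ≤ Fintype.card V := by
    rw [← hρ3]
    have a : 2 * ((d : ℝ) + 1) * (d + 5) ≤ ρ := (hρM _ (by linarith)).trans hhρρ
    have b : (L : ℝ) + d + 1 ≤ (d + 5) * ρ ^ 2 := by
      have : ((d : ℝ) + 1) * 1 ≤ (d + 1) * ρ ^ 2 := by gcongr
      linarith
    calc 2 * ((d : ℝ) + 1) * (L + d + 1) ≤ 2 * ((d : ℝ) + 1) * ((d + 5) * ρ ^ 2) := by gcongr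
      _ = 2 * ((d : ℝ) + 1) * (d + 5) * ρ ^ 2 := by ring
      _ ≤ ρ * ρ ^ 2 := by gcongr
      _ = ρ ^ 3 := by ring
  have hLn : L < Fintype.card V := by
    have : (L : ℝ) < Fintype.card V := by
      have a : (0 : ℝ) ≤ L := Nat.cast_nonneg L
      have b : 1 * ((L : ℝ) + d + 1) ≤ 2 * (d + 1) * (L + d + 1) := by gcongr; linarith
      linarith
    exact_mod_cast this
  set η := 8 * (d : ℝ) ^ 2 / ρ with hη
  have hηh : η ≤ 8 * d ^ 2 * h ^ 2 := by
    rw [hη, div_eq_mul_one_div]; gcongr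
  have hη0 : 0 ≤ η := by positivity
  have hLq : (L : ℝ) * (2 * d ^ 2 / Fintype.card V) ≤ η := by
    rw [← hρ3, hη]
    calc (L : ℝ) * (2 * d ^ 2 / ρ ^ 3) ≤ 4 * ρ ^ 2 * (2 * d ^ 2 / ρ ^ 3) := by gcongr
      _ = _ := by field_simp; norm_num
  have hd2h : h * (80 * d ^ 2 + 4 * |lam|) ≤ 1 := hhX _ (by linarith)
  have hηle : η ≤ 8 * d ^ 2 * h := hηh.trans (by gcongr)
  have hη1 : η ≤ 1 := by
    have a := mul_nonneg hh.le t1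
    have b : 0 ≤ h * d ^ 2 := by positivity
    linarith
  set H := h * ρ with hH
  have hdH : (d : ℝ) < H := by
    have : 3 * (d : ℝ) ≤ d * d := by gcongr
    linarith
  have hH0 : 0 < H := by positivity
  have hsmall : η + 2 * H * |lam / ρ| + 4 * η * H ≤ 1 / 2 := by
    have a : 2 * H * |lam / ρ| = 2 * h * |lam| := by
      rw [abs_div, abs_of_pos hρ0, hH]; field_simp
    have b : 4 * η * H = 32 * d ^ 2 * h := by
      rw [hη, hH]; field_simp; norm_num
    rw [a, b]
    linarith
  set μ := |lam / ρ| + 2 * η with hμ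
  have hμ' : μ = (|lam| + 16 * d ^ 2) / ρ := by
    rw [hμ, abs_div, abs_of_pos hρ0, hη]; ring
  set R := H + (d : ℝ) with hR
  set θ := 1 / (4 * R ^ 2) with hθ
  have hR1 : 1 ≤ R := by linarith
  have hθ1 : θ ≤ 1 := by
    rw [hθ, div_le_one (by positivity)]
    have := one_le_pow₀ hR1 (n := 2)
    linarith
  have hmain := start_bound (V := V) (k := k) (K := K) (L := L) hd h0 h1 (by positivity)
    (switchBound_of_large (by omega) hlarge) hp hLq hη1 hμ hLn le_rfl hdH hR hθ hθ1 rfl hsmall T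
    le_rfl
  refine hmain.trans (mul_le_mul_of_nonneg_left ?_ (Nat.cast_nonneg _))
  -- the survival error
  have hexp : (1 + μ ^ 2) ^ K ≤ 3 := by
    have a : (1 + μ ^ 2) ^ K ≤ Real.exp (K * μ ^ 2) := by
      rw [Real.exp_nat_mul]
      gcongr
      linarith [Real.add_one_le_exp (μ ^ 2)]
    have b : K * μ ^ 2 ≤ 1 := by
      calc K * μ ^ 2 ≤ 2 * d * h ^ 4 * ρ ^ 2 * μ ^ 2 := by gcongr
        _ = h ^ 4 * (2 * d * (|lam| + 16 * d ^ 2) ^ 2) := by rw [hμ']; field_simp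
        _ ≤ h * (2 * d * (|lam| + 16 * d ^ 2) ^ 2) := by gcongr
        _ ≤ 1 := hhX _ (by linarith)
    have c := Real.exp_le_exp.2 b
    have e := Real.exp_one_lt_three
    linarith
  have hε : (1 + μ ^ 2) ^ K / H ^ 2 * ((d ^ 2 + 5) * K) ≤ 6 * d * (d ^ 2 + 5) * h ^ 2 := by
    calc (1 + μ ^ 2) ^ K / H ^ 2 * ((d ^ 2 + 5) * K)
        ≤ 3 / H ^ 2 * ((d ^ 2 + 5) * (2 * d * h ^ 4 * ρ ^ 2)) := by gcongr
      _ = 6 * d * (d ^ 2 + 5) * h ^ 2 := by rw [hH]; field_simp; norm_num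
  -- the climbing error
  have hclimb : (1 - θ) ^ T ≤ 32 * h ^ 2 := by
    have a : (1 - θ) ^ T ≤ Real.exp (-(T * θ)) := by
      rw [← mul_neg, Real.exp_nat_mul]
      have := Real.add_one_le_exp (-θ)
      exact pow_le_pow_left₀ (by linarith) (by linarith) T
    have b : 1 / (32 * h ^ 2) ≤ T * θ := by
      have r : R ^ 2 ≤ (2 * H) ^ 2 := pow_le_pow_left₀ (by linarith) (by linarith) 2
      calc 1 / (32 * h ^ 2) = ρ ^ 2 / 2 * (1 / (4 * (2 * H) ^ 2)) := by
            rw [hH]; field_simp; norm_num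
        _ ≤ T * θ := by rw [hθ]; gcongr
    -- `exp (-x) ≤ 1 / x`
    have c : Real.exp (-(T * θ)) ≤ 32 * h ^ 2 := by
      rw [Real.exp_neg, inv_le_comm₀ (Real.exp_pos _) (by positivity), ← one_div]
      have := Real.add_one_le_exp (T * θ)
      linarith
    exact a.trans c
  linarith

/-! ### Passing to the measure on graphs -/

/-- The edge set of a simple graph as a finset. -/
def edges (H : SimpleGraph V) : Finset (Sym2 V) := Finset.univ.filter (· ∈ H.edgeSet)

theorem mem_edges {H : SimpleGraph V} {e : Sym2 V} : e ∈ edges H ↔ e ∈ H.edgeSet := by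
  simp [edges]

theorem coe_edges (H : SimpleGraph V) : (edges H : Set (Sym2 V)) = H.edgeSet := by
  ext e; simp [mem_edges]

theorem ncard_edgeSet (H : SimpleGraph V) : H.edgeSet.ncard = (edges H).card := by
  rw [← coe_edges, Set.ncard_coe_finset]

theorem fromEdgeSet_edges (H : SimpleGraph V) :
    SimpleGraph.fromEdgeSet (edges H : Set (Sym2 V)) = H := by
  rw [coe_edges, SimpleGraph.fromEdgeSet_edgeSet]

/-- The assumption on `T` is needed because `SimpleGraph.fromEdgeSet` discards diagonal pairs. -/
theorem edges_fromEdgeSet {T : Finset (Sym2 V)} (hT : ∀ e ∈ T, ¬ e.IsDiag) :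
    edges (SimpleGraph.fromEdgeSet (T : Set (Sym2 V))) = T := by
  ext e
  rw [mem_edges, SimpleGraph.edgeSet_fromEdgeSet]
  simp only [Set.mem_sdiff, Finset.mem_coe]
  exact ⟨fun h => h.1, fun h => ⟨h, hT e h⟩⟩

theorem edges_injective : Function.Injective (edges (V := V)) := fun H H' h => by
  rw [← fromEdgeSet_edges H, h, fromEdgeSet_edges]

theorem edges_subset {H G : SimpleGraph V} : edges H ⊆ edges G ↔ H ≤ G := by
  rw [← Finset.coe_subset, coe_edges, coe_edges, SimpleGraph.edgeSet_subset_edgeSet]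

theorem not_isDiag_of_mem_edges {H : SimpleGraph V} {e : Sym2 V} (he : e ∈ edges H) :
    ¬ e.IsDiag := SimpleGraph.not_isDiag_of_mem_edgeSet _ (mem_edges.1 he)

theorem deg_edges (G : SimpleGraph V) (x : V) : deg (edges G) x = (G.neighborSet x).ncard := by
  have h : G.neighborSet x = ((Finset.univ.filter fun y => G.Adj x y : Finset V) : Set V) := by
    ext y; simp
  rw [h, Set.ncard_coe_finset]
  symm
  unfold deg
  apply Finset.card_bij (fun y _ => s(x, y))
  · intro y hy
    simp only [Finset.mem_filter, Finset.mem_univ, true_and] at hy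
    simp [mem_edges, hy]
  · intro a _ b _ h
    exact Sym2.congr_right.1 h
  · intro e he
    simp only [Finset.mem_filter] at he
    obtain ⟨y, rfl⟩ := Sym2.mem_iff_exists.1 he.2
    exact ⟨y, by simpa [mem_edges] using he.1, rfl⟩

theorem edges_mem_regSets {G : SimpleGraph V} {d : ℕ} : edges G ∈ regSets V d ↔ IsRegular G d := by
  simp only [regSets, Finset.mem_filter, Finset.mem_univ, true_and, deg_edges, IsRegular]
  exact ⟨fun h => h.2, fun h => ⟨fun e he => not_isDiag_of_mem_edges he, h⟩⟩

theorem exists_edges_eq {E : Finset (Sym2 V)} {d : ℕ} (hE : E ∈ regSets V d) :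
    ∃ G : SimpleGraph V, IsRegular G d ∧ edges G = E := by
  have hE' : edges (SimpleGraph.fromEdgeSet (E : Set (Sym2 V))) = E :=
    edges_fromEdgeSet (Finset.mem_filter.1 hE).2.1
  exact ⟨_, edges_mem_regSets.1 (hE'.symm ▸ hE), hE'⟩

theorem mem_regularGraphs {n d : ℕ} {G : SimpleGraph (Fin n)} :
    G ∈ regularGraphs n d ↔ IsRegular G d := by
  simp only [regularGraphs, Finset.mem_filter, Finset.mem_univ, true_and]

/-- Taking edge sets is a bijection from `regularGraphs n d` to `regSets (Fin n) d`. -/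
theorem sum_regSets {M : Type*} [AddCommMonoid M] (n d : ℕ) (f : Finset (Sym2 (Fin n)) → M) :
    ∑ G ∈ regularGraphs n d, f (edges G) = ∑ G ∈ regSets (Fin n) d, f G := by
  refine Finset.sum_bij (fun G _ => edges G)
    (fun G hG => edges_mem_regSets.2 (mem_regularGraphs.1 hG)) (fun a _ b _ h => edges_injective h)
    (fun E hE => ?_) (fun _ _ => rfl)
  obtain ⟨G, hG, rfl⟩ := exists_edges_eq hE
  exact ⟨G, mem_regularGraphs.2 hG, rfl⟩

theorem percMeasure_apply {p : ℝ} (h0 : 0 ≤ p) (h1 : p ≤ 1) (k : ℕ) (G : SimpleGraph V) :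
    percMeasure G p {H | compSize H 1 < k} = ENNReal.ofReal (∑ T : Finset (Sym2 V),
      if Compat (Fail k) ∅ ∅ (edges G) T then p ^ T.card * (1 - p) ^ ((edges G).card - T.card)
        else 0) := by
  have hs : MeasurableSet {H : SimpleGraph V | compSize H 1 < k} := trivial
  rw [percMeasure, Measure.sum_apply _ hs, tsum_fintype, ENNReal.ofReal_sum_of_nonneg]
  · simp only [Measure.smul_apply, Measure.dirac_apply' _ hs, smul_eq_mul]
    have hinj : Set.InjOn (edges (V := V)) (Finset.univ : Finset (SimpleGraph V)) :=
      edges_injective.injOn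
    rw [← Finset.sum_subset (Finset.subset_univ (Finset.univ.image (edges (V := V)))),
      Finset.sum_image hinj]
    · refine Finset.sum_congr rfl fun H _ => ?_
      simp only [percWeight, Compat, Fail, fromEdgeSet_edges, edges_subset, ncard_edgeSet]
      by_cases h : H ≤ G <;> by_cases h' : compSize H 1 < k <;> simp [h, h']
    · intro T _ hT
      rw [if_neg, ENNReal.ofReal_zero]
      rintro ⟨-, hTG, -⟩
      exact hT (Finset.mem_image.2 ⟨_, Finset.mem_univ _,
        edges_fromEdgeSet fun e he => not_isDiag_of_mem_edges (hTG he)⟩)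
  · intro T _
    have := sub_nonneg.2 h1
    split_ifs <;> positivity

/-- `extCount d ∅` is the number of all `d`-regular graphs, so `wt / extCount` is the law of
`G(n, d, p)`. -/
theorem gndp_apply {n d : ℕ} {p : ℝ} (h0 : 0 ≤ p) (h1 : p ≤ 1) (k : ℕ) :
    gndp n d p {H | compSize H 1 < k} = (extCount d (∅ : Finset (Sym2 (Fin n))) : ℝ≥0∞)⁻¹ *
      ENNReal.ofReal (wt (V := Fin n) d p (Fail k) ∅ ∅) := by
  have hcard : (regularGraphs n d).card = extCount d (∅ : Finset (Sym2 (Fin n))) := by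
    have := sum_regSets n d (fun _ => 1)
    simpa [extCount] using this
  rw [gndp, Measure.smul_apply, smul_eq_mul, hcard, Measure.finsetSum_apply]
  congr 1
  rw [wt, ENNReal.ofReal_sum_of_nonneg]
  · rw [← sum_regSets]
    exact Finset.sum_congr rfl fun G _ => percMeasure_apply h0 h1 k G
  · intro G _
    refine Finset.sum_nonneg fun T _ => ?_
    have := sub_nonneg.2 h1
    split_ifs <;> positivity

theorem gndp_le {n d : ℕ} {p c : ℝ} (h0 : 0 ≤ p) (h1 : p ≤ 1) {k : ℕ}
    (h : wt (V := Fin n) d p (Fail k) ∅ ∅ ≤ extCount d (∅ : Finset (Sym2 (Fin n))) * c) :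
    gndp n d p {H | compSize H 1 < k} ≤ ENNReal.ofReal c := by
  rw [gndp_apply h0 h1]
  refine (mul_le_mul_right (ENNReal.ofReal_le_ofReal h) _).trans ?_
  rw [ENNReal.ofReal_mul (Nat.cast_nonneg _), ENNReal.ofReal_natCast, ← mul_assoc]
  exact mul_le_of_le_one_left zero_le (ENNReal.inv_mul_le_one _)


end

/-- Theorem 2, lower tail inside the scaling window: for `p = (1 + λ n^{-1/3})/(d-1)`,
there are `D(λ,d) < ∞` and `δ₀ > 0` with
`P(|C₁| < ⌈δ n^{2/3}⌉) ≤ D δ^{1/2}` for every `δ ∈ (0, δ₀)` and every admissible `n`. -/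
theorem critical_window_lower (d : ℕ) (hd : 3 ≤ d) (lam : ℝ) :
    ∃ D δ₀ : ℝ, 0 < D ∧ 0 < δ₀ ∧ ∀ δ : ℝ, 0 < δ → δ < δ₀ → ∀ n : ℕ, Admissible n d →
      ∀ p : ℝ, p = (1 + lam * (n : ℝ) ^ (-(1 : ℝ) / 3)) / ((d : ℝ) - 1) →
        0 ≤ p → p ≤ 1 →
        gndp n d p {H | compSize H 1 < ⌈δ * (n : ℝ) ^ ((2 : ℝ) / 3)⌉₊}
          ≤ ENNReal.ofReal (D * δ ^ ((1 : ℝ) / 2)) := by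
  have hM := one_le_bigM d lam
  have hM0 : 0 < bigM d lam := by linarith
  refine ⟨6 * d * (d ^ 2 + 5) + 64, (1 / bigM d lam) ^ 4, by positivity, by positivity, ?_⟩
  intro δ hδ hδ0 n hn p hp h0 h1
  have hn0 : (0 : ℝ) < n := by exact_mod_cast hn.1
  have hne : Nonempty (Fin n) := ⟨⟨0, hn.1⟩⟩
  set h := δ ^ ((1 : ℝ) / 4) with hh
  set ρ := (n : ℝ) ^ ((1 : ℝ) / 3) with hρ
  have hhpos : 0 < h := Real.rpow_pos_of_pos hδ _
  have hρpos : 0 < ρ := Real.rpow_pos_of_pos hn0 _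
  have hh4 : h ^ 4 = δ := by
    rw [hh, ← Real.rpow_natCast, ← Real.rpow_mul hδ.le]; norm_num
  have hh2 : δ ^ ((1 : ℝ) / 2) = h ^ 2 := by
    rw [hh, ← Real.rpow_natCast, ← Real.rpow_mul hδ.le]; norm_num
  have hρ3 : ρ ^ 3 = n := by
    rw [hρ, ← Real.rpow_natCast, ← Real.rpow_mul hn0.le]; norm_num
  have hρ2 : (n : ℝ) ^ ((2 : ℝ) / 3) = ρ ^ 2 := by
    rw [hρ, ← Real.rpow_natCast, ← Real.rpow_mul hn0.le]; norm_num
  have hρ1 : (n : ℝ) ^ (-(1 : ℝ) / 3) = 1 / ρ := by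
    rw [hρ, one_div, ← Real.rpow_neg hn0.le]; norm_num
  have hd1 : (d : ℝ) - 1 ≠ 0 := by
    have : (3 : ℝ) ≤ d := by exact_mod_cast hd
    linarith
  have hp' : p * ((d : ℝ) - 1) = 1 + lam / ρ := by
    rw [hp, div_mul_cancel₀ _ hd1, hρ1, mul_one_div]
  have hhM : h * bigM d lam ≤ 1 := by
    rw [← le_div_iff₀ hM0]
    rw [← hh4] at hδ0
    exact (lt_of_pow_lt_pow_left₀ 4 (by positivity) hδ0).le
  rw [hh2, hρ2, ← hh4]
  rcases le_or_gt (h ^ 2 * ρ) 1 with hle | hgt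
  · -- the threshold is at most `1`, and every graph on `n ≥ 1` vertices has a component that large
    have hk : ⌈h ^ 4 * ρ ^ 2⌉₊ ≤ 1 := by
      rw [Nat.ceil_le, show h ^ 4 * ρ ^ 2 = (h ^ 2 * ρ) ^ 2 by ring, Nat.cast_one]
      exact pow_le_one₀ (by positivity) hle
    have hempty : {H : SimpleGraph (Fin n) | compSize H 1 < ⌈h ^ 4 * ρ ^ 2⌉₊} = ∅ := by
      ext H
      have := card_le_compSize H (C := {⟨0, hn.1⟩}) (by simp) (by
        intro x hx y hy
        rw [Finset.mem_singleton] at hx hy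
        rw [hx, hy])
      simp only [Finset.card_singleton] at this
      simp only [Set.mem_ofPred_eq, Set.mem_empty_iff_false, iff_false, not_lt]
      omega
    rw [hempty, measure_empty]
    exact zero_le
  · exact gndp_le h0 h1 (core_bound hd (by rw [hρ3, Fintype.card_fin]) hhpos hhM hgt h0 h1 hp')

end Stmt8
end
end
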